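/- arXiv:math/0505186 — 3 statements merged into one kernel-verified Lean document; each statement's English description precedes it below -/
import Mathlib

section
/- Let ε > 0 and let d, n ≥ 2 be integers. Then for every non-singular hypersurface X ⊂ P^n of degree d defined over ℚ one has N_X(B) = O_{d,ε,n}(B^{n−1+ε}), the implied constant depending at most on d, ε and n. -/
noncomputable section

abbrev KK : Type := AlgebraicClosure ℚ

/-- A primitive integer vector: the gcd of its coordinates is 1. -/
def IsPrimitiveVec {n : ℕ} (x : Fin n → ℤ) : Prop := Finset.univ.gcd x = 1

/-- Height of an integer vector: the maximum modulus of its coordinates. -/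
def heightVec {n : ℕ} (x : Fin n → ℤ) : ℝ :=
  ((Finset.univ.sup fun i => (x i).natAbs : ℕ) : ℝ)

/-- An integer form is non-singular if its partial derivatives have no common
non-trivial zero over the algebraic closure of ℚ, so that the hypersurface it
defines is non-singular. -/
def NonsingularZ {n : ℕ} (F : MvPolynomial (Fin (n + 1)) ℤ) : Prop :=
  ∀ z : Fin (n + 1) → KK,
    (∀ i, MvPolynomial.aeval z (MvPolynomial.pderiv i F) = 0) → z = 0

/-!
The integral zeros of `F` in a box of side `B` are counted by descent over primes `p₁, …, pₖ` of
good reduction, each of size about `B ^ (1 / k)`. If `t` is a zero of `F` and another zero `x` is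
congruent modulo `p` to a multiple of `t`, then Taylor expansion and Euler's identity give
`∇F(t) ⬝ x ≡ 0 (mod p²)`, so the zeros of one projective residue class lie in a lattice of index
`p ^ (n + 1)`. Hence the box may grow by a factor `p` when the lattice is refined: if the small
lattice points span `𝔽ₚ ^ (n + 1)`, there are few of them in total in the tangent lattices, and if
they do not, the zeros reduce to points of a hyperplane section of the reduced hypersurface.

Uniformity in `F` needs enough small primes of good reduction. These are the primes not dividing
a nonzero value of one of finitely many polynomials in the coefficients of `F` (elimination theory
and noetherianity), and this value is polynomially bounded in `B` once `F` is replaced by a form of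
the same degree, through the same zeros, whose coefficients solve a small linear system.
-/

section BoxPoints

variable {ι : Type*}

/-- Coordinatewise reduction modulo `p` of integer vectors. -/
def reduction (p : ℕ) : (ι → ℤ) →+ (ι → ZMod p) := (Int.castAddHom (ZMod p)).compLeft ι

@[simp]
lemma reduction_apply (p : ℕ) (x : ι → ℤ) (i : ι) : reduction p x i = x i := rfl

lemma exists_eq_add_smul_of_reduction_eq {p : ℕ} {x y : ι → ℤ}
    (h : reduction p y = reduction p x) : ∃ z : ι → ℤ, y = x + p • z := by
  have hdvd (i : ι) : (p : ℤ) ∣ y i - x i :=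
    (ZMod.intCast_eq_intCast_iff_dvd_sub (x i) (y i) p).1 (congrFun h i).symm
  choose z hz using hdvd
  exact ⟨z, funext fun i => by simp [← hz i]⟩

lemma mem_of_nsmul_mem_of_coprime_index {A : Type*} [AddCommGroup A] {L : AddSubgroup A} {p : ℕ}
    (hp : p.Coprime L.index) {a : A} (ha : p • a ∈ L) : a ∈ L := by
  obtain ⟨u, v, huv⟩ := Nat.isCoprime_iff_coprime.2 hp
  rw [← one_zsmul a, ← huv, add_zsmul, mul_zsmul, mul_zsmul, natCast_zsmul, natCast_zsmul]
  exact L.add_mem (L.zsmul_mem ha u) (L.zsmul_mem (L.nsmul_index_mem a) v)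

lemma abs_sub_lt_of_ediv_eq {a b m : ℤ} (hm : 0 < m) (h : a / m = b / m) : |a - b| < m := by
  have ha := Int.emod_add_mul_ediv a m
  have hb := Int.emod_add_mul_ediv b m
  rw [h] at ha
  have := Int.emod_lt_of_pos a hm
  have := Int.emod_lt_of_pos b hm
  have := Int.emod_nonneg a hm.ne'
  have := Int.emod_nonneg b hm.ne'
  rw [abs_lt]
  constructor <;> linarith

variable [Fintype ι]

open Classical in
/-- The points of the subgroup `L ≤ ℤ^ι` all of whose coordinates are at most `R` in absolute
value. -/
def boxPoints (L : AddSubgroup (ι → ℤ)) (R : ℕ) : Finset (ι → ℤ) :=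
  {y ∈ Fintype.piFinset fun _ => Finset.Icc (-(R : ℤ)) R | y ∈ L}

lemma mem_boxPoints {L : AddSubgroup (ι → ℤ)} {R : ℕ} {y : ι → ℤ} :
    y ∈ boxPoints L R ↔ (∀ i, |y i| ≤ R) ∧ y ∈ L := by
  simp [boxPoints, abs_le]

lemma card_boxPoints_le (L : AddSubgroup (ι → ℤ)) (R : ℕ) :
    (boxPoints L R).card ≤ (2 * R + 1) ^ Fintype.card ι := by
  classical
  calc (boxPoints L R).card
      ≤ (Fintype.piFinset fun _ : ι => Finset.Icc (-(R : ℤ)) R).card := Finset.card_filter_le _ _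
    _ = (2 * R + 1) ^ Fintype.card ι := by
      simp [Fintype.card_piFinset, show (R + 1 + R : ℤ).toNat = 2 * R + 1 by lia]

lemma boxPoints_subset_boxPoints {L M : AddSubgroup (ι → ℤ)} (hLM : L ≤ M) {R S : ℕ}
    (hRS : R ≤ S) : boxPoints L R ⊆ boxPoints M S := fun y hy => by
  rw [mem_boxPoints] at hy ⊢
  exact ⟨fun i => (hy.1 i).trans (mod_cast hRS), hLM hy.2⟩

lemma card_boxPoints_mul_index_le_of_bounded_representatives {L : AddSubgroup (ι → ℤ)} {S : ℕ}
    (hS : ∀ z : ι → ℤ, ∃ w : ι → ℤ, (∀ i, |w i| ≤ S) ∧ z - w ∈ L) (R : ℕ) :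
    (boxPoints L R).card * L.index ≤ (2 * (R + S) + 1) ^ Fintype.card ι := by
  have hrep (q : (ι → ℤ) ⧸ L) : ∃ w : ι → ℤ, (∀ i, |w i| ≤ S) ∧ (w : (ι → ℤ) ⧸ L) = q := by
    obtain ⟨z, rfl⟩ := QuotientAddGroup.mk_surjective q
    obtain ⟨w, hw, hzw⟩ := hS z
    exact ⟨w, hw, (QuotientAddGroup.eq_iff_sub_mem.2 hzw).symm⟩
  choose rep hrep_le hrep_mk using hrep
  have hmk (y : boxPoints L R) (q : (ι → ℤ) ⧸ L) :
      ((y.1 + rep q : ι → ℤ) : (ι → ℤ) ⧸ L) = q := by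
    rw [QuotientAddGroup.mk_add, (QuotientAddGroup.eq_zero_iff y.1).2 (mem_boxPoints.1 y.2).2,
      zero_add, hrep_mk]
  let f : boxPoints L R × ((ι → ℤ) ⧸ L) → boxPoints (⊤ : AddSubgroup (ι → ℤ)) (R + S) :=
    fun yq => ⟨yq.1.1 + rep yq.2, mem_boxPoints.2 ⟨fun i =>
      (abs_add_le _ _).trans (mod_cast add_le_add ((mem_boxPoints.1 yq.1.2).1 i) (hrep_le _ i)),
      trivial⟩⟩
  have hf : f.Injective := fun ⟨y, q⟩ ⟨y', q'⟩ h => by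
    have hsum : y.1 + rep q = y'.1 + rep q' := congrArg Subtype.val h
    obtain rfl : q = q' := by rw [← hmk y q, ← hmk y' q', hsum]
    rw [Subtype.ext (add_right_cancel hsum)]
  calc (boxPoints L R).card * L.index
      = Nat.card (boxPoints L R × ((ι → ℤ) ⧸ L)) := by
        rw [Nat.card_prod, Nat.card_eq_fintype_card, Fintype.card_coe, AddSubgroup.index]
    _ ≤ Nat.card (boxPoints (⊤ : AddSubgroup (ι → ℤ)) (R + S)) := Nat.card_le_card_of_injective f hf
    _ = (boxPoints (⊤ : AddSubgroup (ι → ℤ)) (R + S)).card := by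
        rw [Nat.card_eq_fintype_card, Fintype.card_coe]
    _ ≤ (2 * (R + S) + 1) ^ Fintype.card ι := card_boxPoints_le _ _

lemma exists_bounded_sub_mem_of_det_ne_zero [DecidableEq ι] {L : AddSubgroup (ι → ℤ)} {R : ℕ}
    {v : Matrix ι ι ℤ} (hv : ∀ i, v i ∈ boxPoints L R) (hdet : v.det ≠ 0) (z : ι → ℤ) :
    ∃ w : ι → ℤ, (∀ j, |w j| ≤ (Fintype.card ι * R : ℕ)) ∧ z - w ∈ L := by
  let V : Matrix ι ι ℚ := (Int.castRingHom ℚ).mapMatrix v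
  have hV : IsUnit V.det := by
    rw [isUnit_iff_ne_zero, ← RingHom.map_det]
    simpa using hdet
  let t : ι → ℚ := Matrix.vecMul (fun i => (z i : ℚ)) V⁻¹
  have hz (j : ι) : (z j : ℚ) = ∑ i, t i * v i j := by
    have ht : Matrix.vecMul t V = fun i => (z i : ℚ) := by
      rw [Matrix.vecMul_vecMul, Matrix.nonsing_inv_mul _ hV, Matrix.vecMul_one]
    rw [← congrFun ht j]
    simp [Matrix.vecMul, dotProduct, V]
  refine ⟨z - ∑ i, ⌊t i⌋ • v i, fun j => ?_, ?_⟩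
  · have hfract : (((z - ∑ i, ⌊t i⌋ • v i) j : ℤ) : ℚ) = ∑ i, Int.fract (t i) * v i j := by
      simp [hz, ← Finset.sum_sub_distrib, ← sub_mul]
    have hterm (i : ι) : |Int.fract (t i) * v i j| ≤ R := by
      have hvR : |(v i j : ℚ)| ≤ R := mod_cast (mem_boxPoints.1 (hv i)).1 j
      rw [abs_mul, Int.abs_fract]
      exact (mul_le_of_le_one_left (abs_nonneg _) (Int.fract_lt_one _).le).trans hvR
    have hsum : |∑ i, Int.fract (t i) * v i j| ≤ Fintype.card ι * R :=
      (Finset.abs_sum_le_sum_abs _ _).trans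
        ((Finset.sum_le_sum fun i _ => hterm i).trans (by simp))
    rw [← hfract] at hsum
    exact_mod_cast hsum
  · rw [sub_sub_cancel]
    exact L.sum_mem fun i _ => L.zsmul_mem (mem_boxPoints.1 (hv i)).2 _

lemma exists_det_ne_zero_of_span_reduction_eq_top [DecidableEq ι] (p : ℕ) [Fact p.Prime]
    {s : Set (ι → ℤ)} (hs : Submodule.span (ZMod p) (reduction p '' s) = ⊤) :
    ∃ v : ι → ι → ℤ, (∀ i, v i ∈ s) ∧ (Matrix.of v).det ≠ 0 := by
  let b' := Module.Basis.ofSpan hs.ge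
  let b := b'.reindex (b'.indexEquiv (Pi.basisFun (ZMod p) ι))
  have hb (i : ι) : b i ∈ reduction p '' s :=
    Module.Basis.ofSpan_subset hs.ge ⟨(b'.indexEquiv (Pi.basisFun (ZMod p) ι)).symm i, by
      simp [b, b']⟩
  choose v hv hvb using hb
  refine ⟨v, hv, fun hdet => ?_⟩
  have hunit : IsUnit (Matrix.of b).det :=
    (Matrix.isUnit_iff_isUnit_det _).1
      (Matrix.linearIndependent_rows_iff_isUnit.1 b.linearIndependent)
  have hmap : Matrix.of b = (Int.castRingHom (ZMod p)).mapMatrix (Matrix.of v) := by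
    ext i j
    simp [← hvb i]
  rw [hmap, ← RingHom.map_det, hdet, map_zero] at hunit
  exact not_isUnit_zero hunit

lemma card_boxPoints_mul_index_le (p : ℕ) [Fact p.Prime] {L : AddSubgroup (ι → ℤ)} {R : ℕ}
    (hspan : Submodule.span (ZMod p) (reduction p '' (boxPoints L R : Set (ι → ℤ))) = ⊤) :
    (boxPoints L R).card * L.index ≤
      (2 * (R + Fintype.card ι * R) + 1) ^ Fintype.card ι := by
  classical
  obtain ⟨v, hv, hdet⟩ := exists_det_ne_zero_of_span_reduction_eq_top p hspan
  exact card_boxPoints_mul_index_le_of_bounded_representatives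
    (exists_bounded_sub_mem_of_det_ne_zero hv hdet) R

/- Scaling by `p⁻¹` about a fixed point carries `G` into the small box without leaving `L`. -/
lemma card_le_card_boxPoints_of_congruent {p Q : ℕ} (hp : 0 < p) {L : AddSubgroup (ι → ℤ)}
    (hcop : p.Coprime L.index) {G : Finset (ι → ℤ)} (hGL : ∀ y ∈ G, y ∈ L)
    (hred : ∀ y ∈ G, ∀ y' ∈ G, reduction p y = reduction p y')
    (hdist : ∀ y ∈ G, ∀ y' ∈ G, ∀ i, |y i - y' i| ≤ Q * p) :
    G.card ≤ (boxPoints L Q).card := by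
  classical
  obtain rfl | ⟨x, hx⟩ := G.eq_empty_or_nonempty
  · simp
  refine (Finset.card_le_card (t := (boxPoints L Q).image fun z => x + p • z) fun y hy => ?_).trans
    Finset.card_image_le
  obtain ⟨z, rfl⟩ := exists_eq_add_smul_of_reduction_eq (hred y hy x hx)
  refine Finset.mem_image_of_mem _ (mem_boxPoints.2 ⟨fun i => ?_, ?_⟩)
  · have hz := hdist _ hy x hx i
    rw [Pi.add_apply, add_sub_cancel_left, Pi.smul_apply, nsmul_eq_mul, abs_mul, Nat.abs_cast,
      mul_comm] at hz
    exact le_of_mul_le_mul_right hz (mod_cast hp)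
  · exact mem_of_nsmul_mem_of_coprime_index hcop
      ((L.add_mem_cancel_left (hGL x hx)).1 (hGL _ hy))

lemma card_le_of_forall_reduction_mem {p Q : ℕ} (hp : 0 < p) (hQ : 0 < Q)
    {L : AddSubgroup (ι → ℤ)} (hcop : p.Coprime L.index) {Z : Finset (ι → ZMod p)}
    {G : Finset (ι → ℤ)} (hG : G ⊆ boxPoints L (Q * p)) (hZ : ∀ y ∈ G, reduction p y ∈ Z) :
    G.card ≤ 3 ^ Fintype.card ι * Z.card * (boxPoints L Q).card := by
  classical
  have hQp : (0 : ℤ) < Q * p := by positivity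
  let cell : (ι → ℤ) → (ι → ℤ) := fun y i => y i / (Q * p)
  let key : (ι → ℤ) → (ι → ZMod p) × (ι → ℤ) := fun y => (reduction p y, cell y)
  have hkey : ∀ y ∈ G, key y ∈ Z ×ˢ Fintype.piFinset fun _ : ι => Finset.Icc (-1 : ℤ) 1 := by
    refine fun y hy => Finset.mem_product.2 ⟨hZ y hy, Fintype.mem_piFinset.2 fun i => ?_⟩
    have hy' : |y i| ≤ Q * p := mod_cast (mem_boxPoints.1 (hG hy)).1 i
    rw [abs_le] at hy'
    exact Finset.mem_Icc.2 ⟨(Int.le_ediv_iff_mul_le hQp).2 (by linarith),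
      (Int.ediv_le_ediv hQp hy'.2).trans_eq (Int.ediv_self hQp.ne')⟩
  have hfiber : ∀ k ∈ G.image key, {y ∈ G | key y = k}.card ≤ (boxPoints L Q).card := by
    intro k _
    refine card_le_card_boxPoints_of_congruent hp hcop (fun y hy => ?_) (fun y hy y' hy' => ?_)
      fun y hy y' hy' i => ?_
    · exact (mem_boxPoints.1 (hG (Finset.mem_filter.1 hy).1)).2
    all_goals have heq : key y = key y' :=
      (Finset.mem_filter.1 hy).2.trans (Finset.mem_filter.1 hy').2.symm
    · exact congrArg Prod.fst heq
    · exact (abs_sub_lt_of_ediv_eq hQp (congrFun (congrArg Prod.snd heq) i)).le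
  calc G.card ≤ (boxPoints L Q).card * (G.image key).card :=
        Finset.card_le_mul_card_image _ _ hfiber
    _ ≤ (boxPoints L Q).card * (Z.card * 3 ^ Fintype.card ι) := by
        gcongr
        exact (Finset.card_le_card (Finset.image_subset_iff.2 hkey)).trans_eq (by simp)
    _ = 3 ^ Fintype.card ι * Z.card * (boxPoints L Q).card := by ring

end BoxPoints

section Forms

open MvPolynomial

variable {σ R : Type*} [CommRing R]

/-- The vector of partial derivatives of `F` at the point `x`. -/
def formGradient (F : MvPolynomial σ R) (x : σ → R) : σ → R := fun i => eval x (pderiv i F)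

/-- The ideal generated by the partial derivatives of `F`. -/
def jacobianIdeal (F : MvPolynomial σ R) : Ideal (MvPolynomial σ R) :=
  Ideal.span (Set.range fun i => pderiv i F)

/-- Non-singularity of a form, expressed without reference to an algebraic closure: every variable
has a power in the Jacobian ideal. Over a field this means, by the Nullstellensatz, that the partial
derivatives have no common non-trivial zero over the algebraic closure. -/
def IsNonsingularForm (F : MvPolynomial σ R) : Prop := ∀ j, X j ∈ (jacobianIdeal F).radical

lemma eval_smul_of_isHomogeneous {d : ℕ} {F : MvPolynomial σ R} (hF : F.IsHomogeneous d) (c : R)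
    (x : σ → R) : eval (c • x) F = c ^ d * eval x F := by
  rw [eval_eq, eval_eq, Finset.mul_sum]
  refine Finset.sum_congr rfl fun s hs => ?_
  have hdeg : ∑ i ∈ s.support, s i = d := by
    simpa [Finsupp.weight_apply, Finsupp.sum] using hF (mem_support_iff.1 hs)
  simp only [Pi.smul_apply, smul_eq_mul, mul_pow, Finset.prod_mul_distrib,
    Finset.prod_pow_eq_pow_sum, hdeg]
  ring

lemma formGradient_smul_of_isHomogeneous {d : ℕ} {F : MvPolynomial σ R} (hF : F.IsHomogeneous d)
    (c : R) (x : σ → R) : formGradient F (c • x) = c ^ (d - 1) • formGradient F x :=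
  funext fun _ => eval_smul_of_isHomogeneous hF.pderiv c x

lemma formGradient_map {S : Type*} [CommRing S] (f : R →+* S) (F : MvPolynomial σ R) (x : σ → R) :
    formGradient (map f F) (f ∘ x) = f ∘ formGradient F x :=
  funext fun i => by simp only [formGradient, pderiv_map, eval_map, Function.comp_apply, eval₂_comp]

lemma jacobianIdeal_map {S : Type*} [CommRing S] (f : R →+* S) (F : MvPolynomial σ R) :
    jacobianIdeal (map f F) = (jacobianIdeal F).map (map f) := by
  simp only [jacobianIdeal, Ideal.map_span, ← Set.range_comp, Function.comp_def, pderiv_map]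

lemma eval_eq_zero_of_mem_jacobianIdeal {F G : MvPolynomial σ R} {x : σ → R}
    (hx : formGradient F x = 0) (hG : G ∈ jacobianIdeal F) : eval x G = 0 := by
  have hle : jacobianIdeal F ≤ RingHom.ker (eval x) :=
    Ideal.span_le.2 (Set.range_subset_iff.2 fun i => congrFun hx i)
  exact hle hG

lemma IsNonsingularForm.formGradient_ne_zero [IsReduced R] {F : MvPolynomial σ R}
    (hF : IsNonsingularForm F) {x : σ → R} (hx : x ≠ 0) : formGradient F x ≠ 0 := fun hgrad =>
  hx <| funext fun j => by
    obtain ⟨N, hN⟩ := hF j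
    have := eval_eq_zero_of_mem_jacobianIdeal hgrad hN
    rw [map_pow, eval_X] at this
    exact eq_zero_of_pow_eq_zero this

variable [Fintype σ]

lemma formGradient_dotProduct_self {d : ℕ} {F : MvPolynomial σ R} (hF : F.IsHomogeneous d)
    (x : σ → R) : formGradient F x ⬝ᵥ x = d * eval x F := by
  have heuler := congrArg (eval x) hF.sum_X_mul_pderiv
  simpa only [formGradient, dotProduct, mul_comm, map_sum, map_mul, eval_X, nsmul_eq_mul,
    map_natCast] using heuler

lemma formGradient_mul_X_dotProduct (F : MvPolynomial σ R) (j : σ) (x z : σ → R) :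
    formGradient (F * X j) x ⬝ᵥ z = (formGradient F x ⬝ᵥ z) * x j + eval x F * z j := by
  classical
  have hX (i : σ) : eval x (pderiv i (F * X j)) =
      eval x (pderiv i F) * x j + Pi.single (M := fun _ => R) j (eval x F) i := by
    obtain rfl | hij := eq_or_ne i j
    · simp [mul_comm, add_comm]
    · simp [pderiv_X_of_ne hij.symm, hij, mul_comm]
  simp only [formGradient, dotProduct, hX, add_mul, Finset.sum_add_distrib, Finset.sum_mul,
    mul_right_comm]
  simp [Pi.single_apply]

lemma exists_eval_add_smul_eq (F : MvPolynomial σ R) (x z : σ → R) (q : R) :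
    ∃ r, eval (x + q • z) F = eval x F + q * (formGradient F x ⬝ᵥ z) + q ^ 2 * r := by
  induction F using MvPolynomial.induction_on with
  | C a => exact ⟨0, by simp [formGradient, dotProduct]⟩
  | add F G hF hG =>
    obtain ⟨a, ha⟩ := hF
    obtain ⟨b, hb⟩ := hG
    have hadd : formGradient (F + G) x = formGradient F x + formGradient G x := by
      ext; simp [formGradient]
    refine ⟨a + b, ?_⟩
    rw [map_add, ha, hb, hadd, add_dotProduct, map_add]
    ring
  | mul_X F j hF =>
    obtain ⟨c, hc⟩ := hF
    refine ⟨c * (x j + q * z j) + (formGradient F x ⬝ᵥ z) * z j, ?_⟩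
    rw [formGradient_mul_X_dotProduct, map_mul, map_mul, hc]
    simp only [eval_X, Pi.add_apply, Pi.smul_apply, smul_eq_mul]
    ring

end Forms

section Reduction

open MvPolynomial

variable {ι : Type*} {p : ℕ}

lemma eval_reduction_map (F : MvPolynomial ι ℤ) (x : ι → ℤ) :
    eval (reduction p x) (map (Int.castRingHom (ZMod p)) F) = (eval x F : ℤ) := by
  rw [eval_map]
  exact (eval₂_comp (Int.castRingHom (ZMod p)) x F).symm

lemma formGradient_reduction_map (F : MvPolynomial ι ℤ) (x : ι → ℤ) :
    formGradient (map (Int.castRingHom (ZMod p)) F) (reduction p x) =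
      reduction p (formGradient F x) :=
  formGradient_map (Int.castRingHom (ZMod p)) F x

/-- The prime `p` is one of good reduction for the hypersurface `F = 0`. -/
def HasGoodReduction (F : MvPolynomial ι ℤ) (p : ℕ) : Prop :=
  IsNonsingularForm (map (Int.castRingHom (ZMod p)) F)

lemma HasGoodReduction.reduction_formGradient_ne_zero [Fact p.Prime] {F : MvPolynomial ι ℤ}
    (hgood : HasGoodReduction F p) {x : ι → ℤ} (hx : reduction p x ≠ 0) :
    reduction p (formGradient F x) ≠ 0 := by
  rw [← formGradient_reduction_map]
  exact IsNonsingularForm.formGradient_ne_zero hgood hx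

lemma reduction_zsmul (c : ℤ) (x : ι → ℤ) :
    reduction p (c • x) = (c : ZMod p) • reduction p x := by
  rw [map_zsmul, Int.cast_smul_eq_zsmul]

lemma reduction_nsmul_self (z : ι → ℤ) : reduction p (p • z) = 0 := by
  ext; simp

lemma reduction_surjective (p : ℕ) : Function.Surjective (reduction p (ι := ι)) :=
  (ZMod.intCast_surjective (n := p)).comp_left

/-- The line over `ZMod p` spanned by the reduction of `x`, that is, the reduction of `x` viewed as
a point of projective space. -/
def reductionLine (p : ℕ) (x : ι → ℤ) : Submodule (ZMod p) (ι → ZMod p) :=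
  Submodule.span (ZMod p) {reduction p x}

/-- The integer vectors congruent modulo `p` to a multiple of `x`. -/
def lineLattice (p : ℕ) (x : ι → ℤ) : AddSubgroup (ι → ℤ) :=
  (reductionLine p x).toAddSubgroup.comap (reduction p)

lemma mem_lineLattice_iff_reduction_mem {x y : ι → ℤ} :
    y ∈ lineLattice p x ↔ reduction p y ∈ reductionLine p x := Iff.rfl

lemma mem_lineLattice {x y : ι → ℤ} :
    y ∈ lineLattice p x ↔ ∃ (c : ℤ) (z : ι → ℤ), y = c • x + p • z := by
  simp only [mem_lineLattice_iff_reduction_mem, reductionLine, Submodule.mem_span_singleton]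
  constructor
  · rintro ⟨c, hc⟩
    obtain ⟨c, rfl⟩ := ZMod.intCast_surjective c
    rw [← reduction_zsmul] at hc
    exact ⟨c, exists_eq_add_smul_of_reduction_eq hc.symm⟩
  · rintro ⟨c, z, rfl⟩
    exact ⟨c, by rw [map_add, reduction_zsmul, reduction_nsmul_self, add_zero]⟩

lemma index_lineLattice_mul [Fintype ι] [Fact p.Prime] {x : ι → ℤ} (hx : reduction p x ≠ 0) :
    (lineLattice p x).index * p = p ^ Fintype.card ι := by
  have hcard : Nat.card (reductionLine p x).toAddSubgroup = p := by
    have := Module.natCard_eq_pow_finrank (K := ZMod p) (V := reductionLine p x)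
    rwa [reductionLine, finrank_span_singleton hx, pow_one, Nat.card_zmod] at this
  rw [lineLattice, AddSubgroup.index_comap_of_surjective _ (reduction_surjective p), mul_comm]
  nth_rewrite 1 [← hcard]
  rw [AddSubgroup.card_mul_index]
  simp [Nat.card_fun]

end Reduction

section TangentLattice

open MvPolynomial

variable {ι : Type*} [Fintype ι] {d p : ℕ} {F : MvPolynomial ι ℤ} {x y : ι → ℤ}

/-- The linear form `y ↦ ∇F(x) · y` modulo `p ^ 2`. -/
def gradientFunctional (F : MvPolynomial ι ℤ) (p : ℕ) (x : ι → ℤ) : (ι → ℤ) →+ ZMod (p ^ 2) :=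
  AddMonoidHom.mk' (fun y => (formGradient F x ⬝ᵥ y : ℤ)) fun y z => by
    rw [dotProduct_add, Int.cast_add]

lemma gradientFunctional_apply (F : MvPolynomial ι ℤ) (p : ℕ) (x y : ι → ℤ) :
    gradientFunctional F p x y = (formGradient F x ⬝ᵥ y : ℤ) := rfl

/-- The integer vectors that are congruent to a multiple of `x` modulo `p` and tangent to the
hypersurface `F = 0` at `x` modulo `p ^ 2`. -/
def tangentLattice (F : MvPolynomial ι ℤ) (p : ℕ) (x : ι → ℤ) : AddSubgroup (ι → ℤ) :=
  (gradientFunctional F p x).ker ⊓ lineLattice p x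

lemma formGradient_dotProduct_smul_add (hF : F.IsHomogeneous d) (hx : eval x F = 0) (c : ℤ)
    (z : ι → ℤ) : formGradient F x ⬝ᵥ (c • x + p • z) = p * (formGradient F x ⬝ᵥ z) := by
  rw [dotProduct_add, dotProduct_smul, dotProduct_smul, formGradient_dotProduct_self hF, hx]
  simp

lemma mem_tangentLattice_of_eval_eq_zero [Fact p.Prime] (hF : F.IsHomogeneous d)
    (hx : eval x F = 0) (hy : eval y F = 0) (hy₀ : reduction p y ≠ 0)
    (hyx : y ∈ lineLattice p x) : y ∈ tangentLattice F p x := by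
  refine AddSubgroup.mem_inf.2 ⟨?_, hyx⟩
  have hp : Prime (p : ℤ) := Nat.prime_iff_prime_int.1 Fact.out
  obtain ⟨c, z, rfl⟩ := mem_lineLattice.1 hyx
  have hc : ¬ (p : ℤ) ∣ c := fun h => hy₀ <| by
    rw [map_add, reduction_zsmul, (ZMod.intCast_zmod_eq_zero_iff_dvd c p).2 h, zero_smul,
      reduction_nsmul_self, add_zero]
  obtain ⟨r, hr⟩ := exists_eval_add_smul_eq F (c • x) z p
  rw [Nat.cast_smul_eq_nsmul, hy, eval_smul_of_isHomogeneous hF, hx,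
    formGradient_smul_of_isHomogeneous hF, smul_dotProduct, smul_eq_mul] at hr
  have hdvd : (p : ℤ) ∣ c ^ (d - 1) * (formGradient F x ⬝ᵥ z) :=
    (mul_dvd_mul_iff_left hp.ne_zero).1 ⟨-r, by linear_combination -hr⟩
  have hdvd' : (p : ℤ) ∣ formGradient F x ⬝ᵥ z :=
    (hp.dvd_or_dvd hdvd).resolve_left fun h => hc (hp.dvd_of_dvd_pow h)
  rw [AddMonoidHom.mem_ker, gradientFunctional_apply, formGradient_dotProduct_smul_add hF hx,
    ZMod.intCast_zmod_eq_zero_iff_dvd, Nat.cast_pow, sq]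
  exact mul_dvd_mul_left _ hdvd'

lemma map_gradientFunctional_lineLattice [Fact p.Prime] (hF : F.IsHomogeneous d)
    (hx : eval x F = 0) (hgrad : reduction p (formGradient F x) ≠ 0) :
    (lineLattice p x).map (gradientFunctional F p x) =
      AddSubgroup.zmultiples ((p : ℕ) : ZMod (p ^ 2)) := by
  classical
  apply le_antisymm
  · rintro _ ⟨y, hy, rfl⟩
    obtain ⟨c, z, rfl⟩ := mem_lineLattice.1 hy
    refine AddSubgroup.mem_zmultiples_iff.2 ⟨formGradient F x ⬝ᵥ z, ?_⟩
    rw [gradientFunctional_apply, formGradient_dotProduct_smul_add hF hx, zsmul_eq_mul]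
    push_cast
    ring
  · obtain ⟨i, hi⟩ := Function.ne_iff.1 hgrad
    obtain ⟨c, hc⟩ := ZMod.intCast_surjective (reduction p (formGradient F x) i)⁻¹
    obtain ⟨e, he⟩ : (p : ℤ) ∣ formGradient F x i * c - 1 := by
      rw [← ZMod.intCast_zmod_eq_zero_iff_dvd, Int.cast_sub, Int.cast_mul, hc, ← reduction_apply,
        Int.cast_one, mul_inv_cancel₀ hi, sub_self]
    refine AddSubgroup.zmultiples_le.2 ⟨p • Pi.single i c,
      mem_lineLattice.2 ⟨0, Pi.single i c, by simp⟩, ?_⟩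
    have hval : formGradient F x ⬝ᵥ (p • Pi.single i c) = p + (p ^ 2 : ℕ) * e := by
      rw [dotProduct_smul, dotProduct_single, nsmul_eq_mul, ← sub_add_cancel (_ * c) 1, he]
      push_cast
      ring
    rw [gradientFunctional_apply, hval]
    simp only [Int.cast_add, Int.cast_mul, Int.cast_natCast, ZMod.natCast_self, zero_mul, add_zero]

lemma index_tangentLattice [Fact p.Prime] (hF : F.IsHomogeneous d) (hx : eval x F = 0)
    (hx₀ : reduction p x ≠ 0) (hgrad : reduction p (formGradient F x) ≠ 0) :
    (tangentLattice F p x).index = p ^ Fintype.card ι := by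
  have hp : p.Prime := Fact.out
  have hrel : (tangentLattice F p x).relIndex (lineLattice p x) = p := by
    rw [tangentLattice, AddSubgroup.inf_relIndex_right, AddSubgroup.relIndex_ker,
      map_gradientFunctional_lineLattice hF hx hgrad, Nat.card_zmultiples,
      ZMod.addOrderOf_coe _ (pow_ne_zero 2 hp.ne_zero), sq, Nat.gcd_mul_right_left,
      Nat.mul_div_cancel _ hp.pos]
  rw [← AddSubgroup.relIndex_mul_index (H := tangentLattice F p x) inf_le_right, hrel, mul_comm,
    index_lineLattice_mul hx₀]

end TangentLattice

section HyperplaneSections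

open MvPolynomial

variable {K : Type*} [Field K]

lemma IsNonsingularForm.ne_zero {σ : Type*} [Nonempty σ] {G : MvPolynomial σ K}
    (hsing : IsNonsingularForm G) : G ≠ 0 := by
  rintro rfl
  obtain ⟨N, hN⟩ := hsing (Classical.arbitrary σ)
  simp [jacobianIdeal] at hN

lemma isUnit_of_dvd_X_pow_of_dvd_X_pow {σ : Type*} {f : MvPolynomial σ K} {i j : σ} (hij : i ≠ j)
    {a b : ℕ} (hi : f ∣ X i ^ a) (hj : f ∣ X j ^ b) : IsUnit f := by
  have hX : IsRelPrime (X i : MvPolynomial σ K) (X j) :=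
    X_prime.irreducible.isRelPrime_iff_not_dvd.2 fun h => hij (X_dvd_X.1 h)
  exact hX.pow hi hj

lemma sub_map_mem_of_forall_X_sub_map_mem {σ R : Type*} [CommRing R]
    {I : Ideal (MvPolynomial σ R)} {ψ : MvPolynomial σ R →ₐ[R] MvPolynomial σ R}
    (h : ∀ i, X i - ψ (X i) ∈ I) (f : MvPolynomial σ R) : f - ψ f ∈ I := by
  have heq : Ideal.Quotient.mkₐ R I = (Ideal.Quotient.mkₐ R I).comp ψ := by
    ext i
    exact Ideal.Quotient.eq.2 (h i)
  exact Ideal.Quotient.eq.1 (DFunLike.congr_fun heq f)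

variable {n : ℕ}

/-- The restriction of polynomials to the hyperplane `x j = b · (xᵢ)_{i ≠ j}`, in the remaining
coordinates. -/
def restrictHyperplane (j : Fin (n + 1)) (b : Fin n → K) :
    MvPolynomial (Fin (n + 1)) K →ₐ[K] MvPolynomial (Fin n) K :=
  aeval (j.insertNth (∑ i, C (b i) * X i) X)

variable {j : Fin (n + 1)} {b : Fin n → K}

lemma restrictHyperplane_X_self : restrictHyperplane j b (X j) = ∑ i, C (b i) * X i := by
  rw [restrictHyperplane, aeval_X, Fin.insertNth_apply_same]

lemma restrictHyperplane_X_succAbove (i : Fin n) :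
    restrictHyperplane j b (X (j.succAbove i)) = X i := by
  rw [restrictHyperplane, aeval_X, Fin.insertNth_apply_succAbove]

lemma eval_restrictHyperplane (w : Fin n → K) (G : MvPolynomial (Fin (n + 1)) K) :
    eval w (restrictHyperplane j b G) = eval (j.insertNth (b ⬝ᵥ w) w) G := by
  have hcomp : (aeval w).comp (restrictHyperplane j b) = aeval (j.insertNth (b ⬝ᵥ w) w) := by
    ext i
    induction i using j.succAboveCases with
    | x => simp [restrictHyperplane_X_self, dotProduct]
    | p i => simp [restrictHyperplane_X_succAbove]
  exact DFunLike.congr_fun hcomp G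

lemma isHomogeneous_restrictHyperplane {d : ℕ} {G : MvPolynomial (Fin (n + 1)) K}
    (hG : G.IsHomogeneous d) : (restrictHyperplane j b G).IsHomogeneous d := by
  rw [← one_mul d]
  refine hG.aeval _ (j.forall_iff_succAbove.2 ⟨?_, fun i => ?_⟩)
  · rw [Fin.insertNth_apply_same]
    exact IsHomogeneous.sum _ _ _ fun i _ => (isHomogeneous_X K i).C_mul (b i)
  · rw [Fin.insertNth_apply_succAbove]
    exact isHomogeneous_X K i

lemma sub_rename_restrictHyperplane_dvd (G : MvPolynomial (Fin (n + 1)) K) :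
    X j - rename j.succAbove (∑ i, C (b i) * X i) ∣
      G - rename j.succAbove (restrictHyperplane j b G) := by
  rw [← Ideal.mem_span_singleton]
  refine sub_map_mem_of_forall_X_sub_map_mem
    (ψ := (rename j.succAbove).comp (restrictHyperplane j b)) (j.forall_iff_succAbove.2 ⟨?_, ?_⟩) G
  · rw [AlgHom.comp_apply, restrictHyperplane_X_self]
    exact Ideal.mem_span_singleton_self _
  · intro i
    simp [restrictHyperplane_X_succAbove]

lemma pderiv_rename_succAbove (f : MvPolynomial (Fin n) K) :
    pderiv j (rename j.succAbove f) = 0 := by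
  induction f using MvPolynomial.induction_on with
  | C a => simp
  | add f g hf hg => rw [map_add, map_add, hf, hg, add_zero]
  | mul_X f i hf =>
    rw [map_mul, rename_X, pderiv_mul, hf, pderiv_X_of_ne (j.succAbove_ne i), zero_mul, mul_zero,
      add_zero]

/- If the restriction vanishes, then `G = L * H` with `L` the equation of the hyperplane, and the
partial derivatives of `G` restrict to multiples of `H`. -/
lemma restrictHyperplane_pderiv_self_dvd {G : MvPolynomial (Fin (n + 1)) K}
    (h : restrictHyperplane j b G = 0) (i : Fin (n + 1)) :
    restrictHyperplane j b (pderiv j G) ∣ restrictHyperplane j b (pderiv i G) := by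
  set ℓ : MvPolynomial (Fin n) K := ∑ i, C (b i) * X i with hℓ
  obtain ⟨H, hH⟩ : X j - rename j.succAbove ℓ ∣ G := by
    simpa only [h, map_zero, sub_zero] using sub_rename_restrictHyperplane_dvd (b := b) (j := j) G
  have hL : restrictHyperplane j b (X j - rename j.succAbove ℓ) = 0 := by
    simp [restrictHyperplane_X_self, restrictHyperplane_X_succAbove, hℓ]
  have hderiv (i : Fin (n + 1)) : restrictHyperplane j b (pderiv i G) =
      restrictHyperplane j b (pderiv i (X j - rename j.succAbove ℓ)) *
        restrictHyperplane j b H := by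
    rw [hH, pderiv_mul, map_add, map_mul, map_mul, hL, zero_mul, add_zero]
  have hself : restrictHyperplane j b (pderiv j G) = restrictHyperplane j b H := by
    rw [hderiv, map_sub, pderiv_X_self, pderiv_rename_succAbove, sub_zero, map_one, one_mul]
  rw [hself, hderiv i]
  exact dvd_mul_left _ _

lemma IsNonsingularForm.restrictHyperplane_ne_zero {d : ℕ} {G : MvPolynomial (Fin (n + 1)) K}
    (hsing : IsNonsingularForm G) (hG : G.IsHomogeneous d) (hd : 2 ≤ d) (hn : 2 ≤ n) :
    restrictHyperplane j b G ≠ 0 := by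
  intro h
  set D := restrictHyperplane j b (pderiv j G)
  have hjac : jacobianIdeal G ≤ (Ideal.span {D}).comap (restrictHyperplane j b) :=
    Ideal.span_le.2 <| Set.range_subset_iff.2 fun i =>
      Ideal.mem_span_singleton.2 (restrictHyperplane_pderiv_self_dvd h i)
  have hdvd (i : Fin n) : ∃ N, D ∣ X i ^ N := by
    obtain ⟨N, hN⟩ := hsing (j.succAbove i)
    refine ⟨N, ?_⟩
    rw [← restrictHyperplane_X_succAbove (j := j) (b := b), ← map_pow]
    exact Ideal.mem_span_singleton.1 (hjac hN)
  obtain ⟨a, ha⟩ := hdvd ⟨0, by lia⟩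
  obtain ⟨c, hc⟩ := hdvd ⟨1, by lia⟩
  have hunit := (isUnit_of_dvd_X_pow_of_dvd_X_pow (by simp) ha hc).map (eval 0)
  have hzero : eval 0 D = 0 := by
    have hhom := isHomogeneous_restrictHyperplane (j := j) (b := b) (hG.pderiv (i := j))
    have := eval_smul_of_isHomogeneous hhom 0 0
    rwa [zero_pow (by lia), zero_mul, smul_zero] at this
  exact hunit.ne_zero hzero

end HyperplaneSections

section FiniteFieldCounts

open MvPolynomial

variable {K : Type*} [Field K] {n d : ℕ}

lemma exists_eq_insertNth_of_dotProduct_eq_zero {a : Fin (n + 1) → K}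
    (ha : a ≠ 0) :
    ∃ (j : Fin (n + 1)) (b : Fin n → K), ∀ u, a ⬝ᵥ u = 0 →
      j.insertNth (b ⬝ᵥ j.removeNth u) (j.removeNth u) = u := by
  obtain ⟨j, hj⟩ := Function.ne_iff.1 ha
  refine ⟨j, -(a j)⁻¹ • j.removeNth a, fun u hu => ?_⟩
  rw [dotProduct, Fin.sum_univ_succAbove _ j] at hu
  have huj : u j = -(a j)⁻¹ • j.removeNth a ⬝ᵥ j.removeNth u := by
    rw [smul_dotProduct, smul_eq_mul, neg_mul, eq_neg_iff_add_eq_zero, ← mul_right_inj' hj]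
    simpa [mul_add, dotProduct, Fin.removeNth, mul_inv_cancel_left₀ hj] using hu
  rw [← huj, Fin.insertNth_self_removeNth]

lemma card_mul_card_sub_one_le_ncard {α V : Type*} [AddCommGroup V] [Module K V] [Finite V]
    {T : Finset α} {v : α → V} {Z : Set V}
    (hinj : Set.InjOn (fun t => Submodule.span K {v t}) (T : Set α)) (hT : ∀ t ∈ T, v t ≠ 0)
    (hZ : ∀ t ∈ T, ∀ c : K, c • v t ∈ Z) : T.card * (Nat.card K - 1) ≤ Z.ncard := by
  have hle : Nat.card (T × Kˣ) ≤ Nat.card Z := by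
    refine Nat.card_le_card_of_injective (fun q => ⟨(q.2 : K) • v q.1, hZ _ q.1.2 _⟩) ?_
    rintro ⟨⟨t, ht⟩, c⟩ ⟨⟨s, hs⟩, e⟩ h
    have hce : c • v t = e • v s := congrArg Subtype.val h
    obtain rfl : t = s := hinj ht hs <| by
      simp only
      rw [← Submodule.span_singleton_group_smul_eq K c (v t), hce,
        Submodule.span_singleton_group_smul_eq]
    obtain rfl : c = e := Units.ext (smul_left_injective K (hT t ht) hce)
    rfl
  rwa [Nat.card_prod, Nat.card_units, Nat.card_eq_finsetCard, Nat.card_coe_set_eq] at hle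

variable [Finite K]

lemma ncard_eval_eq_zero_mul_card_le {G : MvPolynomial (Fin n) K} (hG : G ≠ 0)
    (hd : G.totalDegree ≤ d) : {u | eval u G = 0}.ncard * Nat.card K ≤ d * Nat.card K ^ n := by
  classical
  have := Fintype.ofFinite K
  have hq : (0 : ℚ≥0) < Fintype.card K := by exact_mod_cast Fintype.card_pos
  have h := schwartz_zippel_totalDegree hG (Finset.univ : Finset K)
  rw [Fintype.piFinset_univ, Finset.card_univ, div_le_div_iff₀ (by positivity) hq] at h
  rw [Set.ncard_eq_toFinset_card', Set.toFinset_ofPred, Nat.card_eq_fintype_card]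
  refine Nat.cast_le.1 ((h.trans ?_).trans_eq' (by push_cast; rfl))
  push_cast
  gcongr

lemma IsNonsingularForm.ncard_hyperplaneSection_mul_card_le {G : MvPolynomial (Fin (n + 1)) K}
    (hsing : IsNonsingularForm G) (hG : G.IsHomogeneous d) (hd : 2 ≤ d) (hn : 2 ≤ n)
    {a : Fin (n + 1) → K} (ha : a ≠ 0) :
    {u | eval u G = 0 ∧ a ⬝ᵥ u = 0}.ncard * Nat.card K ≤ d * Nat.card K ^ n := by
  obtain ⟨j, b, hjb⟩ := exists_eq_insertNth_of_dotProduct_eq_zero ha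
  refine (Nat.mul_le_mul_right _ ?_).trans (ncard_eval_eq_zero_mul_card_le
    (hsing.restrictHyperplane_ne_zero (j := j) (b := b) hG hd hn)
    (isHomogeneous_restrictHyperplane hG).totalDegree_le)
  refine Set.ncard_le_ncard_of_injOn j.removeNth ?_ ?_ (Set.toFinite _)
  · rintro u ⟨hu, hau⟩
    rw [Set.mem_ofPred_eq, eval_restrictHyperplane, hjb u hau, hu]
  · rintro u ⟨-, hu⟩ v ⟨-, hv⟩ huv
    rw [← hjb u hu, ← hjb v hv, huv]

end FiniteFieldCounts

section Descent

open MvPolynomial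

lemma exists_dotProduct_eq_zero_of_span_ne_top {ι K : Type*} [Fintype ι] [Field K]
    {s : Set (ι → K)} (hs : Submodule.span K s ≠ ⊤) : ∃ a ≠ 0, ∀ v ∈ s, a ⬝ᵥ v = 0 := by
  classical
  obtain ⟨f, hf, hker⟩ := Submodule.exists_le_ker_of_lt_top _ hs.lt_top
  obtain ⟨a, rfl⟩ := (dotProductEquiv K ι).surjective f
  exact ⟨a, by rintro rfl; simp at hf, fun v hv => hker (Submodule.subset_span hv)⟩

lemma index_inf_eq_mul_of_coprime {G : Type*} [AddCommGroup G] {L M : AddSubgroup G}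
    (hL : L.index ≠ 0) (hM : M.index ≠ 0) (hcop : L.index.Coprime M.index) :
    (L ⊓ M).index = L.index * M.index :=
  (AddSubgroup.index_inf_le).antisymm <| Nat.le_of_dvd
    (Nat.pos_of_ne_zero (AddSubgroup.index_inf_ne_zero hL hM)) <|
    hcop.mul_dvd_of_dvd_of_dvd (AddSubgroup.index_dvd_of_le inf_le_left)
      (AddSubgroup.index_dvd_of_le inf_le_right)

section ReductionLine

variable {ι : Type*} {p : ℕ} {x y : ι → ℤ}

lemma reductionLine_eq_of_mem_lineLattice [Fact p.Prime] (hy : reduction p y ≠ 0)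
    (hyx : y ∈ lineLattice p x) : reductionLine p y = reductionLine p x := by
  obtain ⟨c, hc⟩ := Submodule.mem_span_singleton.1 (mem_lineLattice_iff_reduction_mem.1 hyx)
  have hc₀ : c ≠ 0 := by
    rintro rfl
    exact hy (by rw [← hc, zero_smul])
  rw [reductionLine, ← hc, Submodule.span_singleton_smul_eq (isUnit_iff_ne_zero.2 hc₀),
    reductionLine]

lemma eval_reduction_eq_zero_of_mem_lineLattice {d : ℕ} {F : MvPolynomial ι ℤ}
    (hF : F.IsHomogeneous d) (hx : eval x F = 0) (hyx : y ∈ lineLattice p x) :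
    eval (reduction p y) (map (Int.castRingHom (ZMod p)) F) = 0 := by
  obtain ⟨c, hc⟩ := Submodule.mem_span_singleton.1 (mem_lineLattice_iff_reduction_mem.1 hyx)
  rw [← hc, eval_smul_of_isHomogeneous (hF.map _), eval_reduction_map, hx, Int.cast_zero, mul_zero]

end ReductionLine

variable {m d p Q P : ℕ} {F : MvPolynomial (Fin (m + 2)) ℤ} {L : AddSubgroup (Fin (m + 2) → ℤ)}

lemma card_boxPoints_le_of_span_eq_top [Fact p.Prime] (hQ : 0 < Q) (hL : L.index = Q ^ (m + 2))
    (hspan : Submodule.span (ZMod p)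
      (reduction p '' (boxPoints L (Q * p) : Set (Fin (m + 2) → ℤ))) = ⊤) :
    (boxPoints L (Q * p)).card ≤ (2 * m + 7) ^ (m + 2) * p ^ (m + 2) := by
  have hQp : 1 ≤ Q * p := Nat.mul_pos hQ (Fact.out : p.Prime).pos
  have hcard := card_boxPoints_mul_index_le p hspan
  rw [hL, Fintype.card_fin] at hcard
  refine Nat.le_of_mul_le_mul_right (hcard.trans ?_) (pow_pos hQ (m + 2))
  rw [← mul_pow, ← mul_pow]
  exact Nat.pow_le_pow_left (by linarith) _

lemma card_le_of_span_ne_top [Fact p.Prime] (hF : F.IsHomogeneous d) (hd : 2 ≤ d) (hm : 1 ≤ m)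
    (hgood : HasGoodReduction F p) (hQ : 0 < Q) (hcop : p.Coprime L.index)
    (hspan : Submodule.span (ZMod p)
      (reduction p '' (boxPoints L (Q * p) : Set (Fin (m + 2) → ℤ))) ≠ ⊤)
    {G : Finset (Fin (m + 2) → ℤ)} (hG : G ⊆ boxPoints L (Q * p))
    (hGF : ∀ y ∈ G, eval (reduction p y) (map (Int.castRingHom (ZMod p)) F) = 0) :
    G.card ≤ p ^ m * (3 ^ (m + 2) * d * (boxPoints L Q).card) := by
  classical
  have hp : 0 < p := (Fact.out : p.Prime).pos
  obtain ⟨a, ha, hperp⟩ := exists_dotProduct_eq_zero_of_span_ne_top hspan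
  let Z : Finset (Fin (m + 2) → ZMod p) :=
    {u | eval u (map (Int.castRingHom (ZMod p)) F) = 0 ∧ a ⬝ᵥ u = 0}
  have hZ : Z.card ≤ d * p ^ m := by
    have hsection :=
      IsNonsingularForm.ncard_hyperplaneSection_mul_card_le hgood (hF.map _) hd (by lia) ha
    rw [Set.ncard_eq_toFinset_card', Set.toFinset_ofPred, Nat.card_zmod, pow_succ,
      ← mul_assoc] at hsection
    exact Nat.le_of_mul_le_mul_right hsection hp
  have hGZ (y) (hy : y ∈ G) : reduction p y ∈ Z :=
    Finset.mem_filter.2 ⟨Finset.mem_univ _, hGF y hy, hperp _ ⟨y, hG hy, rfl⟩⟩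
  calc G.card ≤ 3 ^ (m + 2) * Z.card * (boxPoints L Q).card := by
        simpa only [Fintype.card_fin] using card_le_of_forall_reduction_mem hp hQ hcop hG hGZ
    _ ≤ 3 ^ (m + 2) * (d * p ^ m) * (boxPoints L Q).card := by gcongr
    _ = p ^ m * (3 ^ (m + 2) * d * (boxPoints L Q).card) := by ring

lemma card_le_of_forall_eval_reduction_eq_zero [Fact p.Prime] (hF : F.IsHomogeneous d)
    (hd : 2 ≤ d) (hm : 1 ≤ m) (hgood : HasGoodReduction F p) (hQ : 0 < Q)
    (hL : L.index = Q ^ (m + 2)) (hcop : p.Coprime Q)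
    {G : Finset (Fin (m + 2) → ℤ)} (hG : G ⊆ boxPoints L (Q * p))
    (hGF : ∀ y ∈ G, eval (reduction p y) (map (Int.castRingHom (ZMod p)) F) = 0) :
    G.card ≤
      p ^ m * ((2 * m + 7) ^ (m + 2) * p ^ 2 + 3 ^ (m + 2) * d * (boxPoints L Q).card) := by
  by_cases hspan : Submodule.span (ZMod p)
      (reduction p '' (boxPoints L (Q * p) : Set (Fin (m + 2) → ℤ))) = ⊤
  · calc G.card ≤ (2 * m + 7) ^ (m + 2) * p ^ (m + 2) :=
          (Finset.card_le_card hG).trans (card_boxPoints_le_of_span_eq_top hQ hL hspan)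
      _ = p ^ m * ((2 * m + 7) ^ (m + 2) * p ^ 2) := by ring
      _ ≤ _ := Nat.mul_le_mul_left _ (Nat.le_add_right _ _)
  · refine (card_le_of_span_ne_top hF hd hm hgood hQ ?_ hspan hG hGF).trans
      (Nat.mul_le_mul_left _ (Nat.le_add_left _ _))
    rw [hL]
    exact hcop.pow_right _

lemma card_le_of_injOn_reductionLine [Fact p.Prime] (hF : F.IsHomogeneous d)
    (hgood : HasGoodReduction F p) {T : Finset (Fin (m + 2) → ℤ)}
    (hinj : Set.InjOn (reductionLine p) (T : Set (Fin (m + 2) → ℤ)))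
    (hT : ∀ t ∈ T, eval t F = 0 ∧ reduction p t ≠ 0) : T.card ≤ 2 * d * p ^ m := by
  have hp : p.Prime := Fact.out
  have hlines := card_mul_card_sub_one_le_ncard (K := ZMod p)
    (Z := {u | eval u (map (Int.castRingHom (ZMod p)) F) = 0}) hinj (fun t ht => (hT t ht).2)
    fun t ht c => by
      rw [Set.mem_ofPred_eq, eval_smul_of_isHomogeneous (hF.map _), eval_reduction_map,
        (hT t ht).1, Int.cast_zero, mul_zero]
  have hzeros := ncard_eval_eq_zero_mul_card_le (IsNonsingularForm.ne_zero hgood)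
    (hF.map (Int.castRingHom (ZMod p))).totalDegree_le
  rw [Nat.card_zmod] at hlines hzeros
  have hp_le : p ≤ 2 * (p - 1) := by have := hp.two_le; lia
  refine Nat.le_of_mul_le_mul_right (c := p ^ 2) ?_ (pow_pos hp.pos 2)
  calc T.card * p ^ 2 ≤ T.card * (p * (2 * (p - 1))) := by rw [sq]; gcongr
    _ = 2 * (T.card * (p - 1) * p) := by ring
    _ ≤ 2 * (d * p ^ (m + 2)) :=
        Nat.mul_le_mul_left 2 ((Nat.mul_le_mul_right p hlines).trans hzeros)
    _ = 2 * d * p ^ m * p ^ 2 := by ring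

/- A vector of the box that is non-zero modulo `p` lies in at most one of the tangent lattices. -/
lemma sum_card_boxPoints_inf_tangentLattice_le [Fact p.Prime] (hF : F.IsHomogeneous d)
    (hd : 2 ≤ d) (hm : 1 ≤ m) (hgood : HasGoodReduction F p) (hQ : 0 < Q)
    (hL : L.index = Q ^ (m + 2)) (hcop : p.Coprime Q) {T : Finset (Fin (m + 2) → ℤ)}
    (hinj : Set.InjOn (reductionLine p) (T : Set (Fin (m + 2) → ℤ)))
    (hT : ∀ t ∈ T, eval t F = 0) :
    ∑ t ∈ T, (boxPoints (L ⊓ tangentLattice F p t) (Q * p)).card ≤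
      T.card * (3 ^ (m + 2) * (boxPoints L Q).card) +
        p ^ m * ((2 * m + 7) ^ (m + 2) * p ^ 2 + 3 ^ (m + 2) * d * (boxPoints L Q).card) := by
  classical
  have hp : p.Prime := Fact.out
  let A (t : Fin (m + 2) → ℤ) := boxPoints (L ⊓ tangentLattice F p t) (Q * p)
  have hA (t) : A t ⊆ boxPoints L (Q * p) := boxPoints_subset_boxPoints inf_le_left le_rfl
  have hline {t y} (hy : y ∈ A t) : y ∈ lineLattice p t := (mem_boxPoints.1 hy).2.2.2
  have hzero (t) : {y ∈ A t | reduction p y = 0}.card ≤ 3 ^ (m + 2) * (boxPoints L Q).card := by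
    simpa using card_le_of_forall_reduction_mem (Z := {0}) hp.pos hQ
      (by rw [hL]; exact hcop.pow_right _) ((Finset.filter_subset _ _).trans (hA t))
      fun y hy => by simpa using (Finset.mem_filter.1 hy).2
  have hdisj : (T : Set (Fin (m + 2) → ℤ)).PairwiseDisjoint
      fun t => {y ∈ A t | reduction p y ≠ 0} := fun t ht s hs hts =>
    Finset.disjoint_left.2 fun y hyt hys => by
      rw [Finset.mem_filter] at hyt hys
      exact hts <| hinj ht hs <|
        (reductionLine_eq_of_mem_lineLattice hyt.2 (hline hyt.1)).symm.trans
          (reductionLine_eq_of_mem_lineLattice hys.2 (hline hys.1))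
  calc ∑ t ∈ T, (A t).card
      = ∑ t ∈ T, {y ∈ A t | reduction p y = 0}.card +
          (T.biUnion fun t => {y ∈ A t | reduction p y ≠ 0}).card := by
        rw [Finset.card_biUnion hdisj, ← Finset.sum_add_distrib]
        exact Finset.sum_congr rfl fun t _ => (Finset.card_filter_add_card_filter_not _).symm
    _ ≤ _ := by
        refine Nat.add_le_add (Finset.sum_le_card_nsmul _ _ _ fun t _ => hzero t)
          (card_le_of_forall_eval_reduction_eq_zero hF hd hm hgood hQ hL hcop ?_ ?_)
        · exact Finset.biUnion_subset.2 fun t _ => (Finset.filter_subset _ _).trans (hA t)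
        · intro y hy
          obtain ⟨t, ht, hyt⟩ := Finset.mem_biUnion.1 hy
          exact eval_reduction_eq_zero_of_mem_lineLattice hF (hT t ht)
            (hline (Finset.mem_filter.1 hyt).1)

/-- The factor lost at each prime of the descent. -/
def descentConstant (d m : ℕ) : ℕ := (2 * m + 7) ^ (m + 2) + 3 ^ (m + 2) * (3 * d) + 2 * d

lemma sum_card_boxPoints_inf_tangentLattice_add_le [Fact p.Prime] (hF : F.IsHomogeneous d)
    (hd : 2 ≤ d) (hm : 1 ≤ m) (hgood : HasGoodReduction F p) (hpP : p ≤ P) (hQ : 0 < Q)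
    (hL : L.index = Q ^ (m + 2)) (hcop : p.Coprime Q) {T : Finset (Fin (m + 2) → ℤ)}
    (hinj : Set.InjOn (reductionLine p) (T : Set (Fin (m + 2) → ℤ)))
    (hT : ∀ t ∈ T, eval t F = 0 ∧ reduction p t ≠ 0) (k : ℕ) :
    ∑ t ∈ T, ((boxPoints (L ⊓ tangentLattice F p t) (Q * p)).card + k * P ^ 2) ≤
      descentConstant d m * p ^ m * ((boxPoints L Q).card + (k + 1) * P ^ 2) := by
  have hsum := sum_card_boxPoints_inf_tangentLattice_le hF hd hm hgood hQ hL hcop hinj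
    fun t ht => (hT t ht).1
  have hcard := card_le_of_injOn_reductionLine hF hgood hinj hT
  set f := (boxPoints L Q).card
  set a := (2 * m + 7) ^ (m + 2)
  set b := 3 ^ (m + 2)
  calc ∑ t ∈ T, ((boxPoints (L ⊓ tangentLattice F p t) (Q * p)).card + k * P ^ 2)
      ≤ (T.card * (b * f) + p ^ m * (a * p ^ 2 + b * d * f)) + T.card * (k * P ^ 2) := by
        rw [Finset.sum_add_distrib, Finset.sum_const, smul_eq_mul]
        gcongr
    _ ≤ (2 * d * p ^ m * (b * f) + p ^ m * (a * P ^ 2 + b * d * f)) +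
          2 * d * p ^ m * (k * P ^ 2) := by gcongr
    _ = p ^ m * (b * (3 * d) * f + a * P ^ 2 + 2 * d * (k * P ^ 2)) := by ring
    _ ≤ p ^ m * ((a + b * (3 * d) + 2 * d) * (f + (k + 1) * P ^ 2)) := by
        refine Nat.mul_le_mul_left _ (Nat.le.intro (k := (a + 2 * d) * f +
          (b * (3 * d) + 2 * d) * P ^ 2 + (a + b * (3 * d)) * (k * P ^ 2)) ?_)
        ring
    _ = descentConstant d m * p ^ m * (f + (k + 1) * P ^ 2) := by
        rw [descentConstant]
        ring

lemma index_inf_tangentLattice [Fact p.Prime] (hF : F.IsHomogeneous d)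
    (hgood : HasGoodReduction F p) (hQ : 0 < Q) (hL : L.index = Q ^ (m + 2)) (hcop : p.Coprime Q)
    {t : Fin (m + 2) → ℤ} (ht : eval t F = 0) (ht₀ : reduction p t ≠ 0) :
    (L ⊓ tangentLattice F p t).index = (Q * p) ^ (m + 2) := by
  have hindex := index_tangentLattice hF ht ht₀ (hgood.reduction_formGradient_ne_zero ht₀)
  rw [Fintype.card_fin] at hindex
  have hp : p.Prime := Fact.out
  rw [index_inf_eq_mul_of_coprime, hL, hindex, mul_pow]
  · rw [hL]; exact pow_ne_zero _ hQ.ne'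
  · rw [hindex]; exact pow_ne_zero _ hp.ne_zero
  · rw [hL, hindex]; exact hcop.symm.pow _ _

lemma exists_transversal_reductionLine (p : ℕ) (S : Finset (Fin (m + 2) → ℤ)) :
    ∃ T ⊆ S, Set.InjOn (reductionLine p) (T : Set (Fin (m + 2) → ℤ)) ∧
      ∀ x ∈ S, ∃ t ∈ T, x ∈ lineLattice p t := by
  classical
  obtain ⟨T, hTS, hinj, himage⟩ := Finset.exists_subset_injOn_image_eq_of_surjOn S
    (S.image (reductionLine p)) (f := reductionLine p) (by
      rw [Finset.coe_image]; exact Set.surjOn_image _ _)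
  refine ⟨T, hTS, hinj, fun x hx => ?_⟩
  obtain ⟨t, ht, htx⟩ := Finset.mem_image.1 (himage ▸ Finset.mem_image_of_mem _ hx)
  refine ⟨t, ht, mem_lineLattice_iff_reduction_mem.2 ?_⟩
  rw [htx]
  exact Submodule.mem_span_singleton_self _

lemma card_le_of_hasGoodReduction (hF : F.IsHomogeneous d) (hd : 2 ≤ d) (hm : 1 ≤ m)
    {ps : Finset ℕ} (hps : ∀ p ∈ ps, p.Prime ∧ p ≤ P ∧ HasGoodReduction F p) (hQ : 0 < Q)
    (hL : L.index = Q ^ (m + 2)) (hcop : ∀ p ∈ ps, p.Coprime Q)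
    {S : Finset (Fin (m + 2) → ℤ)} (hS : S ⊆ boxPoints L (Q * ∏ p ∈ ps, p))
    (hSF : ∀ x ∈ S, eval x F = 0) (hSp : ∀ x ∈ S, ∀ p ∈ ps, reduction p x ≠ 0) :
    S.card ≤ descentConstant d m ^ ps.card * (∏ p ∈ ps, p) ^ m *
      ((boxPoints L Q).card + ps.card * P ^ 2) := by
  classical
  induction ps using Finset.induction_on generalizing L Q S with
  | empty => simpa using Finset.card_le_card hS
  | insert p ps hp ih =>
    simp only [Finset.forall_mem_insert] at hps hcop hSp
    obtain ⟨⟨hprime, hpP, hgood⟩, hps⟩ := hps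
    have : Fact p.Prime := ⟨hprime⟩
    rw [Finset.prod_insert hp, ← mul_assoc] at hS
    obtain ⟨T, hTS, hinj, hcover⟩ := exists_transversal_reductionLine p S
    let child (t : Fin (m + 2) → ℤ) := {x ∈ S | x ∈ tangentLattice F p t}
    have hchild (t) (ht : t ∈ T) : (child t).card ≤
        descentConstant d m ^ ps.card * (∏ p ∈ ps, p) ^ m *
          ((boxPoints (L ⊓ tangentLattice F p t) (Q * p)).card + ps.card * P ^ 2) := by
      refine ih hps (Nat.mul_pos hQ hprime.pos) (index_inf_tangentLattice hF hgood hQ hL hcop.1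
        (hSF t (hTS ht)) (hSp t (hTS ht)).1) (fun q hq => ?_) (fun x hx => ?_)
        (fun x hx => hSF x (Finset.mem_filter.1 hx).1)
        (fun x hx => (hSp x (Finset.mem_filter.1 hx).1).2)
      · have hqp : q ≠ p := by rintro rfl; exact hp hq
        exact (hcop.2 q hq).mul_right ((Nat.coprime_primes (hps q hq).1 hprime).2 hqp)
      · obtain ⟨hxS, hx⟩ := Finset.mem_filter.1 hx
        obtain ⟨hbox, hxL⟩ := mem_boxPoints.1 (hS hxS)
        exact mem_boxPoints.2 ⟨hbox, hxL, hx⟩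
    have hS_subset : S ⊆ T.biUnion child := fun x hx => by
      obtain ⟨t, ht, hxt⟩ := hcover x hx
      exact Finset.mem_biUnion.2 ⟨t, ht, Finset.mem_filter.2 ⟨hx,
        mem_tangentLattice_of_eval_eq_zero hF (hSF t (hTS ht)) (hSF x hx) (hSp x hx).1 hxt⟩⟩
    have hsum := sum_card_boxPoints_inf_tangentLattice_add_le hF hd hm hgood hpP hQ hL hcop.1 hinj
      (fun t ht => ⟨hSF t (hTS ht), (hSp t (hTS ht)).1⟩) ps.card
    calc S.card ≤ ∑ t ∈ T, (child t).card :=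
          (Finset.card_le_card hS_subset).trans Finset.card_biUnion_le
      _ ≤ descentConstant d m ^ ps.card * (∏ p ∈ ps, p) ^ m * (descentConstant d m * p ^ m *
            ((boxPoints L Q).card + (ps.card + 1) * P ^ 2)) := by
          refine (Finset.sum_le_sum hchild).trans ?_
          rw [← Finset.mul_sum]
          exact Nat.mul_le_mul_left _ hsum
      _ = _ := by
          rw [Finset.card_insert_of_notMem hp, Finset.prod_insert hp]
          ring

end Descent

section GenericForms

open MvPolynomial

variable {σ R S : Type*} [Fintype σ] [DecidableEq σ] [CommRing R] [CommRing S] {d : ℕ}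

variable (σ d) in
/-- The exponent vectors of the monomials of degree `d` in the variables `σ`; they index the
coefficients of forms of degree `d`. -/
abbrev FormExponent : Type _ := Finset.finsuppAntidiag (Finset.univ : Finset σ) d

lemma mem_finsuppAntidiag_univ {s : σ →₀ ℕ} :
    s ∈ Finset.finsuppAntidiag (Finset.univ : Finset σ) d ↔ s.degree = d := by
  simp [Finset.mem_finsuppAntidiag, Finsupp.degree_eq_sum]

lemma FormExponent.degree (e : FormExponent σ d) : e.1.degree = d :=
  mem_finsuppAntidiag_univ.1 e.2

/-- The form of degree `d` with coefficient vector `c`. -/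
def formOfCoeffs (c : FormExponent σ d → R) : MvPolynomial σ R := ∑ e, monomial e.1 (c e)

lemma coeff_formOfCoeffs (c : FormExponent σ d → R) (e : FormExponent σ d) :
    coeff e.1 (formOfCoeffs c) = c e := by
  simp [formOfCoeffs, coeff_sum, coeff_monomial]

lemma isHomogeneous_formOfCoeffs (c : FormExponent σ d → R) :
    (formOfCoeffs c).IsHomogeneous d :=
  IsHomogeneous.sum _ _ _ fun e _ => isHomogeneous_monomial _ e.degree

lemma formOfCoeffs_coeff {F : MvPolynomial σ R} (hF : F.IsHomogeneous d) :
    formOfCoeffs (fun e : FormExponent σ d => coeff e.1 F) = F := by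
  ext s
  by_cases hs : s.degree = d
  · exact coeff_formOfCoeffs _ ⟨s, mem_finsuppAntidiag_univ.2 hs⟩
  · rw [hF.coeff_eq_zero hs, (isHomogeneous_formOfCoeffs _).coeff_eq_zero hs]

lemma map_formOfCoeffs (f : R →+* S) (c : FormExponent σ d → R) :
    map f (formOfCoeffs c) = formOfCoeffs fun e => f (c e) := by
  simp [formOfCoeffs, map_monomial]

lemma eval_formOfCoeffs (c : FormExponent σ d → R) (x : σ → R) :
    eval x (formOfCoeffs c) = ∑ e, c e * ∏ i, x i ^ e.1 i := by
  simp [formOfCoeffs, eval_monomial, Finsupp.prod_fintype]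

end GenericForms

section Elimination

open MvPolynomial

variable {σ R S : Type*} [CommRing R] [CommRing S]

/-- The ideal of inertia forms of `I`: the constants which, times suitable powers of the variables,
belong to `I`. For the Jacobian ideal of the generic form of degree `d` these are, up to radical,
the multiples of the discriminant. -/
def inertiaIdeal (I : Ideal (MvPolynomial σ R)) : Ideal R where
  carrier := {r | ∀ j, ∃ D, C r * X j ^ D ∈ I}
  zero_mem' := fun j => ⟨0, by simp⟩
  add_mem' := by
    intro a b ha hb j
    obtain ⟨D, hD⟩ := ha j
    obtain ⟨E, hE⟩ := hb j
    refine ⟨D + E, ?_⟩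
    have hsplit : C (a + b) * X j ^ (D + E) =
        X j ^ E * (C a * X j ^ D) + X j ^ D * (C b * X j ^ E) := by
      rw [C_add, pow_add]; ring
    rw [hsplit]
    exact I.add_mem (I.mul_mem_left _ hD) (I.mul_mem_left _ hE)
  smul_mem' := by
    intro c a ha j
    obtain ⟨D, hD⟩ := ha j
    refine ⟨D, ?_⟩
    rw [smul_eq_mul, C_mul, mul_assoc]
    exact I.mul_mem_left _ hD

lemma map_mem_inertiaIdeal (f : R →+* S) {I : Ideal (MvPolynomial σ R)} {r : R}
    (hr : r ∈ inertiaIdeal I) : f r ∈ inertiaIdeal (I.map (map f)) := by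
  intro j
  obtain ⟨D, hD⟩ := hr j
  exact ⟨D, by simpa using Ideal.mem_map_of_mem (map f) hD⟩

lemma isNonsingularForm_of_isUnit_mem_inertiaIdeal {F : MvPolynomial σ R} {r : R} (hu : IsUnit r)
    (hr : r ∈ inertiaIdeal (jacobianIdeal F)) : IsNonsingularForm F := by
  intro j
  obtain ⟨D, hD⟩ := hr j
  exact ⟨D, (Ideal.unit_mul_mem_iff_mem _ (hu.map C)).1 hD⟩

lemma hasGoodReduction_of_not_dvd_mem_inertiaIdeal {F : MvPolynomial σ ℤ} {p : ℕ} (hp : p.Prime)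
    {r : ℤ} (hr : r ∈ inertiaIdeal (jacobianIdeal F)) (hpr : ¬ (p : ℤ) ∣ r) :
    HasGoodReduction F p := by
  have : Fact p.Prime := ⟨hp⟩
  have hunit : IsUnit (Int.castRingHom (ZMod p) r) :=
    isUnit_iff_ne_zero.2 fun h => hpr ((ZMod.intCast_zmod_eq_zero_iff_dvd r p).1 h)
  refine isNonsingularForm_of_isUnit_mem_inertiaIdeal hunit ?_
  rw [jacobianIdeal_map]
  exact map_mem_inertiaIdeal _ hr

lemma det_smul_mem {ι M : Type*} [Fintype ι] [DecidableEq ι] [AddCommGroup M] [Module R M]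
    {N : Submodule R M} {A : Matrix ι ι R} {v : ι → M} (h : ∀ i, ∑ j, A i j • v j ∈ N) (k : ι) :
    A.det • v k ∈ N := by
  have hadj : A.det • v k = ∑ i, A.adjugate k i • ∑ j, A i j • v j := by
    calc A.det • v k = ∑ j, (A.adjugate * A) k j • v j := by
          simp [Matrix.adjugate_mul, Matrix.one_apply]
      _ = ∑ i, A.adjugate k i • ∑ j, A i j • v j := by
          simp only [Matrix.mul_apply, Finset.sum_smul, Finset.smul_sum, mul_smul]
          exact Finset.sum_comm
  rw [hadj]
  exact N.sum_mem fun i _ => N.smul_mem _ (h i)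

attribute [local instance] MvPolynomial.gradedAlgebra

lemma isHomogeneous_jacobianIdeal {d : ℕ} {F : MvPolynomial σ R} (hF : F.IsHomogeneous d) :
    (jacobianIdeal F).IsHomogeneous (homogeneousSubmodule σ R) := by
  refine Ideal.homogeneous_span _ _ ?_
  rintro _ ⟨i, rfl⟩
  exact ⟨d - 1, hF.pderiv⟩

lemma exists_forall_monomial_mem_of_mem_inertiaIdeal [Fintype σ] [DecidableEq σ]
    {I : Ideal (MvPolynomial σ R)} {r : R} (hr : r ∈ inertiaIdeal I) :
    ∃ N, ∀ β : FormExponent σ N, monomial β.1 r ∈ I := by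
  choose D hD using hr
  refine ⟨∑ j, D j + 1, fun β => ?_⟩
  obtain ⟨j, hj⟩ : ∃ j, D j ≤ β.1 j := by
    by_contra! hlt
    have hle : ∑ j, β.1 j ≤ ∑ j, D j := Finset.sum_le_sum fun j _ => (hlt j).le
    have hsum : ∑ j, β.1 j = ∑ j, D j + 1 := by rw [← Finsupp.degree_eq_sum, β.degree]
    omega
  have hfactor : monomial β.1 r =
      monomial (β.1 - Finsupp.single j (D j)) 1 * (C r * X j ^ D j) := by
    rw [X_pow_eq_monomial, C_mul_monomial, monomial_mul, mul_one, one_mul,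
      tsub_add_cancel_of_le (Finsupp.single_le_iff.2 hj)]
  rw [hfactor]
  exact I.mul_mem_left _ (hD j)

lemma formOfCoeffs_coeff_mem [Fintype σ] [DecidableEq σ] {I : Ideal (MvPolynomial σ R)}
    (hI : I.IsHomogeneous (homogeneousSubmodule σ R)) {Q : MvPolynomial σ R} (hQ : Q ∈ I) (N : ℕ) :
    formOfCoeffs (fun e : FormExponent σ N => coeff e.1 Q) ∈ I := by
  have hcomp : formOfCoeffs (fun e : FormExponent σ N => coeff e.1 Q) =
      homogeneousComponent N Q := by
    rw [← formOfCoeffs_coeff (homogeneousComponent_isHomogeneous N Q)]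
    simp [coeff_homogeneousComponent, FormExponent.degree]
  exact hcomp ▸ (mem_iff_homogeneousComponent_mem hI Q).1 hQ N

lemma exists_mem_inertiaIdeal_map_ne_zero [Finite σ] [IsDomain S] {f : R →+* S}
    (hf : Function.Surjective f) {I : Ideal (MvPolynomial σ R)}
    (hI : I.IsHomogeneous (homogeneousSubmodule σ R)) {s : S} (hs : s ≠ 0)
    (hsI : s ∈ inertiaIdeal (I.map (map f))) : ∃ δ ∈ inertiaIdeal I, f δ ≠ 0 := by
  classical
  have := Fintype.ofFinite σ
  obtain ⟨N, hN⟩ := exists_forall_monomial_mem_of_mem_inertiaIdeal hsI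
  have hlift : ∀ β : FormExponent σ N, ∃ Q ∈ I, map f Q = monomial β.1 s := fun β =>
    (Ideal.mem_map_iff_of_surjective _ (map_surjective f hf)).1 (hN β)
  choose Q hQI hQ using hlift
  set A : Matrix (FormExponent σ N) (FormExponent σ N) R := fun β γ => coeff γ.1 (Q β) with hA
  have hdet : f A.det ≠ 0 := by
    have hdiag : f.mapMatrix A = Matrix.diagonal fun _ => s := by
      ext β γ
      rw [RingHom.mapMatrix_apply, Matrix.map_apply, hA, ← coeff_map, hQ, coeff_monomial,
        Matrix.diagonal_apply]
      simp only [Subtype.coe_inj]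
    rw [RingHom.map_det, hdiag, Matrix.det_diagonal]
    exact Finset.prod_ne_zero_iff.2 fun _ _ => hs
  refine ⟨A.det, fun j => ⟨N, ?_⟩, hdet⟩
  have hrows : ∀ β, ∑ γ, A β γ • monomial γ.1 (1 : R) ∈ I.restrictScalars R := by
    intro β
    simpa [hA, formOfCoeffs, smul_monomial] using formOfCoeffs_coeff_mem hI (hQI β) N
  have hXj := det_smul_mem hrows ⟨Finsupp.single j N, mem_finsuppAntidiag_univ.2 (by simp)⟩
  rwa [← X_pow_eq_monomial, smul_eq_C_mul] at hXj

variable (σ) in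
/-- The inertia forms of the generic form of degree `d` specialise to those of every form of
degree `d`, and by Noetherianity finitely many of them suffice: this is what makes the bound on the
primes of bad reduction uniform. -/
lemma exists_finset_inertiaForms [Fintype σ] [DecidableEq σ] (d : ℕ) :
    ∃ T : Finset (MvPolynomial (FormExponent σ d) ℤ),
      (∀ r ∈ T, ∀ c, eval c r ∈ inertiaIdeal (jacobianIdeal (formOfCoeffs c))) ∧
        ∀ c, inertiaIdeal (jacobianIdeal (formOfCoeffs c)) ≠ ⊥ → ∃ r ∈ T, eval c r ≠ 0 := by
  set G : MvPolynomial σ (MvPolynomial (FormExponent σ d) ℤ) := formOfCoeffs X with hG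
  have hGc : ∀ c : FormExponent σ d → ℤ,
      jacobianIdeal (formOfCoeffs c) = (jacobianIdeal G).map (map (eval c)) := by
    intro c
    rw [← jacobianIdeal_map, hG, map_formOfCoeffs]
    simp only [eval_X]
  obtain ⟨T, hT⟩ := IsNoetherian.noetherian (inertiaIdeal (jacobianIdeal G))
  refine ⟨T, fun r hr c => ?_, fun c hc => ?_⟩
  · rw [hGc c]
    exact map_mem_inertiaIdeal _ (hT ▸ Ideal.subset_span hr)
  · obtain ⟨s, hs, hs0⟩ := Submodule.exists_mem_ne_zero_of_ne_bot hc
    rw [hGc c] at hs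
    obtain ⟨δ, hδ, hδ0⟩ := exists_mem_inertiaIdeal_map_ne_zero
      (f := eval c) (fun a => ⟨C a, eval_C a⟩)
      (isHomogeneous_jacobianIdeal (isHomogeneous_formOfCoeffs X)) hs0 hs
    by_contra! hzero
    have hker : inertiaIdeal (jacobianIdeal G) ≤ RingHom.ker (eval c) :=
      hT ▸ Ideal.span_le.2 hzero
    exact hδ0 (hker hδ)

end Elimination

section Nullstellensatz

open MvPolynomial

attribute [local instance] MvPolynomial.algebraMvPolynomial

lemma exists_C_mul_mem_of_mem_map_rat {σ : Type*} {I : Ideal (MvPolynomial σ ℤ)}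
    {g : MvPolynomial σ ℤ} (hg : map (algebraMap ℤ ℚ) g ∈ I.map (map (algebraMap ℤ ℚ))) :
    ∃ s : ℤ, s ≠ 0 ∧ C s * g ∈ I := by
  obtain ⟨⟨a, _, s, hs, rfl⟩, ha⟩ := (IsLocalization.mem_map_algebraMap_iff
    ((nonZeroDivisors ℤ).map (C (σ := σ))) (MvPolynomial σ ℚ)).1 hg
  refine ⟨s, nonZeroDivisors.ne_zero hs, ?_⟩
  have hinj : Function.Injective (map (algebraMap ℤ ℚ) : MvPolynomial σ ℤ → MvPolynomial σ ℚ) :=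
    map_injective _ (algebraMap ℤ ℚ).injective_int
  have heq : g * C s = (a : MvPolynomial σ ℤ) := hinj ((map_mul _ _ _).trans ha)
  rw [mul_comm, heq]
  exact a.2

lemma NonsingularZ.isNonsingularForm_map {n : ℕ} {F : MvPolynomial (Fin (n + 1)) ℤ}
    (hF : NonsingularZ F) : IsNonsingularForm (map (algebraMap ℤ ℚ) F) := by
  intro j
  rw [← vanishingIdeal_zeroLocus_eq_radical (K := KK)]
  intro z hz
  have hz0 : z = 0 := hF z fun i => by
    rw [← aeval_map_algebraMap (A := ℚ), ← pderiv_map]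
    exact hz _ (Ideal.subset_span ⟨i, rfl⟩)
  simp [hz0]

lemma NonsingularZ.inertiaIdeal_ne_bot {n : ℕ} {F : MvPolynomial (Fin (n + 1)) ℤ}
    (hF : NonsingularZ F) : inertiaIdeal (jacobianIdeal F) ≠ ⊥ := by
  have hvar : ∀ j, ∃ (D : ℕ) (s : ℤ), s ≠ 0 ∧ C s * X j ^ D ∈ jacobianIdeal F := by
    intro j
    obtain ⟨D, hD⟩ := hF.isNonsingularForm_map j
    rw [jacobianIdeal_map, ← map_X (algebraMap ℤ ℚ), ← map_pow] at hD
    exact ⟨D, exists_C_mul_mem_of_mem_map_rat hD⟩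
  choose D s hs0 hs using hvar
  refine (Submodule.ne_bot_iff _).2 ⟨∏ j, s j, fun j => ⟨D j, ?_⟩,
    Finset.prod_ne_zero_iff.2 fun j _ => hs0 j⟩
  obtain ⟨t, ht⟩ := Finset.dvd_prod_of_mem s (Finset.mem_univ j)
  rw [ht, mul_comm (s j), C_mul, mul_assoc]
  exact Ideal.mul_mem_left _ _ (hs j)

end Nullstellensatz

section SmallSolutions

section Pivot

variable {R V : Type*} [CommRing R] [AddCommGroup V] [Module R V]

/-- Fraction-free elimination with pivot `v₀`: the linear map `v ↦ φ v₀ • v - φ v • v₀`, which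
sends `V` into the kernel of `φ` and kills `v₀`. -/
def pivotMap (φ : V →ₗ[R] R) (v₀ : V) : V →ₗ[R] V :=
  φ v₀ • LinearMap.id - φ.smulRight v₀

lemma pivotMap_apply (φ : V →ₗ[R] R) (v₀ v : V) : pivotMap φ v₀ v = φ v₀ • v - φ v • v₀ := rfl

lemma apply_pivotMap (φ : V →ₗ[R] R) (v₀ v : V) : φ (pivotMap φ v₀ v) = 0 := by
  simp [pivotMap_apply, mul_comm]

lemma smul_mem_span_image_pivotMap [DecidableEq V] {φ : V →ₗ[R] R} {s : Finset V} (v₀ : V) {w : V}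
    (hw : w ∈ Submodule.span R (s : Set V)) (hφw : φ w = 0) :
    φ v₀ • w ∈ Submodule.span R ((s.erase v₀).image (pivotMap φ v₀) : Set V) := by
  have hmap : (Submodule.span R (s : Set V)).map (pivotMap φ v₀) ≤
      Submodule.span R ((s.erase v₀).image (pivotMap φ v₀) : Set V) := by
    rw [Submodule.map_span, Submodule.span_le]
    rintro _ ⟨v, hv, rfl⟩
    by_cases hvv₀ : v = v₀
    · rw [hvv₀, pivotMap_apply, sub_self]
      exact Submodule.zero_mem _
    · exact Submodule.subset_span (Finset.mem_image_of_mem _ (Finset.mem_erase.2 ⟨hvv₀, hv⟩))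
  simpa [pivotMap_apply, hφw] using hmap (Submodule.mem_map_of_mem hw)

end Pivot

variable {M : Type*} [Fintype M]

lemma abs_dotProduct_le {a v : M → ℤ} {H b : ℕ} (ha : ∀ e, |a e| ≤ H) (hv : ∀ e, |v e| ≤ b) :
    |a ⬝ᵥ v| ≤ (Fintype.card M * (H * b) : ℕ) := by
  calc |a ⬝ᵥ v| ≤ ∑ e, |a e * v e| := Finset.abs_sum_le_sum_abs _ _
    _ ≤ ∑ _e : M, (H * b : ℤ) := Finset.sum_le_sum fun e _ => by
        rw [abs_mul]
        exact mul_le_mul (ha e) (hv e) (abs_nonneg _) (by positivity)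
    _ = (Fintype.card M * (H * b) : ℕ) := by simp

lemma abs_pivotMap_le {a v v₀ : M → ℤ} {H b : ℕ} (ha : ∀ e, |a e| ≤ H) (hv : ∀ e, |v e| ≤ b)
    (hv₀ : ∀ e, |v₀ e| ≤ b) (e : M) :
    |pivotMap (dotProductBilin ℤ ℤ a) v₀ v e| ≤ (2 * Fintype.card M * H * (b * b) : ℕ) := by
  have hprod : ∀ {u w : M → ℤ}, (∀ e, |u e| ≤ b) → (∀ e, |w e| ≤ b) →
      |(a ⬝ᵥ u) * w e| ≤ Fintype.card M * (H * b) * b := by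
    intro u w hu hw
    rw [abs_mul]
    exact mul_le_mul (mod_cast abs_dotProduct_le ha hu) (hw e) (abs_nonneg _) (by positivity)
  calc |pivotMap (dotProductBilin ℤ ℤ a) v₀ v e|
      = |(a ⬝ᵥ v₀) * v e - (a ⬝ᵥ v) * v₀ e| := rfl
    _ ≤ |(a ⬝ᵥ v₀) * v e| + |(a ⬝ᵥ v) * v₀ e| := abs_sub _ _
    _ ≤ _ := add_le_add (hprod hv₀ hv) (hprod hv hv₀)
    _ = (2 * Fintype.card M * H * (b * b) : ℕ) := by push_cast; ring

/-- The vectors in `s` solve the linear system with coefficient vectors `E` and generate all its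
integral solutions up to denominators. -/
def GeneratesSolutions (E s : Finset (M → ℤ)) : Prop :=
  (∀ v ∈ s, ∀ a ∈ E, a ⬝ᵥ v = 0) ∧ ∀ c : M → ℤ, (∀ a ∈ E, a ⬝ᵥ c = 0) →
    ∃ N : ℤ, N ≠ 0 ∧ N • c ∈ Submodule.span ℤ (s : Set (M → ℤ))

lemma generatesSolutions_empty [DecidableEq M] :
    GeneratesSolutions ∅ (Finset.univ.image fun j : M => (Pi.single j 1 : M → ℤ)) := by
  refine ⟨by simp, fun c _ => ⟨1, one_ne_zero, ?_⟩⟩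
  rw [pi_eq_sum_univ' (1 • c)]
  exact Submodule.sum_mem _ fun j _ => Submodule.smul_mem _ _ (Submodule.subset_span (by simp))

lemma GeneratesSolutions.insert_of_forall {E s : Finset (M → ℤ)} (h : GeneratesSolutions E s)
    {a : M → ℤ} (ha : ∀ v ∈ s, a ⬝ᵥ v = 0) : GeneratesSolutions (insert a E) s :=
  ⟨fun v hv => (Finset.forall_mem_insert ..).2 ⟨ha v hv, h.1 v hv⟩,
    fun c hc => h.2 c ((Finset.forall_mem_insert ..).1 hc).2⟩

lemma GeneratesSolutions.insert_of_pivot {E s : Finset (M → ℤ)} (h : GeneratesSolutions E s)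
    {a v₀ : M → ℤ} (hv₀ : v₀ ∈ s) (hpivot : a ⬝ᵥ v₀ ≠ 0) :
    GeneratesSolutions (insert a E)
      ((s.erase v₀).image (pivotMap (dotProductBilin ℤ ℤ a) v₀)) := by
  refine ⟨?_, fun c hc => ?_⟩
  · refine Finset.forall_mem_image.2 fun v hv => (Finset.forall_mem_insert ..).2
      ⟨apply_pivotMap (dotProductBilin ℤ ℤ a) v₀ v, fun b hb => ?_⟩
    rw [pivotMap_apply, dotProduct_sub, dotProduct_smul, dotProduct_smul,
      h.1 v (Finset.mem_of_mem_erase hv) b hb, h.1 v₀ hv₀ b hb, smul_zero, smul_zero, sub_zero]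
  · obtain ⟨hca, hcE⟩ := (Finset.forall_mem_insert ..).1 hc
    obtain ⟨N, hN, hNc⟩ := h.2 c hcE
    have hNca : dotProductBilin ℤ ℤ a (N • c) = 0 := by
      rw [map_smul, dotProductBilin_apply_apply, hca, smul_zero]
    refine ⟨a ⬝ᵥ v₀ * N, mul_ne_zero hpivot hN, ?_⟩
    rw [mul_smul]
    exact smul_mem_span_image_pivotMap v₀ hNc hNca

lemma exists_small_generatesSolutions {H : ℕ} (E : Finset (M → ℤ))
    (hE : ∀ a ∈ E, ∀ e, |a e| ≤ H) :
    ∃ (k : ℕ) (s : Finset (M → ℤ)), s.card + k ≤ Fintype.card M ∧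
      (∀ v ∈ s, ∀ e, |v e| ≤ ((2 * Fintype.card M * H) ^ (2 ^ k - 1) : ℕ)) ∧
      GeneratesSolutions E s := by
  classical
  induction E using Finset.induction_on with
  | empty =>
    refine ⟨0, _, Finset.card_image_le, Finset.forall_mem_image.2 fun j _ e => ?_,
      generatesSolutions_empty⟩
    by_cases hje : e = j <;> simp [hje]
  | insert a E _ ih =>
    obtain ⟨k, s, hcard, hbound, hs⟩ := ih fun a ha => hE a (Finset.mem_insert_of_mem ha)
    by_cases hall : ∀ v ∈ s, a ⬝ᵥ v = 0
    · exact ⟨k, s, hcard, hbound, hs.insert_of_forall hall⟩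
    push Not at hall
    obtain ⟨v₀, hv₀, hpivot⟩ := hall
    refine ⟨k + 1, _, ?_, Finset.forall_mem_image.2 fun v hv e => ?_,
      hs.insert_of_pivot hv₀ hpivot⟩
    · have himage := Finset.card_image_le (s := s.erase v₀)
        (f := pivotMap (dotProductBilin ℤ ℤ a) v₀)
      have herase := Finset.card_erase_add_one hv₀
      omega
    · have hpow : (2 * Fintype.card M * H) ^ (2 ^ (k + 1) - 1) = 2 * Fintype.card M * H *
          ((2 * Fintype.card M * H) ^ (2 ^ k - 1) * (2 * Fintype.card M * H) ^ (2 ^ k - 1)) := by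
        rw [← pow_add, ← pow_succ']
        congr 1
        have := Nat.one_le_two_pow (n := k)
        omega
      rw [hpow]
      exact abs_pivotMap_le (hE a (Finset.mem_insert_self _ _))
        (hbound v (Finset.mem_of_mem_erase hv)) (hbound v₀ hv₀) e

end SmallSolutions

section SmallValues

open MvPolynomial

variable {M : Type*}

lemma totalDegree_aeval_le {τ R : Type*} [CommRing R] {l : M → MvPolynomial τ R}
    (hl : ∀ e, (l e).totalDegree ≤ 1) (r : MvPolynomial M R) :
    (aeval l r).totalDegree ≤ r.totalDegree := by
  rw [aeval_def, eval₂_eq]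
  refine totalDegree_finsetSum_le fun d hd => ?_
  calc (algebraMap R _ (coeff d r) * ∏ i ∈ d.support, l i ^ d i).totalDegree
      ≤ (C (coeff d r) : MvPolynomial τ R).totalDegree +
          (∏ i ∈ d.support, l i ^ d i).totalDegree := totalDegree_mul _ _
    _ ≤ 0 + ∑ i ∈ d.support, (l i ^ d i).totalDegree :=
        add_le_add (totalDegree_C _).le (totalDegree_finsetProd _ _)
    _ ≤ ∑ i ∈ d.support, d i := by
        rw [zero_add]
        refine Finset.sum_le_sum fun i _ => (totalDegree_pow _ _).trans ?_
        exact (Nat.mul_le_mul_left _ (hl i)).trans (mul_one _).le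
    _ ≤ r.totalDegree := le_totalDegree hd

lemma exists_eval_sum_smul_ne_zero {ι R : Type*} [Fintype ι] [CommRing R] [IsDomain R]
    {r : MvPolynomial M R}
    {v : ι → M → R} {t : ι → R} (ht : eval (∑ i, t i • v i) r ≠ 0)
    {T : Finset R} (hT : r.totalDegree < T.card) :
    ∃ x : ι → R, (∀ i, x i ∈ T) ∧ eval (∑ i, x i • v i) r ≠ 0 := by
  set ρ : MvPolynomial ι R := aeval (fun e => ∑ i, C (v i e) * X i) r
  have heval : ∀ x, eval x ρ = eval (∑ i, x i • v i) r := by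
    intro x
    rw [← coe_aeval_eq_eval, ← coe_aeval_eq_eval, RingHom.coe_coe, RingHom.coe_coe,
      ← AlgHom.comp_apply, comp_aeval]
    congr 2
    ext e
    simp [mul_comm]
  have hdegree : ρ.totalDegree ≤ r.totalDegree := totalDegree_aeval_le (fun e =>
    totalDegree_finsetSum_le fun i _ => (totalDegree_mul _ _).trans (by
      rw [totalDegree_C, totalDegree_X])) r
  by_contra! hzero
  refine ht ?_
  rw [← heval, eq_zero_of_eval_zero_at_prod_finset ρ (fun _ => T)
    (fun i => ((degreeOf_le_totalDegree ρ i).trans hdegree).trans_lt hT)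
    fun x hx => (heval x).trans (hzero x hx), map_zero]

lemma eval_intCast_map (r : MvPolynomial M ℤ) (c : M → ℤ) :
    eval (fun e => (c e : ℚ)) (map (Int.castRingHom ℚ) r) = (eval c r : ℤ) := by
  rw [eval_map]
  exact (eval₂_comp (Int.castRingHom ℚ) c r).symm

lemma abs_eval_le (r : MvPolynomial M ℤ) {c : M → ℤ} {x : ℕ} (hx : 1 ≤ x)
    (hc : ∀ e, |c e| ≤ x) :
    |eval c r| ≤ ((∑ d ∈ r.support, (coeff d r).natAbs) * x ^ r.totalDegree : ℕ) := by
  push_cast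
  rw [eval_eq, Finset.sum_mul]
  refine (Finset.abs_sum_le_sum_abs _ _).trans (Finset.sum_le_sum fun d hd => ?_)
  rw [abs_mul, Finset.abs_prod]
  refine mul_le_mul_of_nonneg_left ?_ (abs_nonneg _)
  calc ∏ i ∈ d.support, |c i ^ d i| ≤ ∏ i ∈ d.support, (x : ℤ) ^ d i :=
        Finset.prod_le_prod (fun i _ => abs_nonneg _) fun i _ => by
          rw [abs_pow]
          exact pow_le_pow_left₀ (abs_nonneg _) (hc i) _
    _ = (x : ℤ) ^ ∑ i ∈ d.support, d i := Finset.prod_pow_eq_pow_sum _ _ _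
    _ ≤ (x : ℤ) ^ r.totalDegree := pow_le_pow_right₀ (mod_cast hx) (le_totalDegree hd)

lemma exists_combination_eval_ne_zero {r : MvPolynomial M ℤ} {s : Finset (M → ℤ)} {c : M → ℤ}
    (hrc : eval c r ≠ 0) {N : ℤ} (hN : N ≠ 0) (hc : N • c ∈ Submodule.span ℤ (s : Set (M → ℤ))) :
    ∃ x : s → ℕ, (∀ v, x v ≤ r.totalDegree) ∧ eval (∑ v, x v • v.1) r ≠ 0 := by
  obtain ⟨t, ht⟩ := (Submodule.mem_span_finset' ..).1 hc
  have hcombination : (fun e => (c e : ℚ)) =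
      ∑ v : s, ((t v : ℚ) / N) • fun e => ((v.1 e : ℤ) : ℚ) := by
    ext e
    have hNq : (N : ℚ) ≠ 0 := mod_cast hN
    have hte : ∑ v, (t v : ℚ) * v.1 e = N * c e := by
      simpa using congrArg (Int.cast : ℤ → ℚ) (congrFun ht e)
    simp only [Finset.sum_apply, Pi.smul_apply, smul_eq_mul, div_mul_eq_mul_div,
      ← Finset.sum_div, hte]
    field_simp
  have hne : eval (fun e => (c e : ℚ)) (map (Int.castRingHom ℚ) r) ≠ 0 := by
    rw [eval_intCast_map]
    exact mod_cast hrc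
  rw [hcombination] at hne
  have hcard : (map (Int.castRingHom ℚ) r).totalDegree <
      ((Finset.range (r.totalDegree + 1)).map (Nat.castEmbedding (R := ℚ))).card := by
    rw [Finset.card_map, Finset.card_range, Nat.lt_succ_iff]
    exact Finset.sup_mono (support_map_subset _ _)
  obtain ⟨x, hx, hxr⟩ := exists_eval_sum_smul_ne_zero hne hcard
  simp only [Finset.mem_map, Finset.mem_range, Nat.lt_succ_iff, Nat.castEmbedding_apply] at hx
  choose y hy hyx using hx
  refine ⟨y, hy, fun hzero => hxr ?_⟩
  have hcast : ∑ v : s, x v • (fun e => ((v.1 e : ℤ) : ℚ)) =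
      fun e => (((∑ v : s, y v • v.1) e : ℤ) : ℚ) := by
    ext e
    simp [← hyx]
  rw [hcast, eval_intCast_map, hzero, Int.cast_zero]

variable [Fintype M]

lemma exists_small_solution_of_eval_ne_zero (r : MvPolynomial M ℤ) :
    ∃ D A : ℕ, 1 ≤ D ∧ ∀ {H : ℕ}, 1 ≤ H → ∀ {E : Finset (M → ℤ)}, (∀ a ∈ E, ∀ e, |a e| ≤ H) →
      ∀ {c : M → ℤ}, (∀ a ∈ E, a ⬝ᵥ c = 0) → eval c r ≠ 0 →
        ∃ c' : M → ℤ, (∀ a ∈ E, a ⬝ᵥ c' = 0) ∧ (∀ e, |c' e| ≤ (D * H ^ A : ℕ)) ∧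
          eval c' r ≠ 0 := by
  set μ := Fintype.card M
  refine ⟨(μ * r.totalDegree + 1) * (2 * μ + 1) ^ 2 ^ μ, 2 ^ μ,
    Nat.mul_pos (Nat.succ_pos _) (by positivity),
    fun {H} hH {E} hE {c} hc hrc => ?_⟩
  obtain ⟨k, s, hcard, hbound, hsol, hspan⟩ := exists_small_generatesSolutions E hE
  obtain ⟨N, hN, hNc⟩ := hspan c hc
  obtain ⟨x, hx, hxr⟩ := exists_combination_eval_ne_zero hrc hN hNc
  refine ⟨∑ v, x v • v.1, fun a ha => ?_, fun e => ?_, hxr⟩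
  · rw [dotProduct_sum]
    exact Finset.sum_eq_zero fun v _ => by rw [dotProduct_smul, hsol v v.2 a ha, smul_zero]
  have hpow : (2 * μ * H) ^ (2 ^ k - 1) ≤ (2 * μ + 1) ^ 2 ^ μ * H ^ 2 ^ μ := by
    rw [← mul_pow]
    have hexp : 2 ^ k - 1 ≤ 2 ^ μ :=
      (Nat.sub_le _ _).trans (Nat.pow_le_pow_right two_pos (le_trans (Nat.le_add_left _ _) hcard))
    exact (Nat.pow_le_pow_left (Nat.mul_le_mul_right H (Nat.le_succ _)) _).trans
      (Nat.pow_le_pow_right (Nat.mul_pos (Nat.succ_pos _) hH) hexp)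
  have hterm : ∀ v : s, |(x v • v.1) e| ≤
      (r.totalDegree * ((2 * μ + 1) ^ 2 ^ μ * H ^ 2 ^ μ) : ℕ) := by
    intro v
    rw [Pi.smul_apply, nsmul_eq_mul, abs_mul, Nat.abs_cast, Nat.cast_mul]
    exact mul_le_mul (mod_cast hx v) ((hbound v v.2 e).trans (mod_cast hpow)) (abs_nonneg _)
      (Nat.cast_nonneg _)
  calc |(∑ v, x v • v.1) e| ≤ ∑ v : s, |(x v • v.1) e| := by
        rw [Finset.sum_apply]
        exact Finset.abs_sum_le_sum_abs _ _
    _ ≤ s.card * (r.totalDegree * ((2 * μ + 1) ^ 2 ^ μ * H ^ 2 ^ μ) : ℕ) := by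
        simpa using Finset.sum_le_card_nsmul _ _ _ fun v (_ : v ∈ Finset.univ) => hterm v
    _ ≤ ((μ * r.totalDegree + 1) * (2 * μ + 1) ^ 2 ^ μ * H ^ 2 ^ μ : ℕ) := by
        have hcard' : s.card ≤ μ := by omega
        norm_cast
        calc s.card * (r.totalDegree * ((2 * μ + 1) ^ 2 ^ μ * H ^ 2 ^ μ))
            ≤ μ * (r.totalDegree * ((2 * μ + 1) ^ 2 ^ μ * H ^ 2 ^ μ)) :=
              Nat.mul_le_mul_right _ hcard'
          _ = μ * r.totalDegree * (2 * μ + 1) ^ 2 ^ μ * H ^ 2 ^ μ := by ring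
          _ ≤ _ := by gcongr; omega

lemma exists_small_eval_ne_zero (r : MvPolynomial M ℤ) :
    ∃ K A : ℕ, ∀ {H : ℕ}, 1 ≤ H → ∀ {E : Finset (M → ℤ)}, (∀ a ∈ E, ∀ e, |a e| ≤ H) →
      ∀ {c : M → ℤ}, (∀ a ∈ E, a ⬝ᵥ c = 0) → eval c r ≠ 0 →
        ∃ c' : M → ℤ, (∀ a ∈ E, a ⬝ᵥ c' = 0) ∧ eval c' r ≠ 0 ∧ |eval c' r| ≤ (K * H ^ A : ℕ) := by
  obtain ⟨D, A, hD, hsmall⟩ := exists_small_solution_of_eval_ne_zero r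
  refine ⟨(∑ d ∈ r.support, (coeff d r).natAbs) * D ^ r.totalDegree, A * r.totalDegree,
    fun {H} hH {E} hE {c} hc hrc => ?_⟩
  obtain ⟨c', hc', hbound, hrc'⟩ := hsmall hH hE hc hrc
  refine ⟨c', hc', hrc', ?_⟩
  rw [pow_mul, mul_assoc, ← mul_pow]
  exact abs_eval_le r (Nat.mul_pos hD (Nat.pow_pos hH)) hbound

end SmallValues

section SmallDiscriminant

open MvPolynomial

/-- Replacing `F` by a form of the same degree through the given zeros makes its discriminant
polynomially bounded in the height of these zeros, whatever the coefficients of `F`. -/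
lemma exists_form_vanishing_with_small_inertiaForm {σ : Type*} [Finite σ] (d : ℕ) :
    ∃ K A : ℕ, ∀ {F : MvPolynomial σ ℤ}, F.IsHomogeneous d → inertiaIdeal (jacobianIdeal F) ≠ ⊥ →
      ∀ {H : ℕ}, 1 ≤ H → ∀ {S : Finset (σ → ℤ)}, (∀ x ∈ S, ∀ i, |x i| ≤ H) →
        (∀ x ∈ S, eval x F = 0) →
        ∃ F' : MvPolynomial σ ℤ, F'.IsHomogeneous d ∧ (∀ x ∈ S, eval x F' = 0) ∧
          ∃ Δ ∈ inertiaIdeal (jacobianIdeal F'), Δ ≠ 0 ∧ |Δ| ≤ (K * H ^ A : ℕ) := by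
  classical
  have := Fintype.ofFinite σ
  obtain ⟨T, hTmem, hT⟩ := exists_finset_inertiaForms σ d
  choose K A hKA using exists_small_eval_ne_zero (M := FormExponent σ d)
  refine ⟨∑ r ∈ T, K r, d * ∑ r ∈ T, A r, fun {F} hF hFI {H} hH {S} hSH hS => ?_⟩
  obtain ⟨r, hr, hrF⟩ := hT (fun e => coeff e.1 F) (by rwa [formOfCoeffs_coeff hF])
  set monomials : (σ → ℤ) → FormExponent σ d → ℤ := fun x e => ∏ i, x i ^ e.1 i
  have heval : ∀ c x, eval x (formOfCoeffs c) = monomials x ⬝ᵥ c := fun c x => by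
    rw [eval_formOfCoeffs, dotProduct_comm]; rfl
  have hbound : ∀ a ∈ S.image monomials, ∀ e, |a e| ≤ (H ^ d : ℕ) := by
    refine Finset.forall_mem_image.2 fun x hx e => ?_
    calc |∏ i, x i ^ e.1 i| = ∏ i, |x i| ^ e.1 i := by simp only [Finset.abs_prod, abs_pow]
      _ ≤ ∏ i, (H : ℤ) ^ e.1 i := Finset.prod_le_prod (fun i _ => by positivity)
          fun i _ => pow_le_pow_left₀ (abs_nonneg _) (hSH x hx i) _
      _ = (H ^ d : ℕ) := by
          rw [Finset.prod_pow_eq_pow_sum, ← Finsupp.degree_eq_sum, e.degree, Nat.cast_pow]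
  have hsol : ∀ a ∈ S.image monomials, a ⬝ᵥ (fun e => coeff e.1 F) = 0 :=
    Finset.forall_mem_image.2 fun x hx => by rw [← heval, formOfCoeffs_coeff hF, hS x hx]
  obtain ⟨c, hc, hrc, hle⟩ := hKA r (Nat.one_le_pow _ _ hH) hbound hsol hrF
  refine ⟨formOfCoeffs c, isHomogeneous_formOfCoeffs c, fun x hx => ?_, eval c r, hTmem r hr c, hrc,
    hle.trans ?_⟩
  · rw [heval, hc _ (Finset.mem_image_of_mem _ hx)]
  · rw [← pow_mul]
    have hK := Finset.single_le_sum (f := K) (fun _ _ => Nat.zero_le _) hr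
    have hA := Finset.single_le_sum (f := A) (fun _ _ => Nat.zero_le _) hr
    exact_mod_cast Nat.mul_le_mul hK (Nat.pow_le_pow_right hH (Nat.mul_le_mul_left d hA))

end SmallDiscriminant

section Primes

lemma exists_finset_primes_card_eq (k : ℕ) {P : ℕ} (hP : 0 < P) :
    ∃ ps : Finset ℕ, ps.card = k ∧ ∀ p ∈ ps, p.Prime ∧ P < p ∧ p ≤ 2 ^ k * P := by
  induction k with
  | zero => exact ⟨∅, rfl, by simp⟩
  | succ k ih =>
    obtain ⟨ps, hcard, hps⟩ := ih
    obtain ⟨q, hq, hlt, hle⟩ := Nat.exists_prime_lt_and_le_two_mul (2 ^ k * P) (by positivity)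
    have hqps : q ∉ ps := fun h => hlt.not_ge (hps q h).2.2
    refine ⟨ps.cons q hqps, by rw [Finset.card_cons, hcard], fun p hp => ?_⟩
    have hpow : 2 ^ (k + 1) * P = 2 * (2 ^ k * P) := by ring
    rw [hpow]
    obtain rfl | hp := Finset.mem_cons.1 hp
    · exact ⟨hq, (Nat.le_mul_of_pos_left P (by positivity)).trans_lt hlt, hle⟩
    · exact ⟨(hps p hp).1, (hps p hp).2.1, (hps p hp).2.2.trans (by omega)⟩

lemma card_lt_of_primes_dvd {ps : Finset ℕ} {P l : ℕ} {Δ : ℤ} (hP : 0 < P)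
    (hps : ∀ p ∈ ps, p.Prime ∧ P ≤ p ∧ (p : ℤ) ∣ Δ) (hΔ : Δ ≠ 0) (hlt : |Δ| < (P ^ l : ℕ)) :
    ps.card < l := by
  by_contra! hl
  have hdvd : ∏ p ∈ ps, p ∣ Δ.natAbs := Finset.prod_primes_dvd _ (fun p hp => (hps p hp).1.prime)
    fun p hp => Int.natCast_dvd.1 (hps p hp).2.2
  have hle : P ^ l ≤ Δ.natAbs :=
    calc P ^ l ≤ P ^ ps.card := Nat.pow_le_pow_right hP hl
      _ ≤ ∏ p ∈ ps, p := Finset.pow_card_le_prod _ _ _ fun p hp => (hps p hp).2.1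
      _ ≤ Δ.natAbs := Nat.le_of_dvd (Int.natAbs_pos.2 hΔ) hdvd
  exact hlt.not_ge (Int.abs_eq_natAbs Δ ▸ Nat.cast_le.2 hle)

lemma exists_finset_primes_not_dvd (k l : ℕ) {P : ℕ} (hP : 0 < P) {Δ : ℤ} (hΔ : Δ ≠ 0)
    (hlt : |Δ| < (P ^ l : ℕ)) :
    ∃ ps : Finset ℕ, ps.card = k ∧
      ∀ p ∈ ps, p.Prime ∧ P ≤ p ∧ p ≤ 2 ^ (k + l) * P ∧ ¬ (p : ℤ) ∣ Δ := by
  obtain ⟨qs, hcard, hqs⟩ := exists_finset_primes_card_eq (k + l) hP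
  have hbad : (qs.filter fun p : ℕ => (p : ℤ) ∣ Δ).card < l :=
    card_lt_of_primes_dvd hP (fun p hp => by
      obtain ⟨hp, hdvd⟩ := Finset.mem_filter.1 hp
      exact ⟨(hqs p hp).1, (hqs p hp).2.1.le, hdvd⟩) hΔ hlt
  have hgood : k ≤ (qs.filter fun p : ℕ => ¬ (p : ℤ) ∣ Δ).card := by
    have := Finset.card_filter_add_card_filter_not (s := qs) fun p : ℕ => (p : ℤ) ∣ Δ
    omega
  obtain ⟨ps, hsub, hps⟩ := Finset.exists_subset_card_eq hgood
  refine ⟨ps, hps, fun p hp => ?_⟩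
  obtain ⟨hp, hndvd⟩ := Finset.mem_filter.1 (hsub hp)
  exact ⟨(hqs p hp).1, (hqs p hp).2.1.le, (hqs p hp).2.2, hndvd⟩

end Primes

section Counting

open MvPolynomial

lemma IsPrimitiveVec.reduction_ne_zero {N p : ℕ} {x : Fin N → ℤ} (hx : IsPrimitiveVec x)
    (hp : p.Prime) : reduction p x ≠ 0 := fun h => by
  have hdvd : (p : ℤ) ∣ Finset.univ.gcd x := Finset.dvd_gcd fun i _ =>
    (ZMod.intCast_zmod_eq_zero_iff_dvd _ _).1 (congrFun h i)
  rw [IsPrimitiveVec] at hx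
  rw [hx] at hdvd
  exact hp.not_dvd_one (by exact_mod_cast hdvd)

variable {m d : ℕ} {F : MvPolynomial (Fin (m + 2)) ℤ}

lemma card_primitive_zeros_le_of_hasGoodReduction (hF : F.IsHomogeneous d) (hd : 2 ≤ d)
    (hm : 1 ≤ m) {P : ℕ} {ps : Finset ℕ}
    (hps : ∀ p ∈ ps, p.Prime ∧ p ≤ P ∧ HasGoodReduction F p) {S : Finset (Fin (m + 2) → ℤ)}
    (hbox : ∀ x ∈ S, ∀ i, |x i| ≤ ∏ p ∈ ps, p) (hSF : ∀ x ∈ S, eval x F = 0)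
    (hprim : ∀ x ∈ S, IsPrimitiveVec x) :
    S.card ≤ descentConstant d m ^ ps.card * (P ^ ps.card) ^ m *
      (3 ^ (m + 2) + ps.card * P ^ 2) := by
  have hprod : ∏ p ∈ ps, p ≤ P ^ ps.card := Finset.prod_le_pow_card _ _ _ fun p hp => (hps p hp).2.1
  have hunit : (boxPoints (⊤ : AddSubgroup (Fin (m + 2) → ℤ)) 1).card ≤ 3 ^ (m + 2) := by
    simpa using card_boxPoints_le (⊤ : AddSubgroup (Fin (m + 2) → ℤ)) 1
  have hS : S ⊆ boxPoints ⊤ (1 * ∏ p ∈ ps, p) := fun x hx =>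
    mem_boxPoints.2 ⟨by simpa using hbox x hx, AddSubgroup.mem_top x⟩
  refine (card_le_of_hasGoodReduction hF hd hm hps one_pos (by simp) (by simp) hS hSF
    fun x hx p hp => (hprim x hx).reduction_ne_zero (hps p hp).1).trans ?_
  gcongr

/-- The `k` primes of the descent are taken of size about `b`, so that their product exceeds
`b ^ k` while each costs only a bounded power of `b`. -/
lemma card_primitive_zeros_le (hd : 2 ≤ d) (hm : 1 ≤ m) (k : ℕ) :
    ∃ C : ℕ, ∀ {F : MvPolynomial (Fin (m + 2)) ℤ}, F.IsHomogeneous d →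
      inertiaIdeal (jacobianIdeal F) ≠ ⊥ → ∀ {b : ℕ}, 1 ≤ b → ∀ {S : Finset (Fin (m + 2) → ℤ)},
        (∀ x ∈ S, ∀ i, |x i| ≤ (b ^ k : ℕ)) → (∀ x ∈ S, eval x F = 0) →
        (∀ x ∈ S, IsPrimitiveVec x) → S.card ≤ C * b ^ (k * m + 2) := by
  obtain ⟨K, A, hKA⟩ := exists_form_vanishing_with_small_inertiaForm (σ := Fin (m + 2)) d
  set l := k * A + 1
  set c := 2 ^ (k + l) * (K + 1)
  refine ⟨descentConstant d m ^ k * (c ^ k) ^ m * (3 ^ (m + 2) + k * c ^ 2),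
    fun {F} hF hFI {b} hb {S} hbox hSF hprim => ?_⟩
  obtain ⟨F', hF', hSF', Δ, hΔmem, hΔ, hΔle⟩ := hKA hF hFI (Nat.one_le_pow k b hb) hbox hSF
  have hΔlt : |Δ| < (((K + 1) * b) ^ l : ℕ) := hΔle.trans_lt <| Nat.cast_lt.2 <|
    calc K * (b ^ k) ^ A < (K + 1) * (b ^ k) ^ A := by gcongr; omega
      _ ≤ (K + 1) ^ l * b ^ l := by
        rw [← pow_mul]
        gcongr
        exacts [Nat.le_self_pow (by omega) _, by omega]
      _ = ((K + 1) * b) ^ l := (mul_pow _ _ _).symm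
  obtain ⟨ps, hcard, hps⟩ := exists_finset_primes_not_dvd k l (by positivity) hΔ hΔlt
  have hprod : b ^ k ≤ ∏ p ∈ ps, p := hcard ▸ Finset.pow_card_le_prod _ _ _ fun p hp =>
    (Nat.le_mul_of_pos_left b K.succ_pos).trans (hps p hp).2.1
  have hgood : ∀ p ∈ ps, p.Prime ∧ p ≤ c * b ∧ HasGoodReduction F' p := fun p hp =>
    ⟨(hps p hp).1, (hps p hp).2.2.1.trans_eq (mul_assoc _ _ _).symm,
      hasGoodReduction_of_not_dvd_mem_inertiaIdeal (hps p hp).1 hΔmem (hps p hp).2.2.2⟩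
  calc S.card ≤ descentConstant d m ^ k * ((c * b) ^ k) ^ m * (3 ^ (m + 2) + k * (c * b) ^ 2) :=
        hcard ▸ card_primitive_zeros_le_of_hasGoodReduction hF' hd hm hgood
          (fun x hx i => (hbox x hx i).trans (by exact_mod_cast hprod)) hSF' hprim
    _ ≤ descentConstant d m ^ k * ((c * b) ^ k) ^ m *
          (3 ^ (m + 2) * b ^ 2 + k * (c * b) ^ 2) := by
        gcongr
        exact Nat.le_mul_of_pos_right _ (by positivity)
    _ = descentConstant d m ^ k * (c ^ k) ^ m * (3 ^ (m + 2) + k * c ^ 2) * b ^ (k * m + 2) := by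
        rw [pow_add b, pow_mul b, mul_pow c b k, mul_pow (c ^ k)]
        ring

lemma abs_apply_le_of_heightVec_le {N R : ℕ} {x : Fin N → ℤ} (hx : heightVec x ≤ R) (i : Fin N) :
    |x i| ≤ R := by
  rw [Int.abs_eq_natAbs, Nat.cast_le]
  exact (Finset.le_sup (f := fun i => (x i).natAbs) (Finset.mem_univ i)).trans (Nat.cast_le.1 hx)

lemma finite_heightVec_le (N R : ℕ) : {x : Fin N → ℤ | heightVec x ≤ R}.Finite :=
  (Set.finite_Icc (fun _ => -(R : ℤ)) fun _ => (R : ℤ)).subset fun _ hx =>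
    ⟨fun i => (abs_le.1 (abs_apply_le_of_heightVec_le hx i)).1,
      fun i => (abs_le.1 (abs_apply_le_of_heightVec_le hx i)).2⟩

lemma ncard_primitive_zeros_le (hd : 2 ≤ d) (hm : 1 ≤ m) (k : ℕ) :
    ∃ C : ℕ, ∀ {F : MvPolynomial (Fin (m + 2)) ℤ}, F.IsHomogeneous d → NonsingularZ F →
      ∀ {b : ℕ}, 1 ≤ b → ∀ {B : ℝ}, B ≤ (b ^ k : ℕ) →
        {x | IsPrimitiveVec x ∧ heightVec x ≤ B ∧ eval x F = 0}.ncard ≤ C * b ^ (k * m + 2) := by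
  obtain ⟨C, hC⟩ := card_primitive_zeros_le hd hm k
  refine ⟨C, fun {F} hF hns {b} hb {B} hBb => ?_⟩
  set Z := {x | IsPrimitiveVec x ∧ heightVec x ≤ B ∧ eval x F = 0}
  have hfin : Z.Finite := (finite_heightVec_le _ (b ^ k)).subset fun x hx => hx.2.1.trans hBb
  rw [Set.ncard_eq_toFinset_card Z hfin]
  exact hC hF hns.inertiaIdeal_ne_bot hb
    (fun x hx => abs_apply_le_of_heightVec_le ((hfin.mem_toFinset.1 hx).2.1.trans hBb))
    (fun x hx => (hfin.mem_toFinset.1 hx).2.2) fun x hx => (hfin.mem_toFinset.1 hx).1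

lemma exists_nat_pow_ge_and_pow_le {B : ℝ} (hB : 1 ≤ B) {k : ℕ} (hk : k ≠ 0) :
    ∃ b : ℕ, 1 ≤ b ∧ B ≤ (b ^ k : ℕ) ∧ (b : ℝ) ≤ 2 * B ^ (k : ℝ)⁻¹ := by
  have hroot : 1 ≤ B ^ (k : ℝ)⁻¹ := Real.one_le_rpow hB (by positivity)
  refine ⟨⌈B ^ (k : ℝ)⁻¹⌉₊, Nat.one_le_ceil_iff.2 (by linarith), ?_, ?_⟩
  · calc B = (B ^ (k : ℝ)⁻¹) ^ k := (Real.rpow_inv_natCast_pow (by linarith) hk).symm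
      _ ≤ (⌈B ^ (k : ℝ)⁻¹⌉₊ ^ k : ℕ) := by
        push_cast
        gcongr
        exact Nat.le_ceil _
  · linarith [Nat.ceil_lt_add_one (zero_le_one.trans hroot)]

end Counting

/-- **Conjecture 1 (now a theorem).** For any integers d, n ≥ 2, ε > 0 and any
non-singular form F of degree d in n+1 variables, the number of rational points of
height at most B on the hypersurface X = {F = 0} satisfies
N_X(B) = O_{d,ε,n}(B^{n-1+ε}).  Rational points of height at most B are counted via
primitive integer solutions x of F(x) = 0 with max|x_i| ≤ B (each projective point
corresponds to exactly two such vectors). -/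
theorem statement1 (ε : ℝ) (hε : 0 < ε) (d n : ℕ) (hd : 2 ≤ d)
    (hn : 2 ≤ n) :
    ∃ C : ℝ, 0 < C ∧ ∀ F : MvPolynomial (Fin (n + 1)) ℤ,
      F.IsHomogeneous d → NonsingularZ F → ∀ B : ℝ, 1 ≤ B →
      (Set.ncard {x : Fin (n + 1) → ℤ | IsPrimitiveVec x ∧ heightVec x ≤ B ∧
          MvPolynomial.eval x F = 0} : ℝ) ≤ C * B ^ ((n : ℝ) - 1 + ε) := by
  obtain ⟨m, rfl⟩ : ∃ m, n = m + 1 := ⟨n - 1, by omega⟩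
  obtain ⟨k, hk⟩ := exists_nat_gt (2 / ε)
  have hk0 : 0 < (k : ℝ) := (div_pos two_pos hε).trans hk
  obtain ⟨C, hC⟩ := ncard_primitive_zeros_le hd (Nat.le_of_succ_le_succ hn) k
  refine ⟨(C + 1) * 2 ^ (k * m + 2), by positivity, fun F hF hns B hB => ?_⟩
  obtain ⟨b, hb, hBb, hbB⟩ := exists_nat_pow_ge_and_pow_le hB (Nat.cast_pos.1 hk0).ne'
  have hexp : (k : ℝ)⁻¹ * (k * m + 2 : ℕ) ≤ (m + 1 : ℕ) - 1 + ε := by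
    rw [div_lt_iff₀ hε] at hk
    push_cast
    field_simp
    linarith
  calc _ ≤ ((C * b ^ (k * m + 2) : ℕ) : ℝ) := Nat.cast_le.2 (hC hF hns hb hBb)
    _ ≤ (C + 1) * (2 * B ^ (k : ℝ)⁻¹) ^ (k * m + 2) := by
      push_cast
      gcongr
      linarith
    _ = (C + 1) * 2 ^ (k * m + 2) * B ^ ((k : ℝ)⁻¹ * (k * m + 2 : ℕ)) := by
      rw [mul_pow, ← mul_assoc, ← Real.rpow_mul_natCast (by linarith)]
    _ ≤ _ := by gcongr

end
end

section
/- Let H ≥ 1 and let a, b, c ≥ 0 be real numbers. Then for all real numbers A, B, C satisfying 1 ≤ A ≤ B ≤ C and ABC ≤ H, one has A^a B^b C^c ≤ max{ H^{(a+b+c)/3}, H^{(b+c)/2}, H^c }. -/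
/-!
After taking logarithms the claim is a linear programming bound for an increasing nonnegative
family `x`. Such a family is a nonnegative combination of indicators of final segments (Abel
summation), so a linear form `∑ i, w i * x i` is at most `∑ i, x i` times the largest average of `w`
over a final segment.
-/

open Finset BigOperators

theorem sum_mul_nonpos_of_sum_tail_nonpos {ι R : Type*} [LinearOrder ι] [Ring R] [PartialOrder R]
    [IsOrderedRing R] {s : Finset ι} {d x : ι → R} (hd : ∀ k ∈ s, ∑ i ∈ s with k ≤ i, d i ≤ 0)
    (hx : ∀ i ∈ s, 0 ≤ x i) (hmono : MonotoneOn x s) : ∑ i ∈ s, d i * x i ≤ 0 := by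
  induction s using Finset.induction_on_min generalizing x with
  | empty => simp
  | insert a t hat ih =>
    have ha : a ∉ t := fun h => (hat a h).false
    have htotal : ∑ i ∈ insert a t, d i ≤ 0 := by
      have hfilter : {i ∈ insert a t | a ≤ i} = insert a t :=
        filter_true_of_mem ((forall_mem_insert _ _ _).2 ⟨le_rfl, fun i hi => (hat i hi).le⟩)
      simpa only [hfilter] using hd a (mem_insert_self a t)
    have htail : ∀ k ∈ t, ∑ i ∈ t with k ≤ i, d i ≤ 0 := fun k hk => by
      simpa only [filter_insert, (hat k hk).not_ge, if_false] using hd k (mem_insert_of_mem hk)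
    have hshift : ∑ i ∈ t, d i * (x i - x a) ≤ 0 :=
      ih htail
        (fun i hi => sub_nonneg.2 <|
          hmono (mem_insert_self a t) (mem_insert_of_mem hi) (hat i hi).le)
        (fun i hi j hj hij => sub_le_sub_right
          (hmono (mem_insert_of_mem hi) (mem_insert_of_mem hj) hij) _)
    calc ∑ i ∈ insert a t, d i * x i
        = (∑ i ∈ insert a t, d i) * x a + ∑ i ∈ t, d i * (x i - x a) := by
          simp only [sum_insert ha, mul_sub, sum_sub_distrib, ← sum_mul, add_mul]
          abel
      _ ≤ 0 :=
          add_nonpos (mul_nonpos_of_nonpos_of_nonneg htotal (hx a (mem_insert_self a t))) hshift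

theorem sum_mul_le_mul_sum_of_expect_tail_le {ι K : Type*} [LinearOrder ι] [Field K] [LinearOrder K]
    [IsStrictOrderedRing K] {s : Finset ι} {w x : ι → K} {M : K}
    (hw : ∀ k ∈ s, 𝔼 i ∈ s with k ≤ i, w i ≤ M) (hx : ∀ i ∈ s, 0 ≤ x i)
    (hmono : MonotoneOn x s) : ∑ i ∈ s, w i * x i ≤ M * ∑ i ∈ s, x i := by
  have htail : ∀ k ∈ s, ∑ i ∈ s with k ≤ i, (w i - M) ≤ 0 := fun k hk => by
    have hcard : (0 : K) < #{i ∈ s | k ≤ i} :=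
      Nat.cast_pos.2 (card_pos.2 ⟨k, mem_filter.2 ⟨hk, le_rfl⟩⟩)
    have hsum := hw k hk
    rw [expect_eq_sum_div_card, div_le_iff₀' hcard] at hsum
    simpa only [sum_sub_distrib, sum_const, nsmul_eq_mul, sub_nonpos] using hsum
  simpa only [sub_mul, sum_sub_distrib, ← mul_sum, sub_nonpos] using
    sum_mul_nonpos_of_sum_tail_nonpos htail hx hmono

theorem prod_rpow_le_rpow_of_expect_tail_le {ι : Type*} [LinearOrder ι] {s : Finset ι}
    {w x : ι → ℝ} {H M : ℝ} (hM : 0 ≤ M) (hw : ∀ k ∈ s, 𝔼 i ∈ s with k ≤ i, w i ≤ M)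
    (hx : ∀ i ∈ s, 1 ≤ x i) (hmono : MonotoneOn x s) (hprod : ∏ i ∈ s, x i ≤ H) :
    ∏ i ∈ s, x i ^ w i ≤ H ^ M := by
  have hpos : ∀ i ∈ s, 0 < x i := fun i hi => one_pos.trans_le (hx i hi)
  have hlog_mono : MonotoneOn (fun i => Real.log (x i)) s := fun i hi j hj hij =>
    Real.log_le_log (hpos i hi) (hmono hi hj hij)
  have hprod_pos : 0 < ∏ i ∈ s, x i := prod_pos hpos
  rw [Real.le_rpow_iff_log_le (prod_pos fun i hi => Real.rpow_pos_of_pos (hpos i hi) _)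
    (hprod_pos.trans_le hprod)]
  calc Real.log (∏ i ∈ s, x i ^ w i)
      = ∑ i ∈ s, w i * Real.log (x i) := by
        rw [Real.log_prod fun i hi => (Real.rpow_pos_of_pos (hpos i hi) _).ne']
        exact sum_congr rfl fun i hi => Real.log_rpow (hpos i hi) _
    _ ≤ M * ∑ i ∈ s, Real.log (x i) :=
        sum_mul_le_mul_sum_of_expect_tail_le hw (fun i hi => Real.log_nonneg (hx i hi)) hlog_mono
    _ = M * Real.log (∏ i ∈ s, x i) := by rw [Real.log_prod fun i hi => (hpos i hi).ne']
    _ ≤ M * Real.log H := by gcongr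

theorem statement2_general {ι : Type*} [LinearOrder ι] {s : Finset ι} {w x : ι → ℝ} {H : ℝ}
    (hw : ∃ k ∈ s, 0 ≤ 𝔼 i ∈ s with k ≤ i, w i) (hx : ∀ i ∈ s, 1 ≤ x i) (hmono : MonotoneOn x s)
    (hprod : ∏ i ∈ s, x i ≤ H) :
    ∃ k ∈ s, ∏ i ∈ s, x i ^ w i ≤ H ^ (𝔼 i ∈ s with k ≤ i, w i) := by
  obtain ⟨j, hj, hj_nonneg⟩ := hw
  obtain ⟨k, hk, hmax⟩ := exists_max_image s (fun k => 𝔼 i ∈ s with k ≤ i, w i) ⟨j, hj⟩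
  exact ⟨k, hk, prod_rpow_le_rpow_of_expect_tail_le (hj_nonneg.trans (hmax j hj)) hmax hx hmono
    hprod⟩

theorem expect_fin_three_one_le {K : Type*} [Semifield K] [CharZero K] (w : Fin 3 → K) :
    𝔼 i with 1 ≤ i, w i = (w 1 + w 2) / 2 := by
  have hfilter : ({i | 1 ≤ i} : Finset (Fin 3)) = {1, 2} := rfl
  simp [hfilter, expect_eq_sum_div_card]

theorem expect_fin_three_two_le {M : Type*} [AddCommMonoid M] [Module ℚ≥0 M] (w : Fin 3 → M) :
    𝔼 i with 2 ≤ i, w i = w 2 := by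
  have hfilter : ({i | 2 ≤ i} : Finset (Fin 3)) = {2} := rfl
  rw [hfilter, expect_singleton]

/-- **Lemma 1 (linear programming).** Let H ≥ 1 and a,b,c ≥ 0.  Then for all real
A,B,C with 1 ≤ A ≤ B ≤ C and ABC ≤ H one has
A^a B^b C^c ≤ max{H^{(a+b+c)/3}, H^{(b+c)/2}, H^c}. -/
theorem statement2 (H a b c A B C : ℝ) (hH : 1 ≤ H) (ha : 0 ≤ a) (hb : 0 ≤ b)
    (hc : 0 ≤ c) (h1A : 1 ≤ A) (hAB : A ≤ B) (hBC : B ≤ C) (hABC : A * B * C ≤ H) :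
    A ^ a * B ^ b * C ^ c ≤
      max (H ^ ((a + b + c) / 3)) (max (H ^ ((b + c) / 2)) (H ^ c)) := by
  simpa [Fin.exists_fin_succ, Fintype.expect_eq_sum_div_card, expect_fin_three_one_le,
    expect_fin_three_two_le, Fin.sum_univ_three, Fin.prod_univ_three] using
    statement2_general (s := univ) (w := ![a, b, c]) (x := ![A, B, C])
      ⟨2, mem_univ 2, by simpa [expect_fin_three_two_le]⟩
      (by simp [Fin.forall_fin_succ, h1A, h1A.trans hAB, h1A.trans (hAB.trans hBC)])
      (by simp [Fin.monotone_iff_le_succ, Fin.forall_fin_succ, hAB, hBC])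
      (by simpa [Fin.prod_univ_three])
end

section
/- Let V ⊂ P^N be a projective variety of degree d and dimension m, defined over the algebraic closure of ℚ. Then N_V(B) = O_{d,N}(B^{m+1}), the implied constant depending only on d and N. -/
/-!
Choose a linear space `Λ ⊆ ℙᴺ` of dimension `N - m - 1` disjoint from `V` and spanned by integer
vectors `w i` whose entries are bounded in terms of `d`. A linear space containing `Λ` as a
hyperplane meets `V` in finitely many points, hence in at most `d`. Translate every primitive
vector `x` representing a point of `V` of height at most `B` by all the combinations
`∑ i, a i • w i` with integers `0 ≤ a i ≤ B`. The results lie in a box of side `O(B)`, and each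
`y` arises from at most `2 * d` vectors `x`, since these lie in the span of `Λ` and `y`. Therefore
`N_V(B) * B ^ (N - m) ≪ B ^ (N + 1)`.

The `w i` are found one at a time. The join of `V` with the span of the vectors already chosen is
not all of `ℙᴺ`, for reasons of dimension, and a line not contained in its affine cone meets that
cone in at most `d + 1` points. So some vector with all entries in `{0, …, d + 1}` avoids it.

The degree is a supremum of cardinalities of finite linear sections, so these have to be shown to be
bounded. A finite section of `V` by `ℙ(W)` misses some hyperplane `ℙ(H)` of `ℙ(W)`, and its points
correspond to points of a fibre of a linear map `A` with kernel `H`, restricted to the affine cone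
of `V`; the only zero of `A` on that cone is the origin. By the Nullstellensatz all forms of some
degree `M + 1` lie in the ideal generated by the equations of `V` and the coordinates of `A`; then
polynomials of degree at most `M` span the coordinate ring of every fibre of `A`. The condition for
a given `M` is open in `A`, and Noetherianity of the polynomial ring in the entries of `A` leaves
only finitely many `M` to consider.
-/

noncomputable section

abbrev Pn (N : ℕ) := Projectivization KK (Fin (N + 1) → KK)

/-- The common zero set in projective space of a family of polynomials
(membership tested on the chosen representative). -/
def projZeros {N : ℕ} (S : Set (MvPolynomial (Fin (N + 1)) KK)) : Set (Pn N) :=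
  {x | ∀ f ∈ S, MvPolynomial.eval x.rep f = 0}

/-- Zariski-closed subsets of projective space: common zero sets of families of forms. -/
def ProjClosed {N : ℕ} (V : Set (Pn N)) : Prop :=
  ∃ S : Set (MvPolynomial (Fin (N + 1)) KK),
    (∀ f ∈ S, ∃ d, f.IsHomogeneous d) ∧ V = projZeros S

def ProjIrred {N : ℕ} (V : Set (Pn N)) : Prop :=
  V.Nonempty ∧ ∀ C₁ C₂ : Set (Pn N), ProjClosed C₁ → ProjClosed C₂ →
    V ⊆ C₁ ∪ C₂ → V ⊆ C₁ ∨ V ⊆ C₂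

/-- A (geometrically integral) projective variety: an irreducible Zariski-closed set. -/
def ProjVariety {N : ℕ} (V : Set (Pn N)) : Prop := ProjClosed V ∧ ProjIrred V

/-- Dimension of a subset of projective space: Krull dimension of the poset of
irreducible closed subsets contained in it. The empty set has dimension `⊥`. -/
def projDim {N : ℕ} (V : Set (Pn N)) : WithBot ENat :=
  Order.krullDim {W : Set (Pn N) // ProjVariety W ∧ W ⊆ V}

/-- The set of projective points lying on a linear subspace. -/
def planeSet {N : ℕ} (W : Submodule KK (Fin (N + 1) → KK)) : Set (Pn N) :=
  {x | x.rep ∈ W}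

/-- Degree of a subset of projective space: the largest (finite) number of points
in a linear section. -/
def projDeg {N : ℕ} (V : Set (Pn N)) : ℕ :=
  sSup {k : ℕ | ∃ W : Submodule KK (Fin (N + 1) → KK),
    (V ∩ planeSet W).Finite ∧ (V ∩ planeSet W).ncard = k}

/-- The hypersurface cut out by a form. -/
def hyp {n : ℕ} (F : MvPolynomial (Fin (n + 1)) KK) : Set (Pn n) :=
  {x | MvPolynomial.eval x.rep F = 0}

/-- A form over the algebraic closure is non-singular if its partial derivatives
have no common non-trivial zero. -/
def NonsingularK {n : ℕ} (F : MvPolynomial (Fin (n + 1)) KK) : Prop :=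
  ∀ z : Fin (n + 1) → KK,
    (∀ i, MvPolynomial.eval z (MvPolynomial.pderiv i F) = 0) → z = 0

/-- The Fano set of (projective) m-planes contained in X, as linear subspaces of
dimension m+1. -/
def Fano (m n : ℕ) (X : Set (Pn n)) : Set (Submodule KK (Fin (n + 1) → KK)) :=
  {W | Module.finrank KK W = m + 1 ∧ planeSet W ⊆ X}

/-- Closed subsets of the Grassmannian of m-planes in Pⁿ, described via Stiefel
coordinates: Z is closed iff the set of (m+1)-tuples of vectors which, when
linearly independent, span a member of Z, is Zariski-closed in affine space. -/
def GrClosed (m n : ℕ) (Z : Set (Submodule KK (Fin (n + 1) → KK))) : Prop :=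
  (∀ W ∈ Z, Module.finrank KK W = m + 1) ∧
  ∃ S : Set (MvPolynomial (Fin (m + 1) × Fin (n + 1)) KK),
    {v : Fin (m + 1) → Fin (n + 1) → KK |
      LinearIndependent KK v → Submodule.span KK (Set.range v) ∈ Z}
    = {v | ∀ f ∈ S, MvPolynomial.eval (fun p => v p.1 p.2) f = 0}

def GrIrred (m n : ℕ) (Z : Set (Submodule KK (Fin (n + 1) → KK))) : Prop :=
  Z.Nonempty ∧ ∀ C₁ C₂ : Set (Submodule KK (Fin (n + 1) → KK)),
    GrClosed m n C₁ → GrClosed m n C₂ → Z ⊆ C₁ ∪ C₂ → Z ⊆ C₁ ∨ Z ⊆ C₂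

/-- A (geometrically integral) subvariety of the Grassmannian. -/
def GrVariety (m n : ℕ) (Z : Set (Submodule KK (Fin (n + 1) → KK))) : Prop :=
  GrClosed m n Z ∧ GrIrred m n Z

/-- Dimension of a subset of the Grassmannian of m-planes in Pⁿ. -/
def grDim (m n : ℕ) (Z : Set (Submodule KK (Fin (n + 1) → KK))) : WithBot ENat :=
  Order.krullDim {W : Set (Submodule KK (Fin (n + 1) → KK)) // GrVariety m n W ∧ W ⊆ Z}

/-- D(Z): the union of the planes parametrised by Z. -/
def DSet {n : ℕ} (Z : Set (Submodule KK (Fin (n + 1) → KK))) : Set (Pn n) :=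
  {x | ∃ Λ ∈ Z, x.rep ∈ Λ}

def coeK {n : ℕ} (x : Fin n → ℤ) : Fin n → KK := fun i => ((x i : ℤ) : KK)

def coeQ {n : ℕ} (x : Fin n → ℤ) : Fin n → ℚ := fun i => ((x i : ℤ) : ℚ)

/-- The number of rational points of height at most B on a subset V of projective
space, counted via primitive integer vectors (each projective rational point
corresponds to exactly two primitive vectors). -/
def NV {n : ℕ} (V : Set (Pn n)) (B : ℝ) : ℕ :=
  Set.ncard {x : Fin (n + 1) → ℤ | IsPrimitiveVec x ∧ heightVec x ≤ B ∧
    ∃ h : coeK x ≠ 0, Projectivization.mk KK (coeK x) h ∈ V}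

/-- Base change of an integer polynomial to the algebraic closure of ℚ. -/
def mapK {n : ℕ} (F : MvPolynomial (Fin (n + 1)) ℤ) : MvPolynomial (Fin (n + 1)) KK :=
  MvPolynomial.map (Int.castRingHom KK) F

/-- The Plücker height of the rational m-plane spanned by the integer vectors v:
the maximum modulus of the (m+1)×(m+1) minors, divided by their gcd. -/
def pluckerHeight {m n : ℕ} (v : Fin (m + 1) → Fin (n + 1) → ℤ) : ℕ :=
  (Finset.univ.sup fun s : Fin (m + 1) → Fin (n + 1) =>
    (Matrix.det (Matrix.of fun i j => v i (s j))).natAbs) /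
  (Finset.univ.gcd fun s : Fin (m + 1) → Fin (n + 1) =>
    (Matrix.det (Matrix.of fun i j => v i (s j))).natAbs)

def betaExp (k : ℕ) : ℝ := if k ≤ 3 then 0 else 1/4

def sigmaExp (n k : ℕ) : ℝ :=
  if (k : ℝ) ≤ ((n : ℝ) - 1) / 2 then (k : ℝ) + 1 else (k : ℝ) + betaExp k

def tauExp (n k : ℕ) : ℝ :=
  if (k : ℝ) < ((n : ℝ) - 1) / 2 then (k : ℝ) + 1 else (k : ℝ) + betaExp k

/-- E: the union of the (n-1)/2-planes contained in X (for n odd; empty for n even). -/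
def bigE {n : ℕ} (X : Set (Pn n)) : Set (Pn n) :=
  {x | n % 2 = 1 ∧ ∃ W : Submodule KK (Fin (n + 1) → KK),
    Module.finrank KK W = (n - 1) / 2 + 1 ∧ planeSet W ⊆ X ∧ x ∈ planeSet W}

/-- The cone of lines contained in X passing through x. -/
def coneOfLines {n : ℕ} (X : Set (Pn n)) (x : Pn n) : Set (Pn n) :=
  {y | ∃ L : Submodule KK (Fin (n + 1) → KK),
    Module.finrank KK L = 2 ∧ planeSet L ⊆ X ∧ x.rep ∈ L ∧ y.rep ∈ L}

section IdealsAndLinearForms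

open MvPolynomial

attribute [local instance] MvPolynomial.gradedAlgebra

variable {R K σ ι : Type*} [CommRing R] [Field K]

lemma exists_homogeneousSubmodule_le_of_zeroLocus_subset [IsAlgClosed K] [Finite σ]
    {J : Ideal (MvPolynomial σ K)} (hJ : zeroLocus K J ⊆ {0}) :
    ∃ M, homogeneousSubmodule σ K (M + 1) ≤ J.restrictScalars K := by
  have := Fintype.ofFinite σ
  have hX (i : σ) : (X i : MvPolynomial σ K) ∈ J.radical := by
    rw [← vanishingIdeal_zeroLocus_eq_radical (K := K), mem_vanishingIdeal_iff]
    intro x hx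
    simp [Set.mem_singleton_iff.1 (hJ hx)]
  choose e he using hX
  refine ⟨∑ i, e i, fun p hp ↦ ?_⟩
  rw [p.as_sum]
  refine Submodule.sum_mem _ fun s hs ↦ ?_
  obtain ⟨i, hi⟩ : ∃ i, e i ≤ s i := by
    by_contra! hlt
    have hdeg : s.degree = ∑ i, e i + 1 := (IsHomogeneous.degree_eq_sum_deg_support hp hs).symm
    have : s.degree ≤ ∑ i, e i := by
      rw [Finsupp.degree_eq_sum]
      exact Finset.sum_le_sum fun i _ ↦ (hlt i).le
    lia
  have hs_eq : monomial s (coeff s p) =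
      monomial (s - Finsupp.single i (e i)) (coeff s p) * X i ^ e i := by
    rw [X_pow_eq_monomial, monomial_mul, mul_one, tsub_add_cancel_of_le (by simpa using hi)]
  rw [hs_eq]
  exact J.mul_mem_left _ (he i)

lemma exists_finset_subset_eval_ne_zero [IsNoetherianRing R] [Finite σ]
    (T : Set (MvPolynomial σ R)) :
    ∃ T' : Finset (MvPolynomial σ R), ↑T' ⊆ T ∧
      ∀ x, (∃ F ∈ T, eval x F ≠ 0) → ∃ F ∈ T', eval x F ≠ 0 := by
  obtain ⟨T', hT', hspan⟩ := (Submodule.fg_span_iff_fg_span_finset_subset T).1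
    (IsNoetherian.noetherian (Ideal.span T))
  refine ⟨T', hT', fun x ⟨F, hFT, hFx⟩ ↦ ?_⟩
  by_contra! hzero
  have hle : Ideal.span (T' : Set (MvPolynomial σ R)) ≤ RingHom.ker (eval x) :=
    Ideal.span_le.2 hzero
  exact hFx (hle (hspan.le (Ideal.subset_span hFT)))

lemma homogeneousSubmodule_le_of_isUnit_det {k : ℕ} [Fintype {s : σ →₀ ℕ // s.degree = k}]
    [DecidableEq {s : σ →₀ ℕ // s.degree = k}] {Q : Submodule R (MvPolynomial σ R)}
    {P : {s : σ →₀ ℕ // s.degree = k} → MvPolynomial σ R} (hP : ∀ s, (P s).IsHomogeneous k)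
    (hPQ : ∀ s, P s ∈ Q) (hdet : IsUnit (Matrix.of fun s t ↦ coeff t.1 (P s)).det) :
    homogeneousSubmodule σ R k ≤ Q := by
  set B := Matrix.of fun s t : {s : σ →₀ ℕ // s.degree = k} ↦ coeff t.1 (P s)
  intro p hp
  let c : {s : σ →₀ ℕ // s.degree = k} → R := fun s ↦ coeff s.1 p
  have hp_eq : p = ∑ s, Matrix.vecMul c B⁻¹ s • P s := by
    ext t
    by_cases ht : t.degree = k
    · have hc : Matrix.vecMul (Matrix.vecMul c B⁻¹) B = c := by
        rw [Matrix.vecMul_vecMul, Matrix.nonsing_inv_mul _ hdet, Matrix.vecMul_one]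
      simpa [coeff_sum, Matrix.vecMul, dotProduct, B, c] using (congrFun hc ⟨t, ht⟩).symm
    · simp [coeff_sum, IsHomogeneous.coeff_eq_zero hp ht, (hP _).coeff_eq_zero ht]
  rw [hp_eq]
  exact Submodule.sum_mem _ fun s _ ↦ Submodule.smul_mem _ _ (hPQ s)

lemma restrictTotalDegree_sup_eq_top {I : Ideal (MvPolynomial σ R)} {M : ℕ}
    (h : homogeneousSubmodule σ R (M + 1) ≤
      restrictTotalDegree σ R M ⊔ I.restrictScalars R) :
    restrictTotalDegree σ R M ⊔ I.restrictScalars R = ⊤ := by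
  set Q := restrictTotalDegree σ R M ⊔ I.restrictScalars R
  have hmonomial (s : σ →₀ ℕ) (a : R) (hs : s.degree ≤ M + 1) : monomial s a ∈ Q := by
    rcases hs.lt_or_eq with hlt | heq
    · refine Submodule.mem_sup_left ((mem_restrictTotalDegree _ _ _).2 ?_)
      exact (totalDegree_monomial_le _ _).trans (Nat.lt_succ_iff.1 hlt)
    · exact h (isHomogeneous_monomial _ heq)
  refine eq_top_iff.2 fun p _ ↦ ?_
  induction p using MvPolynomial.induction_on with
  | C a => exact hmonomial 0 a (by simp)
  | add p q hp hq => exact Submodule.add_mem _ (hp trivial) (hq trivial)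
  | mul_X p i hp =>
    obtain ⟨q, hq, v, hv, rfl⟩ := Submodule.mem_sup.1 (hp trivial)
    rw [add_mul]
    refine Submodule.add_mem _ ?_ (Submodule.mem_sup_right (I.mul_mem_right _ hv))
    rw [q.as_sum, Finset.sum_mul]
    refine Submodule.sum_mem _ fun s hs ↦ ?_
    rw [X, monomial_mul]
    refine hmonomial _ _ ?_
    have hsM : s.degree ≤ M := (le_totalDegree hs).trans ((mem_restrictTotalDegree _ _ _).1 hq)
    simpa [map_add] using hsM

lemma encard_zeroLocus_le_finrank {I : Ideal (MvPolynomial σ K)}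
    {Q : Submodule K (MvPolynomial σ K)} [FiniteDimensional K Q]
    (h : Q ⊔ I.restrictScalars K = ⊤) :
    (zeroLocus K I).encard ≤ Module.finrank K Q := by
  let π : Q →ₗ[K] MvPolynomial σ K ⧸ I := (Ideal.Quotient.mkₐ K I).toLinearMap ∘ₗ Q.subtype
  have hπ : Function.Surjective π := by
    intro y
    obtain ⟨p, rfl⟩ := Ideal.Quotient.mk_surjective y
    obtain ⟨q, hq, v, hv, rfl⟩ := Submodule.mem_sup.1 (h.ge (Submodule.mem_top (x := p)))
    exact ⟨⟨q, hq⟩, by simpa [π, Ideal.Quotient.eq_zero_iff_mem] using hv⟩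
  have : FiniteDimensional K (MvPolynomial σ K ⧸ I) := Module.Finite.of_surjective π hπ
  let ev (x : zeroLocus K I) : MvPolynomial σ K ⧸ I →ₐ[K] K :=
    Ideal.Quotient.liftₐ I (aeval x.1) fun _ hp ↦ x.2 _ hp
  have hev : Function.Injective ev := by
    refine fun x y hxy ↦ Subtype.ext (funext fun i ↦ ?_)
    simpa [ev] using DFunLike.congr_fun hxy (Ideal.Quotient.mk I (X i))
  have : Finite (zeroLocus K I) := Finite.of_injective ev hev
  rw [← Set.Finite.cast_ncard_eq (Set.toFinite _), Nat.cast_le, ← Nat.card_coe_set_eq]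
  calc Nat.card (zeroLocus K I)
    _ ≤ Nat.card (MvPolynomial σ K ⧸ I →ₐ[K] K) := Nat.card_le_card_of_injective ev hev
    _ ≤ Module.finrank K (MvPolynomial σ K ⧸ I) := card_algHom_le_finrank K _ K
    _ ≤ Module.finrank K Q := LinearMap.finrank_le_finrank_of_surjective hπ

variable [Fintype σ]

/-- The ideal of the section of the zero locus of `I` by the kernel of the matrix `A`. -/
def linearSectionIdeal (I : Ideal (MvPolynomial σ R)) (A : Matrix ι σ R) :
    Ideal (MvPolynomial σ R) :=
  I ⊔ Ideal.span (Set.range A.toMvPolynomial)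

lemma mem_zeroLocus_linearSectionIdeal {I : Ideal (MvPolynomial σ K)} {A : Matrix ι σ K}
    {x : σ → K} :
    x ∈ zeroLocus K (linearSectionIdeal I A) ↔ x ∈ zeroLocus K I ∧ A.mulVec x = 0 := by
  have hker : Set.range A.toMvPolynomial ⊆ RingHom.ker (aeval (R := K) x) ↔ A.mulVec x = 0 := by
    simp [Set.range_subset_iff, funext_iff, aeval_eq_eval, RingHom.mem_ker,
      Matrix.toMvPolynomial_eval_eq_apply]
  rw [← hker, ← Ideal.span_le]
  exact sup_le_iff (a := I) (c := RingHom.ker (aeval (R := K) x))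

lemma exists_isHomogeneous_of_mem_linearSectionIdeal [Fintype ι] {I : Ideal (MvPolynomial σ R)}
    (hI : I.IsHomogeneous (homogeneousSubmodule σ R)) {A : Matrix ι σ R} {M : ℕ}
    {p : MvPolynomial σ R} (hp : p.IsHomogeneous (M + 1)) (hpI : p ∈ linearSectionIdeal I A) :
    ∃ f ∈ I, f.IsHomogeneous (M + 1) ∧ ∃ g : ι → MvPolynomial σ R,
      (∀ l, (g l).IsHomogeneous M) ∧ p = f + ∑ l, A.toMvPolynomial l * g l := by
  obtain ⟨f, hf, r, hr, rfl⟩ := Submodule.mem_sup.1 hpI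
  obtain ⟨g, rfl⟩ := Ideal.mem_span_range_iff_exists_fun.1 hr
  refine ⟨homogeneousComponent (M + 1) f, homogeneousComponent_mem_of_mem hI hf _,
    homogeneousComponent_isHomogeneous _ _, fun l ↦ homogeneousComponent M (g l),
    fun l ↦ homogeneousComponent_isHomogeneous _ _, ?_⟩
  have hmul (l : ι) : homogeneousComponent (M + 1) (g l * A.toMvPolynomial l) =
      A.toMvPolynomial l * homogeneousComponent M (g l) := by
    rw [mul_comm (A.toMvPolynomial l), ← decomposition.decompose'_apply,
      ← decomposition.decompose'_apply]
    exact DirectSum.coe_decompose_mul_add_of_right_mem (homogeneousSubmodule σ R)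
      (A.toMvPolynomial_isHomogeneous l)
  conv_lhs => rw [← homogeneousComponent_eq_self hp]
  simp [hmul]

lemma exists_eval_uncurry_eq_det_coeff {τ : Type*} [Fintype τ] [DecidableEq τ] [Fintype ι]
    (e : τ → σ →₀ ℕ) (f : τ → MvPolynomial σ R) (g : τ → ι → MvPolynomial σ R) :
    ∃ F : MvPolynomial (ι × σ) R, ∀ A : Matrix ι σ R, eval (Function.uncurry A) F =
      (Matrix.of fun s t ↦ coeff (e t) (f s + ∑ l, A.toMvPolynomial l * g s l)).det := by
  let B : Matrix τ τ (MvPolynomial (ι × σ) R) := Matrix.of fun s t ↦ coeff (e t)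
    (map C (f s) + ∑ l, (Matrix.mvPolynomialX ι σ R).toMvPolynomial l * map C (g s l))
  refine ⟨B.det, fun A ↦ ?_⟩
  rw [RingHom.map_det]
  congr 1
  ext s t
  simp only [B, RingHom.mapMatrix_apply, Matrix.map_apply, Matrix.of_apply]
  have hX : (Matrix.mvPolynomialX ι σ R).map (eval (Function.uncurry A)) = A :=
    Matrix.mvPolynomialX_map_eval₂ (RingHom.id R) A
  have hC : (eval (Function.uncurry A)).comp C = RingHom.id R := by ext; simp
  simp only [← coeff_map, map_add, map_sum, map_mul, ← Matrix.toMvPolynomial_map,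
    MvPolynomial.map_map, hX, hC, map_id]

lemma exists_eval_ne_zero_imp_homogeneousSubmodule_le [Finite ι] {I : Ideal (MvPolynomial σ K)}
    (hI : I.IsHomogeneous (homogeneousSubmodule σ K)) {A₀ : Matrix ι σ K} {M : ℕ}
    (hM : homogeneousSubmodule σ K (M + 1) ≤ (linearSectionIdeal I A₀).restrictScalars K) :
    ∃ F : MvPolynomial (ι × σ) K, eval (Function.uncurry A₀) F ≠ 0 ∧
      ∀ A : Matrix ι σ K, eval (Function.uncurry A) F ≠ 0 →
        homogeneousSubmodule σ K (M + 1) ≤ (linearSectionIdeal I A).restrictScalars K := by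
  classical
  have := Fintype.ofFinite ι
  have : Finite {s : σ →₀ ℕ // s.degree = M + 1} :=
    ((Finsupp.finite_of_degree_le (M + 1)).subset fun s hs ↦ le_of_eq hs).to_subtype
  have := Fintype.ofFinite {s : σ →₀ ℕ // s.degree = M + 1}
  choose f hfI hf g hg hfg using fun s : {s : σ →₀ ℕ // s.degree = M + 1} ↦
    exists_isHomogeneous_of_mem_linearSectionIdeal hI (isHomogeneous_monomial (1 : K) s.2)
      (hM (isHomogeneous_monomial (1 : K) s.2))
  obtain ⟨F, hF⟩ := exists_eval_uncurry_eq_det_coeff Subtype.val f g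
  refine ⟨F, ?_, fun A hA ↦ ?_⟩
  · have hone : (Matrix.of fun s (t : {s : σ →₀ ℕ // s.degree = M + 1}) ↦
        coeff t.1 (f s + ∑ l, A₀.toMvPolynomial l * g s l)) = 1 := by
      ext s t
      simp [← hfg, coeff_monomial, Matrix.one_apply, Subtype.ext_iff]
    rw [hF, hone, Matrix.det_one]
    exact one_ne_zero
  · refine homogeneousSubmodule_le_of_isUnit_det (fun s ↦ ?_) (fun s ↦ ?_) (hF A ▸ hA.isUnit)
    · refine (hf s).add (IsHomogeneous.sum _ _ _ fun l _ ↦ ?_)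
      rw [add_comm]
      exact (A.toMvPolynomial_isHomogeneous l).mul (hg s l)
    · exact Submodule.add_mem_sup (hfI s) (Submodule.sum_mem _ fun l _ ↦
        Ideal.mul_mem_right _ _ (Ideal.subset_span ⟨l, rfl⟩))

lemma encard_fibre_le_finrank [Finite ι] {I : Ideal (MvPolynomial σ K)}
    (hI : I.IsHomogeneous (homogeneousSubmodule σ K)) {A : Matrix ι σ K} {M : ℕ}
    (hM : homogeneousSubmodule σ K (M + 1) ≤ (linearSectionIdeal I A).restrictScalars K)
    (c : ι → K) :
    {x | x ∈ zeroLocus K I ∧ A.mulVec x = c}.encard ≤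
      Module.finrank K (restrictTotalDegree σ K M) := by
  have := Fintype.ofFinite ι
  let J := I ⊔ Ideal.span (Set.range fun l ↦ A.toMvPolynomial l - C (c l))
  have hJ : restrictTotalDegree σ K M ⊔ J.restrictScalars K = ⊤ := by
    refine restrictTotalDegree_sup_eq_top fun p hp ↦ ?_
    obtain ⟨f, hf, -, g, hg, rfl⟩ :=
      exists_isHomogeneous_of_mem_linearSectionIdeal hI hp (hM hp)
    have hsplit : f + ∑ l, A.toMvPolynomial l * g l =
        ∑ l, c l • g l + (f + ∑ l, (A.toMvPolynomial l - C (c l)) * g l) := by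
      simp only [sub_mul, Finset.sum_sub_distrib, C_mul']
      ring
    rw [hsplit]
    refine Submodule.add_mem_sup (Submodule.sum_mem _ fun l _ ↦ Submodule.smul_mem _ _ ?_) ?_
    · exact (mem_restrictTotalDegree _ _ _).2 (hg l).totalDegree_le
    · exact Submodule.add_mem_sup hf (Submodule.sum_mem _ fun l _ ↦
        Ideal.mul_mem_right _ _ (Ideal.subset_span ⟨l, rfl⟩))
  refine (Set.encard_le_encard ?_).trans (encard_zeroLocus_le_finrank hJ)
  rintro x ⟨hxI, hxc⟩
  have hker : J ≤ RingHom.ker (aeval (R := K) x) := by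
    refine sup_le hxI (Ideal.span_le.2 ?_)
    rintro _ ⟨l, rfl⟩
    simp [aeval_eq_eval, RingHom.mem_ker, Matrix.toMvPolynomial_eval_eq_apply, hxc]
  exact hker

lemma exists_encard_fibre_le [IsAlgClosed K] [Finite ι] {I : Ideal (MvPolynomial σ K)}
    (hI : I.IsHomogeneous (homogeneousSubmodule σ K)) :
    ∃ b : ℕ, ∀ A : Matrix ι σ K, (∀ x ∈ zeroLocus K I, A.mulVec x = 0 → x = 0) →
      ∀ c, {x | x ∈ zeroLocus K I ∧ A.mulVec x = c}.encard ≤ b := by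
  obtain ⟨T, hT, hTeval⟩ := exists_finset_subset_eval_ne_zero
    {F : MvPolynomial (ι × σ) K | ∃ M, ∀ A : Matrix ι σ K, eval (Function.uncurry A) F ≠ 0 →
      homogeneousSubmodule σ K (M + 1) ≤ (linearSectionIdeal I A).restrictScalars K}
  have hTM : ∀ F ∈ T, ∃ M, ∀ A : Matrix ι σ K, eval (Function.uncurry A) F ≠ 0 →
      homogeneousSubmodule σ K (M + 1) ≤ (linearSectionIdeal I A).restrictScalars K := hT
  choose! M hM using hTM
  refine ⟨∑ F ∈ T, Module.finrank K (restrictTotalDegree σ K (M F)), fun A hA c ↦ ?_⟩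
  obtain ⟨M₀, hM₀⟩ := exists_homogeneousSubmodule_le_of_zeroLocus_subset
    (J := linearSectionIdeal I A) fun x hx ↦
      have hx' := mem_zeroLocus_linearSectionIdeal.1 hx
      hA x hx'.1 hx'.2
  obtain ⟨F₀, hF₀, hF₀M⟩ := exists_eval_ne_zero_imp_homogeneousSubmodule_le hI hM₀
  obtain ⟨F, hFT, hF⟩ := hTeval (Function.uncurry A) ⟨F₀, ⟨M₀, hF₀M⟩, hF₀⟩
  refine (encard_fibre_le_finrank hI (hM F hFT A hF) c).trans (Nat.cast_le.2 ?_)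
  exact Finset.single_le_sum (f := fun F ↦ Module.finrank K (restrictTotalDegree σ K (M F)))
    (fun _ _ ↦ Nat.zero_le _) hFT

end IdealsAndLinearForms

section LinearSections

open MvPolynomial Submodule

attribute [local instance] MvPolynomial.gradedAlgebra

lemma eval_smul_of_isHomogeneous_s3 {R σ : Type*} [CommSemiring R] {f : MvPolynomial σ R} {k : ℕ}
    (hf : f.IsHomogeneous k) (a : R) (x : σ → R) : eval (a • x) f = a ^ k * eval x f := by
  simp only [eval_eq, Finset.mul_sum]
  refine Finset.sum_congr rfl fun s hs ↦ ?_
  simp only [Pi.smul_apply, smul_eq_mul, mul_pow, Finset.prod_mul_distrib,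
    Finset.prod_pow_eq_pow_sum, hf.degree_eq_sum_deg_support hs]
  exact mul_left_comm _ _ _

lemma exists_matrix_mulVec_eq_zero_iff {K σ : Type*} [Field K] [Fintype σ]
    (H : Submodule K (σ → K)) : ∃ A : Matrix σ σ K, ∀ x, A.mulVec x = 0 ↔ x ∈ H := by
  classical
  obtain ⟨H', hH'⟩ := H.exists_isCompl
  refine ⟨LinearMap.toMatrix' (H'.projection H hH'.symm), fun x ↦ ?_⟩
  rw [LinearMap.toMatrix'_mulVec, ← LinearMap.mem_ker, ker_projection]

lemma exists_le_inf_ker_sup_span {K E : Type*} [DivisionRing K] [AddCommGroup E] [Module K E]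
    (W : Submodule K E) (φ : Module.Dual K E) : ∃ v, W ≤ W ⊓ LinearMap.ker φ ⊔ span K {v} := by
  by_cases h : ∃ v ∈ W, φ v ≠ 0
  · obtain ⟨v, hvW, hv⟩ := h
    refine ⟨v, fun w hw ↦ ?_⟩
    have hsplit : w = (w - (φ w / φ v) • v) + (φ w / φ v) • v := by simp
    rw [hsplit]
    refine add_mem_sup ⟨W.sub_mem hw (W.smul_mem _ hvW), ?_⟩
      (smul_mem _ _ (mem_span_singleton_self v))
    simp [hv]
  · push Not at h
    exact ⟨0, fun w hw ↦ mem_sup_left ⟨hw, h w hw⟩⟩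

variable {N : ℕ}

lemma mk_mem_planeSet {W : Submodule KK (Fin (N + 1) → KK)} {v : Fin (N + 1) → KK} (hv : v ≠ 0) :
    Projectivization.mk KK v hv ∈ planeSet W ↔ v ∈ W := by
  obtain ⟨a, ha⟩ := Projectivization.exists_smul_eq_mk_rep KK v hv
  rw [planeSet, Set.mem_ofPred_eq, ← ha]
  exact W.smul_mem_iff' a

lemma ProjClosed.exists_ideal {V : Set (Pn N)} (hV : ProjClosed V) :
    ∃ I : Ideal (MvPolynomial (Fin (N + 1)) KK),
      I.IsHomogeneous (homogeneousSubmodule (Fin (N + 1)) KK) ∧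
      ∀ (v : Fin (N + 1) → KK) (hv : v ≠ 0),
        Projectivization.mk KK v hv ∈ V ↔ v ∈ zeroLocus KK I := by
  obtain ⟨S, hS, rfl⟩ := hV
  refine ⟨Ideal.span S, Ideal.homogeneous_span _ _ hS, fun v hv ↦ ?_⟩
  obtain ⟨a, ha⟩ := Projectivization.exists_smul_eq_mk_rep KK v hv
  rw [zeroLocus_span, projZeros, Set.mem_ofPred_eq, Set.mem_ofPred_eq, ← ha]
  refine forall₂_congr fun f hf ↦ ?_
  obtain ⟨k, hk⟩ := hS f hf
  rw [Units.smul_def, eval_smul_of_isHomogeneous_s3 hk, aeval_eq_eval]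
  simp

lemma exists_mk_add_eq_of_mem_planeSet_sup_span {H : Submodule KK (Fin (N + 1) → KK)}
    {v : Fin (N + 1) → KK} {x : Pn N} (hx : x ∈ planeSet (H ⊔ span KK {v}))
    (hxH : x ∉ planeSet H) :
    ∃ h ∈ H, ∃ hv : h + v ≠ 0, Projectivization.mk KK (h + v) hv = x := by
  obtain ⟨h, hh, w, hw, hx⟩ := mem_sup.1 hx
  obtain ⟨a, rfl⟩ := mem_span_singleton.1 hw
  have ha : a ≠ 0 := by
    rintro rfl
    rw [zero_smul, add_zero] at hx
    exact hxH (hx ▸ hh :)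
  have hscale : a⁻¹ • h + v = a⁻¹ • x.rep := by
    rw [← hx, smul_add, inv_smul_smul₀ ha]
  refine ⟨a⁻¹ • h, H.smul_mem _ hh,
    hscale ▸ smul_ne_zero (inv_ne_zero ha) x.rep_nonzero, ?_⟩
  conv_rhs => rw [← x.mk_rep]
  exact (Projectivization.mk_eq_mk_iff' _ _ _ _ _).2 ⟨a⁻¹, hscale.symm⟩

lemma exists_encard_inter_planeSet_sup_span_le {V : Set (Pn N)} (hV : ProjClosed V) :
    ∃ b : ℕ, ∀ (H : Submodule KK (Fin (N + 1) → KK)) (v : Fin (N + 1) → KK),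
      Disjoint V (planeSet H) → (V ∩ planeSet (H ⊔ span KK {v})).encard ≤ b := by
  obtain ⟨I, hI, hVI⟩ := hV.exists_ideal
  obtain ⟨b, hb⟩ := exists_encard_fibre_le (ι := Fin (N + 1)) hI
  refine ⟨b, fun H v hVH ↦ ?_⟩
  obtain ⟨A, hA⟩ := exists_matrix_mulVec_eq_zero_iff H
  have hker : ∀ x ∈ zeroLocus KK I, A.mulVec x = 0 → x = 0 := by
    intro x hxI hAx
    by_contra hx
    exact hVH.notMem_of_mem_left ((hVI x hx).2 hxI) ((mk_mem_planeSet hx).2 ((hA x).1 hAx))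
  choose! h hhH hv hmk using fun x (hx : x ∈ V ∩ planeSet (H ⊔ span KK {v})) ↦
    exists_mk_add_eq_of_mem_planeSet_sup_span hx.2 (hVH.notMem_of_mem_left hx.1)
  refine (Set.encard_le_encard_of_injOn (f := fun x ↦ h x + v) ?_ ?_).trans
    (hb A hker (A.mulVec v))
  · refine fun x hx ↦ ⟨(hVI _ (hv x hx)).1 ((hmk x hx).symm ▸ hx.1), ?_⟩
    rw [Matrix.mulVec_add, (hA _).2 (hhH x hx), zero_add]
  · intro x hx x' hx' hxx'
    rw [← hmk x hx, ← hmk x' hx']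
    simp only [hxx']

lemma bddAbove_ncard_inter_planeSet {V : Set (Pn N)} (hV : ProjClosed V) :
    BddAbove {k : ℕ | ∃ W : Submodule KK (Fin (N + 1) → KK),
      (V ∩ planeSet W).Finite ∧ (V ∩ planeSet W).ncard = k} := by
  obtain ⟨b, hb⟩ := exists_encard_inter_planeSet_sup_span_le hV
  refine ⟨b, ?_⟩
  rintro k ⟨W, hfin, rfl⟩
  have := hfin.to_subtype
  obtain ⟨φ, hφ⟩ := Module.exists_dual_forall_apply_ne_zero (K := KK)
    (fun x : ↥(V ∩ planeSet W) ↦ x.1.rep) fun x ↦ x.1.rep_nonzero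
  obtain ⟨v, hv⟩ := exists_le_inf_ker_sup_span W φ
  have hdisj : Disjoint V (planeSet (W ⊓ LinearMap.ker φ)) :=
    Set.disjoint_left.2 fun x hxV hx ↦ hφ ⟨x, hxV, hx.1⟩ hx.2
  have hsub : V ∩ planeSet W ⊆ V ∩ planeSet (W ⊓ LinearMap.ker φ ⊔ span KK {v}) :=
    fun x hx ↦ ⟨hx.1, hv hx.2⟩
  exact (Set.encard_le_coe_iff_finite_ncard_le.1
    ((Set.encard_le_encard hsub).trans (hb _ v hdisj))).2

lemma encard_inter_planeSet_sup_span_le_projDeg {V : Set (Pn N)} (hV : ProjClosed V)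
    {H : Submodule KK (Fin (N + 1) → KK)} (hVH : Disjoint V (planeSet H))
    (v : Fin (N + 1) → KK) : (V ∩ planeSet (H ⊔ span KK {v})).encard ≤ projDeg V := by
  obtain ⟨b, hb⟩ := exists_encard_inter_planeSet_sup_span_le hV
  have hfin := (Set.encard_le_coe_iff_finite_ncard_le.1 (hb H v hVH)).1
  exact Set.encard_le_coe_iff_finite_ncard_le.2
    ⟨hfin, le_csSup (bddAbove_ncard_inter_planeSet hV) ⟨_, hfin, rfl⟩⟩

end LinearSections

section Joins

open Submodule

lemma mem_sup_span_singleton_exchange {K E : Type*} [DivisionRing K] [AddCommGroup E] [Module K E]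
    {W : Submodule K E} {p q : E} (hpq : p ∈ W ⊔ span K {q}) (hp : p ∉ W) :
    q ∈ W ⊔ span K {p} := by
  have h : p ∈ span K (insert q (W : Set E)) := by rwa [span_insert, span_eq, sup_comm]
  have := mem_span_insert_exchange h (by rwa [span_eq])
  rwa [span_insert, span_eq, sup_comm] at this

lemma add_smul_mem_of_two_points {K E : Type*} [DivisionRing K] [AddCommGroup E] [Module K E]
    {U : Submodule K E} {p v : E} {s t : K} (hst : s ≠ t) (hs : p + s • v ∈ U)
    (ht : p + t • v ∈ U) (r : K) : p + r • v ∈ U := by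
  have hv : v ∈ U := (U.smul_mem_iff (sub_ne_zero.2 hst)).1 <| by
    have := U.sub_mem hs ht
    rwa [add_sub_add_left_eq_sub, ← sub_smul] at this
  have hp : p ∈ U := (U.add_mem_iff_left (U.smul_mem s hv)).1 hs
  exact U.add_mem hp (U.smul_mem r hv)

/-- A line meeting `J` in more than `b` points with parameter in `K` lies in `J`, as holds for the
zero set of a polynomial of degree at most `b`. -/
def LineBounded (K : Type*) {E : Type*} [AddCommGroup E] [SMul K E] (b : ℕ) (J : Set E) :
    Prop :=
  ∀ (p v : E) (T : Finset K), b < T.card → (∀ t ∈ T, p + t • v ∈ J) → ∀ t : K, p + t • v ∈ J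

lemma LineBounded.finite_of_notMem {K E : Type*} [AddCommGroup E] [SMul K E] {b : ℕ} {J : Set E}
    (hJ : LineBounded K b J) {p v : E} {t : K} (ht : p + t • v ∉ J) :
    {s : K | p + s • v ∈ J}.Finite := by
  by_contra hinf
  obtain ⟨T, hT, hcard⟩ := Set.Infinite.exists_subset_card_eq hinf (b + 1)
  exact ht (hJ p v T (by lia) (fun s hs ↦ hT hs) t)

lemma LineBounded.eq_univ_of_grid_subset {K ι : Type*} [Ring K] [Finite ι] {b : ℕ}
    {J : Set (ι → K)} (hJ : LineBounded K b J) {G : Finset K} (hG : b < G.card)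
    (hgrid : ∀ p : ι → K, (∀ i, p i ∈ G) → p ∈ J) : J = Set.univ := by
  classical
  have := Fintype.ofFinite ι
  have hpartial (s : Finset ι) : ∀ p : ι → K, (∀ i ∉ s, p i ∈ G) → p ∈ J := by
    induction s using Finset.induction_on with
    | empty => exact fun p hp ↦ hgrid p fun i ↦ hp i (Finset.notMem_empty i)
    | insert a s _ ih =>
      intro p hp
      have hline (t : K) :
          Function.update p a 0 + t • Pi.single a 1 = Function.update p a t := by
        ext i
        obtain rfl | hi := eq_or_ne i a <;> simp [*]
      have := hJ (Function.update p a 0) (Pi.single a 1) G hG (fun t ht ↦ ?_) (p a)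
      · rwa [hline, Function.update_eq_self] at this
      · rw [hline]
        refine ih _ fun i hi ↦ ?_
        obtain rfl | hia := eq_or_ne i a
        · rwa [Function.update_self]
        · rw [Function.update_of_ne hia]
          exact hp i (by simp [hia, hi])
  exact Set.eq_univ_of_forall fun p ↦ hpartial Finset.univ p (by simp)

lemma LineBounded.subset_or_subset_of_subset_union {K E : Type*} [Ring K] [Infinite K]
    [AddCommGroup E] [Module K E] {b₁ b₂ : ℕ} {J₁ J₂ : Set E} (h₁ : LineBounded K b₁ J₁)
    (h₂ : LineBounded K b₂ J₂) {U : Submodule K E} (hU : (U : Set E) ⊆ J₁ ∪ J₂) :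
    (U : Set E) ⊆ J₁ ∨ (U : Set E) ⊆ J₂ := by
  by_contra! hcon
  obtain ⟨⟨p₁, hp₁, hn₁⟩, ⟨p₂, hp₂, hn₂⟩⟩ := hcon.imp Set.not_subset.1 Set.not_subset.1
  have hfin₁ := h₁.finite_of_notMem (p := p₁) (v := p₂ - p₁) (t := 0) (by simpa using hn₁)
  have hfin₂ := h₂.finite_of_notMem (p := p₁) (v := p₂ - p₁) (t := 1) (by simpa using hn₂)
  exact Set.infinite_univ <| (hfin₁.union hfin₂).subset fun t _ ↦
    hU (U.add_mem hp₁ (U.smul_mem t (U.sub_mem hp₂ hp₁)))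

variable {N : ℕ} {V : Set (Pn N)} {W : Submodule KK (Fin (N + 1) → KK)}

/-- The affine cone over the join of `V` with the linear space `ℙ(W)`: the vectors lying in `W` or
in the span of `W` and a point of `V`. -/
def joinCone (V : Set (Pn N)) (W : Submodule KK (Fin (N + 1) → KK)) : Set (Fin (N + 1) → KK) :=
  {p | p ∈ W ∨ ∃ x ∈ V, p ∈ W ⊔ span KK {x.rep}}

lemma disjoint_planeSet_sup_span (hVW : Disjoint V (planeSet W)) {p : Fin (N + 1) → KK}
    (hp : p ∉ joinCone V W) : Disjoint V (planeSet (W ⊔ span KK {p})) :=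
  Set.disjoint_left.2 fun x hx hxp ↦ hp <| Or.inr
    ⟨x, hx, mem_sup_span_singleton_exchange hxp (hVW.notMem_of_mem_left hx)⟩

lemma notMem_and_exists_mem_of_mem_joinCone {p v : Fin (N + 1) → KK} {r s t : KK} (hst : s ≠ t)
    (hr : p + r • v ∉ joinCone V W) (hs : p + s • v ∈ joinCone V W)
    (ht : p + t • v ∈ joinCone V W) :
    p + t • v ∉ W ∧ ∃ x ∈ V, p + t • v ∈ W ⊔ span KK {x.rep} := by
  have htW : p + t • v ∉ W := by
    intro htW
    refine hr (hs.imp (fun hsW ↦ add_smul_mem_of_two_points hst hsW htW r) ?_)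
    exact fun ⟨x, hx, hsx⟩ ↦ ⟨x, hx, add_smul_mem_of_two_points hst hsx (mem_sup_left htW) r⟩
  exact ⟨htW, ht.resolve_left htW⟩

lemma lineBounded_joinCone (hV : ProjClosed V) (hVW : Disjoint V (planeSet W)) :
    LineBounded KK (projDeg V + 1) (joinCone V W) := by
  intro p v T hT hTJ r
  by_contra hr
  have hpt (t) (ht : t ∈ T) : p + t • v ∉ W ∧ ∃ x ∈ V, p + t • v ∈ W ⊔ span KK {x.rep} := by
    obtain ⟨s, hs, hst⟩ := T.exists_mem_ne (by lia) t
    exact notMem_and_exists_mem_of_mem_joinCone hst hr (hTJ s hs) (hTJ t ht)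
  choose! htW x hxV htx using hpt
  have hmaps : Set.MapsTo x T
      (V ∩ planeSet (W ⊔ span KK {p + r • v} ⊔ span KK {v})) := by
    refine fun t ht ↦ ⟨hxV t ht, ?_⟩
    have hxt := mem_sup_span_singleton_exchange (htx t ht) (htW t ht)
    refine (sup_le (le_sup_left.trans le_sup_left) ?_ :
      W ⊔ span KK {p + t • v} ≤ W ⊔ span KK {p + r • v} ⊔ span KK {v}) hxt
    have hsplit : p + t • v = (p + r • v) + (t - r) • v := by module
    rw [span_singleton_le_iff_mem, hsplit]
    exact add_mem_sup (mem_sup_right (mem_span_singleton_self _))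
      (smul_mem _ _ (mem_span_singleton_self v))
  have hinj : Set.InjOn x T := by
    intro s hs t ht hst
    by_contra hne
    have hsx := htx s hs
    rw [hst] at hsx
    exact hr (Or.inr ⟨x t, hxV t ht, add_smul_mem_of_two_points hne hsx (htx t ht) r⟩)
  have hle := (Set.encard_le_encard_of_injOn hmaps hinj).trans
    (encard_inter_planeSet_sup_span_le_projDeg hV (disjoint_planeSet_sup_span hVW hr) v)
  rw [Set.encard_coe_eq_coe_finsetCard, Nat.cast_le] at hle
  lia

end Joins

section Dimension

open MvPolynomial Submodule

variable {N : ℕ} {V V₁ V₂ : Set (Pn N)} {W U : Submodule KK (Fin (N + 1) → KK)}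

lemma projClosed_planeSet (W : Submodule KK (Fin (N + 1) → KK)) : ProjClosed (planeSet W) := by
  obtain ⟨A, hA⟩ := exists_matrix_mulVec_eq_zero_iff W
  refine ⟨Set.range A.toMvPolynomial, ?_, ?_⟩
  · rintro _ ⟨i, rfl⟩
    exact ⟨1, A.toMvPolynomial_isHomogeneous i⟩
  · ext x
    simp only [planeSet, projZeros, Set.mem_ofPred_eq, ← hA, Set.forall_mem_range,
      Matrix.toMvPolynomial_eval_eq_apply, funext_iff, Pi.zero_apply]

lemma ProjClosed.inter (h₁ : ProjClosed V₁) (h₂ : ProjClosed V₂) : ProjClosed (V₁ ∩ V₂) := by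
  obtain ⟨S₁, hS₁, rfl⟩ := h₁
  obtain ⟨S₂, hS₂, rfl⟩ := h₂
  refine ⟨S₁ ∪ S₂, fun f hf ↦ hf.elim (hS₁ f) (hS₂ f), ?_⟩
  ext x
  simp only [projZeros, Set.mem_inter_iff, Set.mem_ofPred_eq, Set.mem_union, or_imp, forall_and]

lemma ProjClosed.mem_iff_rep_mem_zeroLocus_vanishingIdeal (hV : ProjClosed V) {x : Pn N} :
    x ∈ V ↔ x.rep ∈ zeroLocus KK (vanishingIdeal KK (Projectivization.rep '' V)) := by
  refine ⟨fun hx ↦ zeroLocus_vanishingIdeal_le _ ⟨x, hx, rfl⟩, fun hx ↦ ?_⟩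
  obtain ⟨S, -, rfl⟩ := hV
  exact fun f hf ↦ hx f fun _ ⟨_, hy, hyx⟩ ↦ hyx ▸ hy f hf

instance wellFoundedLT_projClosed : WellFoundedLT {V : Set (Pn N) // ProjClosed V} := by
  refine StrictAnti.wellFoundedLT
    (f := fun V ↦ vanishingIdeal KK (Projectivization.rep '' V.1)) fun V₁ V₂ hlt ↦ ?_
  refine lt_of_le_not_ge (vanishingIdeal_anti_mono (Set.image_mono hlt.le)) fun hge ↦ ?_
  refine hlt.not_ge fun x hx ↦ ?_
  rw [V₁.2.mem_iff_rep_mem_zeroLocus_vanishingIdeal]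
  exact zeroLocus_anti_mono hge (V₂.2.mem_iff_rep_mem_zeroLocus_vanishingIdeal.1 hx)

lemma projDim_mono (h : V₁ ⊆ V₂) : projDim V₁ ≤ projDim V₂ :=
  Order.krullDim_le_of_strictMono (fun Z ↦ ⟨Z.1, Z.2.1, Z.2.2.trans h⟩) fun _ _ hlt ↦ hlt

lemma projDim_add_one_le (hV₁ : ProjVariety V₁) (h : V ⊂ V₁) : projDim V + 1 ≤ projDim V₁ := by
  rcases isEmpty_or_nonempty {Z : Set (Pn N) // ProjVariety Z ∧ Z ⊆ V} with hV | hV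
  · simp [projDim, Order.krullDim_eq_bot]
  · rw [projDim, ← Order.krullDim_WithTop]
    refine Order.krullDim_le_of_strictMono
      (fun Z ↦ Z.recTopCoe ⟨V₁, hV₁, subset_rfl⟩ fun Z ↦ ⟨Z.1, Z.2.1, Z.2.2.trans h.1⟩) ?_
    intro Y Z hYZ
    induction Y using WithTop.recTopCoe with
    | top => exact absurd hYZ not_top_lt
    | coe Y =>
      induction Z using WithTop.recTopCoe with
      | top => exact Y.2.2.trans_ssubset h
      | coe Z => exact (WithTop.coe_lt_coe.1 hYZ : Y < Z)

lemma exists_projVariety_subset_joinCone (hV : ProjClosed V) (hVW : Disjoint V (planeSet W))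
    (hUW : ¬ U ≤ W) (hU : (U : Set (Fin (N + 1) → KK)) ⊆ joinCone V W) :
    ∃ V₁ ⊆ V, ProjVariety V₁ ∧ (U : Set (Fin (N + 1) → KK)) ⊆ joinCone V₁ W := by
  obtain ⟨⟨V₁, hV₁⟩, hsub, hfull, hmin⟩ := exists_minimal_le_of_wellFoundedLT
    (fun Z : {Z : Set (Pn N) // ProjClosed Z} ↦ (U : Set (Fin (N + 1) → KK)) ⊆ joinCone Z.1 W)
    ⟨V, hV⟩ hU
  refine ⟨V₁, hsub, ⟨hV₁, ?_, fun C₁ C₂ hC₁ hC₂ hcover ↦ ?_⟩, hfull⟩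
  · obtain ⟨p, hpU, hpW⟩ := Set.not_subset.1 hUW
    obtain ⟨x, hx, -⟩ := (hfull hpU).resolve_left hpW
    exact ⟨x, hx⟩
  · have hunion : (U : Set (Fin (N + 1) → KK)) ⊆
        joinCone (V₁ ∩ C₁) W ∪ joinCone (V₁ ∩ C₂) W := by
      intro p hp
      rcases hfull hp with hpW | ⟨x, hx, hpx⟩
      · exact Or.inl (Or.inl hpW)
      · exact (hcover hx).imp (fun hxC ↦ Or.inr ⟨x, ⟨hx, hxC⟩, hpx⟩)
          fun hxC ↦ Or.inr ⟨x, ⟨hx, hxC⟩, hpx⟩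
    have hline {C : Set (Pn N)} (hC : ProjClosed C) :=
      lineBounded_joinCone (hV₁.inter hC) (hVW.mono_left (Set.inter_subset_left.trans hsub))
    have hcontain {C : Set (Pn N)} (hC : ProjClosed C)
        (h : (U : Set (Fin (N + 1) → KK)) ⊆ joinCone (V₁ ∩ C) W) : V₁ ⊆ C :=
      Set.subset_inter_iff.1 (hmin (y := ⟨V₁ ∩ C, hV₁.inter hC⟩) h Set.inter_subset_left) |>.2
    exact ((hline hC₁).subset_or_subset_of_subset_union (hline hC₂) hunion).imp
      (hcontain hC₁) (hcontain hC₂)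

lemma subset_joinCone_inter_planeSet (hWU : W ≤ U)
    (hU : (U : Set (Fin (N + 1) → KK)) ⊆ joinCone V W) :
    (U : Set (Fin (N + 1) → KK)) ⊆ joinCone (V ∩ planeSet U) W := by
  intro p hp
  by_cases hpW : p ∈ W
  · exact Or.inl hpW
  · obtain ⟨x, hx, hpx⟩ := (hU hp).resolve_left hpW
    have hxU : x.rep ∈ U := (sup_le hWU ((span_singleton_le_iff_mem _ _).2 hp) :
      W ⊔ span KK {p} ≤ U) (mem_sup_span_singleton_exchange hpx hpW)
    exact Or.inr ⟨x, ⟨hx, hxU⟩, hpx⟩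

lemma joinCone_subset_of_subset_planeSet (hWU : W ≤ U) (hV : V ⊆ planeSet U) :
    joinCone V W ⊆ U := by
  rintro p (hpW | ⟨x, hx, hpx⟩)
  · exact hWU hpW
  · exact sup_le hWU ((span_singleton_le_iff_mem _ _).2 (hV hx)) hpx

lemma exists_le_lt_finrank_add_one_eq {K E : Type*} [DivisionRing K] [AddCommGroup E] [Module K E]
    [FiniteDimensional K E] {W U : Submodule K E} (hWU : W < U) :
    ∃ U', W ≤ U' ∧ U' < U ∧ Module.finrank K U' + 1 = Module.finrank K U := by
  obtain ⟨U', hWU', hU'⟩ := exists_le_covBy_of_lt hWU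
  obtain ⟨p, hpU, hpU'⟩ := Set.exists_of_ssubset hU'.lt
  have hsup : U' ⊔ span K {p} = U :=
    (hU'.eq_or_eq le_sup_left (sup_le hU'.le ((span_singleton_le_iff_mem _ _).2 hpU))).resolve_left
      fun h ↦ hpU' (h ▸ mem_sup_right (mem_span_singleton_self p))
  exact ⟨U', hWU', hU'.lt, by rw [← hsup, finrank_sup_span_singleton hpU']⟩

lemma le_projDim_of_subset_joinCone {r : ℕ} (hV : ProjClosed V)
    (hVW : Disjoint V (planeSet W)) (hWU : W ≤ U)
    (hr : Module.finrank KK W + r < Module.finrank KK U)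
    (hU : (U : Set (Fin (N + 1) → KK)) ⊆ joinCone V W) : (r : WithBot ℕ∞) ≤ projDim V := by
  induction r generalizing V U with
  | zero =>
    have hUW : ¬ U ≤ W := fun hle ↦ by
      have := finrank_mono hle
      lia
    obtain ⟨V₁, hsub, hV₁, -⟩ := exists_projVariety_subset_joinCone hV hVW hUW hU
    have : Nonempty {Z : Set (Pn N) // ProjVariety Z ∧ Z ⊆ V} := ⟨V₁, hV₁, hsub⟩
    exact Order.krullDim_nonneg
  | succ r ih =>
    have hlt : W < U := lt_of_le_of_ne hWU (by rintro rfl; lia)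
    obtain ⟨V₁, hsub, hV₁, hU₁⟩ := exists_projVariety_subset_joinCone hV hVW hlt.not_ge hU
    obtain ⟨U', hWU', hU'U, hrank⟩ := exists_le_lt_finrank_add_one_eq hlt
    have hdim : (r : WithBot ℕ∞) ≤ projDim (V₁ ∩ planeSet U') :=
      ih (hV₁.1.inter (projClosed_planeSet U')) (hVW.mono_left (Set.inter_subset_left.trans hsub))
        hWU' (by lia) (subset_joinCone_inter_planeSet hWU' (subset_trans hU'U.le hU₁))
    have hssub : V₁ ∩ planeSet U' ⊂ V₁ :=
      Set.inter_ssubset_left_iff.2 fun hV₁U' ↦ hU'U.not_ge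
        (subset_trans hU₁ (joinCone_subset_of_subset_planeSet hWU' hV₁U') :)
    calc ((r + 1 : ℕ) : WithBot ℕ∞) ≤ projDim (V₁ ∩ planeSet U') + 1 := by
          push_cast
          gcongr
      _ ≤ projDim V₁ := projDim_add_one_le hV₁ hssub
      _ ≤ projDim V := projDim_mono hsub

end Dimension

section Centre

open Submodule

variable {N m : ℕ} {V : Set (Pn N)}

lemma joinCone_ne_univ {W : Submodule KK (Fin (N + 1) → KK)} (hV : ProjClosed V)
    (hVW : Disjoint V (planeSet W)) (hdim : projDim V ≤ m) (hW : Module.finrank KK W + m < N) :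
    joinCone V W ≠ Set.univ := by
  intro huniv
  have hle : ((m + 1 : ℕ) : WithBot ℕ∞) ≤ projDim V := by
    refine le_projDim_of_subset_joinCone hV hVW le_top ?_ (huniv ▸ Set.subset_univ _)
    rw [finrank_top, Module.finrank_fin_fun]
    lia
  have hlt : m + 1 ≤ m := by exact_mod_cast hle.trans hdim
  lia

lemma exists_coeK_notMem_of_lineBounded {n b : ℕ} {J : Set (Fin n → KK)}
    (hJ : LineBounded KK b J) (hne : J ≠ Set.univ) :
    ∃ p : Fin n → ℤ, (∀ i, |p i| ≤ b) ∧ coeK p ∉ J := by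
  by_contra! hgrid
  refine hne (hJ.eq_univ_of_grid_subset
    (G := (Finset.range (b + 1)).map Nat.castEmbedding) (by simp) fun p hp ↦ ?_)
  simp only [Finset.mem_map, Finset.mem_range, Nat.castEmbedding_apply] at hp
  choose q hq hqp using hp
  have hcoe : coeK (fun i ↦ (q i : ℤ)) = p := funext fun i ↦ by simp [coeK, hqp]
  rw [← hcoe]
  exact hgrid _ fun i ↦ by
    have := hq i
    rw [Nat.abs_cast]
    lia

lemma exists_integral_disjoint_planeSet_span (hV : ProjClosed V) (hdim : projDim V ≤ m) {k : ℕ}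
    (hk : k ≤ N - m) :
    ∃ w : Fin k → Fin (N + 1) → ℤ, (∀ i j, |w i j| ≤ projDeg V + 1) ∧
      LinearIndependent KK (coeK ∘ w) ∧ Disjoint V (planeSet (span KK (Set.range (coeK ∘ w)))) := by
  induction k with
  | zero =>
    refine ⟨Fin.elim0, fun i ↦ i.elim0, linearIndependent_empty_type, ?_⟩
    refine Set.disjoint_left.2 fun x _ hx ↦ x.rep_nonzero ?_
    simpa [planeSet] using hx
  | succ k ih =>
    obtain ⟨w, hw, hli, hdisj⟩ := ih (by lia)
    have hrank := finrank_span_eq_card hli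
    rw [Fintype.card_fin] at hrank
    obtain ⟨p, hp, hpJ⟩ := exists_coeK_notMem_of_lineBounded (lineBounded_joinCone hV hdisj)
      (joinCone_ne_univ hV hdisj hdim (by lia))
    have hcons : coeK ∘ (Fin.cons p w : Fin (k + 1) → Fin (N + 1) → ℤ) =
        Fin.cons (coeK p) (coeK ∘ w) := Fin.comp_cons _ _ _
    refine ⟨Fin.cons p w, Fin.cases (by simpa using hp) (by simpa using hw), ?_, ?_⟩
    · rw [hcons, linearIndependent_finCons]
      exact ⟨hli, fun h ↦ hpJ (Or.inl h)⟩
    · rw [hcons, Fin.range_cons, span_insert, sup_comm]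
      exact disjoint_planeSet_sup_span hdisj hpJ

end Centre

section Counting

open Submodule

lemma abs_add_sum_smul_apply_le {ι κ : Type*} [Fintype κ] {w : κ → ι → ℤ} {b D : ℕ}
    (hD : ∀ i j, |w i j| ≤ D) {x : ι → ℤ} {a : κ → ℤ} {j : ι} (hx : |x j| ≤ b)
    (ha : ∀ i, |a i| ≤ b) :
    |(x + ∑ i, a i • w i) j| ≤ (b * (1 + Fintype.card κ * D) : ℕ) := by
  have hterm (i : κ) : |a i * w i j| ≤ b * D := by
    rw [abs_mul]
    exact mul_le_mul (ha i) (hD i j) (abs_nonneg _) (Nat.cast_nonneg b)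
  calc |(x + ∑ i, a i • w i) j| = |x j + ∑ i, a i * w i j| := by simp [Finset.sum_apply]
    _ ≤ |x j| + ∑ i, |a i * w i j| :=
        (abs_add_le _ _).trans (by gcongr; exact Finset.abs_sum_le_sum_abs _ _)
    _ ≤ b + Fintype.card κ * (b * D) := by
        gcongr
        simpa using Finset.sum_le_card_nsmul Finset.univ _ _ fun i _ ↦ hterm i
    _ = (b * (1 + Fintype.card κ * D) : ℕ) := by push_cast; ring

lemma card_mul_pow_le_of_forall_sub_mem_span {ι κ : Type*} [Fintype ι] [Fintype κ]
    {w : κ → ι → ℤ} (hw : LinearIndependent ℤ w) {b c D : ℕ} (hD : ∀ i j, |w i j| ≤ D)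
    {P : Finset (ι → ℤ)} (hP : ∀ x ∈ P, ∀ j, |x j| ≤ b)
    (hc : ∀ F ⊆ P, ∀ y, (∀ x ∈ F, y - x ∈ span ℤ (Set.range w)) → F.card ≤ c) :
    P.card * (b + 1) ^ Fintype.card κ ≤
      c * (2 * (b * (1 + Fintype.card κ * D)) + 1) ^ Fintype.card ι := by
  classical
  set R := b * (1 + Fintype.card κ * D)
  let coeffs : Finset (κ → ℤ) := Fintype.piFinset fun _ ↦ Finset.Icc 0 (b : ℤ)
  let box : Finset (ι → ℤ) := Fintype.piFinset fun _ ↦ Finset.Icc (-(R : ℤ)) R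
  have hcoeffs : coeffs.card = (b + 1) ^ Fintype.card κ := by
    simp [coeffs, Fintype.card_piFinset]
  have hbox : box.card = (2 * R + 1) ^ Fintype.card ι := by
    simp only [box, Fintype.card_piFinset, Int.card_Icc, Finset.prod_const, Finset.card_univ]
    congr 1
    lia
  rw [← hcoeffs, ← Finset.card_product, ← hbox]
  refine Finset.card_le_mul_card_image_of_maps_to (f := fun q ↦ q.1 + ∑ i, q.2 i • w i) ?_ c ?_
  · rintro ⟨x, a⟩ hxa
    simp only [coeffs, Finset.mem_product, Fintype.mem_piFinset, Finset.mem_Icc] at hxa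
    refine Fintype.mem_piFinset.2 fun j ↦ Finset.mem_Icc.2 <| abs_le.1 ?_
    refine abs_add_sum_smul_apply_le hD (hP x hxa.1 j) fun i ↦ ?_
    rw [abs_of_nonneg (hxa.2 i).1]
    exact (hxa.2 i).2
  · intro y _
    rw [← Finset.card_image_of_injOn (f := Prod.fst)]
    · refine hc _ (fun x hx ↦ ?_) y fun x hx ↦ ?_ <;>
        obtain ⟨⟨x, a⟩, hxa, rfl⟩ := Finset.mem_image.1 hx <;>
        rw [Finset.mem_filter, Finset.mem_product] at hxa
      · exact hxa.1.1
      · exact mem_span_range_iff_exists_fun ℤ |>.2 ⟨a, eq_sub_of_add_eq' hxa.2⟩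
    · rintro ⟨x, a⟩ ha ⟨-, a'⟩ ha' rfl
      have hsum := add_left_cancel
        ((Finset.mem_filter.1 ha).2.trans (Finset.mem_filter.1 ha').2.symm)
      exact congrArg (Prod.mk x) (hw.fintypeLinearCombination_injective hsum)

lemma eq_or_eq_neg_of_mul_eq_mul {n : ℕ} {x y : Fin n → ℤ} (hx : IsPrimitiveVec x)
    (hy : IsPrimitiveVec y) (h : ∀ i j, x i * y j = y i * x j) : x = y ∨ x = -y := by
  have habs (i : Fin n) : |x i| = |y i| := by
    rw [Int.abs_eq_normalize, Int.abs_eq_normalize]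
    calc normalize (x i) = Finset.univ.gcd fun j ↦ x i * y j := by
          rw [Finset.gcd_mul_left, hy, mul_one]
      _ = Finset.univ.gcd fun j ↦ y i * x j := by simp only [h]
      _ = normalize (y i) := by rw [Finset.gcd_mul_left, hx, mul_one]
  have hne : ∃ i, y i ≠ 0 := by
    by_contra! hcon
    exact zero_ne_one ((Finset.gcd_eq_zero_iff.2 fun i _ ↦ hcon i).symm.trans hy)
  obtain ⟨i, hi⟩ := hne
  refine (abs_eq_abs.1 (habs i)).imp (fun hxy ↦ ?_) fun hxy ↦ ?_ <;> ext j <;>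
    refine mul_left_cancel₀ hi ?_
  · rw [← h i j, hxy]
  · rw [← h i j, hxy]
    simp

variable {N : ℕ}

lemma eq_or_eq_neg_of_mk_coeK_eq {x y : Fin (N + 1) → ℤ} (hx : IsPrimitiveVec x)
    (hy : IsPrimitiveVec y) {hx0 : coeK x ≠ 0} {hy0 : coeK y ≠ 0}
    (hxy : Projectivization.mk KK (coeK x) hx0 = Projectivization.mk KK (coeK y) hy0) :
    x = y ∨ x = -y := by
  obtain ⟨a, ha⟩ := (Projectivization.mk_eq_mk_iff' _ _ _ _ _).1 hxy
  refine eq_or_eq_neg_of_mul_eq_mul hx hy fun i j ↦ ?_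
  have hcoord (i) : (x i : KK) = a * y i := (congrFun ha i).symm
  have hcast : (x i : KK) * y j = y i * x j := by
    rw [hcoord i, hcoord j]
    ring
  exact_mod_cast hcast

lemma card_le_two_mul_of_forall_mk_coeK_mem {Z : Set (Pn N)} {c : ℕ} (hZ : Z.encard ≤ c)
    {F : Finset (Fin (N + 1) → ℤ)} (hprim : ∀ x ∈ F, IsPrimitiveVec x)
    (hmk : ∀ x ∈ F, ∃ h : coeK x ≠ 0, Projectivization.mk KK (coeK x) h ∈ Z) :
    F.card ≤ 2 * c := by
  classical
  obtain ⟨hfin, hcard⟩ := Set.encard_le_coe_iff_finite_ncard_le.1 hZ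
  rw [Set.ncard_eq_toFinset_card Z hfin] at hcard
  choose hne hmem using hmk
  let point (x : F) : Pn N := Projectivization.mk KK (coeK x.1) (hne x x.2)
  rw [← F.card_attach]
  refine (Finset.card_le_mul_card_image_of_maps_to (f := point) (t := hfin.toFinset) ?_ 2
    fun z _ ↦ ?_).trans (Nat.mul_le_mul_left 2 hcard)
  · exact fun x _ ↦ hfin.mem_toFinset.2 (hmem x x.2)
  · obtain hempty | ⟨y, hy⟩ := Finset.eq_empty_or_nonempty {x ∈ F.attach | point x = z}
    · simp [hempty]
    · rw [← Finset.card_map (Function.Embedding.subtype _)]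
      refine (Finset.card_le_card (t := {y.1, -y.1}) ?_).trans Finset.card_le_two
      intro v hv
      obtain ⟨x, hx, rfl⟩ := Finset.mem_map.1 hv
      rw [Finset.mem_insert, Finset.mem_singleton]
      exact eq_or_eq_neg_of_mk_coeK_eq (hprim x x.2) (hprim y y.2)
        ((Finset.mem_filter.1 hx).2.trans (Finset.mem_filter.1 hy).2.symm)

lemma coeK_eq_compLeft (n : ℕ) :
    (coeK : (Fin n → ℤ) → Fin n → KK) = (Algebra.linearMap ℤ KK).compLeft (Fin n) := rfl

lemma linearIndependent_int_of_coeK {κ : Type*} {n : ℕ} {w : κ → Fin n → ℤ}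
    (hw : LinearIndependent KK (coeK ∘ w)) : LinearIndependent ℤ w := by
  rw [coeK_eq_compLeft] at hw
  exact (hw.restrict_scalars' ℤ).of_comp

lemma coeK_sub_mem_span {κ : Type*} {n : ℕ} {w : κ → Fin n → ℤ} {x y : Fin n → ℤ}
    (h : y - x ∈ span ℤ (Set.range w)) : coeK y - coeK x ∈ span KK (Set.range (coeK ∘ w)) := by
  rw [coeK_eq_compLeft, ← map_sub, Set.range_comp]
  refine span_le_restrictScalars ℤ KK _ ?_
  rw [← map_span]
  exact mem_map_of_mem h

lemma heightVec_le_iff {n : ℕ} {x : Fin n → ℤ} {B : ℝ} (hB : 0 ≤ B) :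
    heightVec x ≤ B ↔ ∀ i, |x i| ≤ ⌊B⌋₊ := by
  rw [heightVec, ← Nat.le_floor_iff hB, Finset.sup_le_iff]
  simp only [Finset.mem_univ, true_imp_iff, ← Int.natCast_natAbs, Nat.cast_le]

lemma NV_mul_pow_le {V : Set (Pn N)} (hV : ProjClosed V) {κ : Type*} [Fintype κ]
    {w : κ → Fin (N + 1) → ℤ} {D : ℕ} (hD : ∀ i j, |w i j| ≤ D)
    (hw : LinearIndependent KK (coeK ∘ w))
    (hVw : Disjoint V (planeSet (span KK (Set.range (coeK ∘ w))))) {B : ℝ} (hB : 0 ≤ B) :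
    NV V B * (⌊B⌋₊ + 1) ^ Fintype.card κ ≤
      2 * projDeg V * (2 * (⌊B⌋₊ * (1 + Fintype.card κ * D)) + 1) ^ (N + 1) := by
  have hfin : {x : Fin (N + 1) → ℤ | IsPrimitiveVec x ∧ heightVec x ≤ B ∧
      ∃ h : coeK x ≠ 0, Projectivization.mk KK (coeK x) h ∈ V}.Finite := by
    refine (Set.finite_Icc (fun _ ↦ -(⌊B⌋₊ : ℤ)) fun _ ↦ (⌊B⌋₊ : ℤ)).subset fun x hx ↦ ?_
    have habs (i) := abs_le.1 ((heightVec_le_iff hB).1 hx.2.1 i)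
    exact ⟨fun i ↦ (habs i).1, fun i ↦ (habs i).2⟩
  rw [NV, Set.ncard_eq_toFinset_card _ hfin]
  have hcount := card_mul_pow_le_of_forall_sub_mem_span (P := hfin.toFinset) (b := ⌊B⌋₊)
    (c := 2 * projDeg V) (linearIndependent_int_of_coeK hw) hD ?_ ?_
  · rwa [Fintype.card_fin] at hcount
  · exact fun x hx ↦ (heightVec_le_iff hB).1 (hfin.mem_toFinset.1 hx).2.1
  · intro F hF y hFy
    have hpoint (x) (hx : x ∈ F) := hfin.mem_toFinset.1 (hF hx)
    refine card_le_two_mul_of_forall_mk_coeK_mem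
      (encard_inter_planeSet_sup_span_le_projDeg hV hVw (coeK y)) (fun x hx ↦ (hpoint x hx).1)
      fun x hx ↦ ?_
    obtain ⟨-, -, hx0, hxV⟩ := hpoint x hx
    refine ⟨hx0, hxV, (mk_mem_planeSet hx0).2 ?_⟩
    rw [← sub_sub_cancel (coeK y) (coeK x)]
    exact sub_mem (mem_sup_right (mem_span_singleton_self _))
      (mem_sup_left (coeK_sub_mem_span (hFy x hx)))

end Counting

section TrivialEstimate

lemma NV_le_of_projDim_le {N m : ℕ} {V : Set (Pn N)} (hV : ProjClosed V) (hdim : projDim V ≤ m)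
    {k : ℕ} (hk : k ≤ N - m) {B : ℝ} (hB : 0 ≤ B) :
    (NV V B : ℝ) ≤ 2 * projDeg V * (2 * (1 + k * (projDeg V + 1))) ^ (N + 1) *
      (B + 1) ^ (N + 1 - k) := by
  obtain ⟨w, hD, hli, hdisj⟩ := exists_integral_disjoint_planeSet_span hV hdim hk
  set b := ⌊B⌋₊
  set D := projDeg V + 1
  have hcount : (NV V B : ℝ) * (b + 1) ^ k ≤
      2 * projDeg V * (2 * (b * (1 + k * D)) + 1) ^ (N + 1) := by
    have := NV_mul_pow_le hV (D := D) hD hli hdisj hB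
    rw [Fintype.card_fin] at this
    exact_mod_cast this
  have hbox : (2 * (b * (1 + k * D)) + 1 : ℝ) ≤ 2 * (1 + k * D) * (b + 1) := by
    nlinarith [mul_nonneg (Nat.cast_nonneg (α := ℝ) k) (Nat.cast_nonneg (α := ℝ) D)]
  have hsplit : ((b : ℝ) + 1) ^ (N + 1) = (b + 1) ^ (N + 1 - k) * (b + 1) ^ k :=
    (pow_sub_mul_pow _ (by lia)).symm
  have hb : (b : ℝ) ≤ B := Nat.floor_le hB
  refine le_of_mul_le_mul_right ?_ (by positivity : (0 : ℝ) < (b + 1) ^ k)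
  calc (NV V B : ℝ) * (b + 1) ^ k
      ≤ 2 * projDeg V * (2 * (1 + k * D) * (b + 1)) ^ (N + 1) := hcount.trans (by gcongr)
    _ = 2 * projDeg V * (2 * (1 + k * D)) ^ (N + 1) * (b + 1) ^ (N + 1 - k) * (b + 1) ^ k := by
        rw [mul_pow, hsplit]
        ring
    _ ≤ 2 * projDeg V * (2 * (1 + k * (projDeg V + 1))) ^ (N + 1) * (B + 1) ^ (N + 1 - k) *
          (b + 1) ^ k := by
        push_cast [D]
        gcongr

lemma NV_le {N m : ℕ} {V : Set (Pn N)} (hV : ProjClosed V) (hdim : projDim V ≤ m) {B : ℝ}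
    (hB : 1 ≤ B) :
    (NV V B : ℝ) ≤ 2 * projDeg V * (4 * (1 + N * (projDeg V + 1))) ^ (N + 1) * B ^ (m + 1) := by
  have hk : ((N - m : ℕ) : ℝ) ≤ N := by exact_mod_cast Nat.sub_le N m
  calc (NV V B : ℝ)
      ≤ 2 * projDeg V * (2 * (1 + (N - m : ℕ) * (projDeg V + 1))) ^ (N + 1) *
          (B + 1) ^ (N + 1 - (N - m)) := NV_le_of_projDim_le hV hdim le_rfl (by linarith)
    _ ≤ 2 * projDeg V * (2 * (1 + N * (projDeg V + 1))) ^ (N + 1) *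
          (2 * B) ^ (N + 1 - (N - m)) := by
        gcongr
        linarith
    _ ≤ 2 * projDeg V * (2 * (1 + N * (projDeg V + 1))) ^ (N + 1) *
          (2 ^ (N + 1) * B ^ (m + 1)) := by
        rw [mul_pow 2 B]
        gcongr
        exacts [one_le_two, Nat.sub_le _ _, by lia]
    _ = _ := by
        rw [show (4 : ℝ) = 2 * 2 by norm_num, mul_assoc 2 2, mul_pow 2 (2 * _)]
        ring

end TrivialEstimate

/-- **Lemma 2 (trivial estimate).** A projective variety V ⊂ Pᴺ of degree d and
dimension m, defined over the algebraic closure of ℚ, has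
N_V(B) = O_{d,N}(B^{m+1}). -/
theorem statement3 (d N : ℕ) :
    ∃ C : ℝ, 0 < C ∧ ∀ (m : ℕ) (V : Set (Pn N)),
      ProjClosed V → projDeg V = d → projDim V = ((m : ENat) : WithBot ENat) →
      ∀ B : ℝ, 1 ≤ B → (NV V B : ℝ) ≤ C * B ^ (m + 1) := by
  refine ⟨2 * d * (4 * (1 + N * (d + 1))) ^ (N + 1) + 1, by positivity, ?_⟩
  rintro m V hV rfl hdim B hB
  calc (NV V B : ℝ) ≤ 2 * projDeg V * (4 * (1 + N * (projDeg V + 1))) ^ (N + 1) * B ^ (m + 1) :=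
        NV_le hV hdim.le hB
    _ ≤ _ := by gcongr; exact le_add_of_nonneg_right zero_le_one

end
end
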